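/- Ergodicity. Assume (H1)–(H4). For every L ∈ ℝ and p ∈ ℝ^N there exists a unique viscosity solution w ∈ C_b(ℝ⁺×ℝ^N) of ∂_τ w = I_s[w(τ,·)] + L − W'(w + p·y) + σ(τ,y) on ℝ⁺×ℝ^N with w(0,y)=0, and there exists a unique λ ∈ ℝ such that w(τ,y)/τ converges to λ as τ → +∞, locally uniformly in y. Writing λ = H̄(p,L), the function H̄ : ℝ^N×ℝ → ℝ is continuous and nondecreasing in L. -/

import Mathlib

/-!
The kernel being even, `I_s` is the integral of the symmetric second increments `D2 u x z` against
the Lévy measure, so no principal value is needed. The cell problem then reads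
`∂ₜ u = Aop μ u + f(t, x, u)`, with `f` bounded and Lipschitz.

*Existence.* Removing the jumps smaller than `1/(j+1)` leaves a finite measure, for which the
explicit Euler scheme is monotone for small time steps, hence satisfies a discrete comparison
principle with uniform bounds and Lipschitz estimates. Mollifying the scheme in time and space yields
bounded `C²` functions which solve the equation up to an arbitrarily small error (`Near`). Two such
functions are close to each other and to the schemes by comparison, so the schemes converge, locally
uniformly in time, to a function `sol`. It is a viscosity solution by stability (`visc_sub`).

*Uniqueness.* A viscosity subsolution lies below every smooth approximate solution up to a small
error (`sub_le_near`): the approximate solution is itself a test function, so no doubling of variables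
is needed. Since `sol` is the limit of such functions, every viscosity solution equals it.

*Slope.* Translating `x` by an integer vector `k` changes the equation only through the shift of `u`
by `p·k`, and the equation is invariant under integer shifts of `u`; by comparison, integer
translations therefore change `u` by at most `1`, and the oscillation of `u` needs to be controlled
only over bounded distances. There, large jumps started from two points can be coupled with positive
intensity, which pulls the oscillation back and bounds it uniformly in time (`scheme_osc`).
Together with the periodicity in time and in `u`, comparison makes `n ↦ u(n, 0)` additive
up to a bounded error (`sol_add`), and Fekete's argument gives the slope (`almost_additive`), with a
rate that does not depend on `p` and `L` in a bounded set. Hence the slope is a locally uniform limit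
of continuous functions of `(p, L)`. It is nondecreasing in `L` by comparison.
-/

open MeasureTheory Filter Metric Set RealInnerProductSpace

noncomputable section

/-- `ℝ^N` as a Euclidean space. -/
abbrev EN (N : ℕ) := EuclideanSpace ℝ (Fin N)

/-- The singular kernel `g(z/|z|) |z|^{-N-2s}` of the anisotropic Lévy operator. -/
noncomputable def levyKernel (N : ℕ) (s : ℝ) (g : EN N → ℝ) (z : EN N) : ℝ :=
  g (‖z‖⁻¹ • z) * ‖z‖ ^ (-(N : ℝ) - 2 * s)

/-- `I^{1,r}[φ, x]`: integral over `|z| ≤ r` of the second order increment of `φ`. -/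
noncomputable def levyI1 (N : ℕ) (s : ℝ) (g : EN N → ℝ) (φ : EN N → ℝ) (r : ℝ) (x : EN N) : ℝ :=
  ∫ z in {z : EN N | ‖z‖ ≤ r}, (φ (x + z) - φ x - fderiv ℝ φ x z) * levyKernel N s g z

/-- `I^{2,r}[u, x]`: integral over `|z| > r` of the increment of `u`. -/
noncomputable def levyI2 (N : ℕ) (s : ℝ) (g : EN N → ℝ) (u : EN N → ℝ) (r : ℝ) (x : EN N) : ℝ :=
  ∫ z in {z : EN N | r < ‖z‖}, (u (x + z) - u x) * levyKernel N s g z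

/-- The anisotropic Lévy operator `I_s` of order `2s`, defined as a principal value. -/
noncomputable def levyOp (N : ℕ) (s : ℝ) (g : EN N → ℝ) (φ : EN N → ℝ) (x : EN N) : ℝ :=
  limUnder (nhdsWithin 0 (Ioi (0:ℝ)))
    (fun ρ => ∫ y in {y : EN N | ρ < ‖y‖}, (φ (x + y) - φ x) * levyKernel N s g y)

/-- (H1): `g` is continuous, positive on the sphere and even. -/
def H1 (N : ℕ) (g : EN N → ℝ) : Prop :=
  Continuous g ∧ (∀ z : EN N, ‖z‖ = 1 → 0 < g z) ∧ (∀ z : EN N, g (-z) = g z)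

/-- (H2): `W ∈ C^{1,1}(ℝ)` and `W(v+1) = W(v)`. -/
def H2 (W : ℝ → ℝ) : Prop :=
  ContDiff ℝ 1 W ∧ (∃ K : NNReal, LipschitzWith K (deriv W)) ∧ ∀ v, W (v + 1) = W v

/-- (H3): `σ ∈ C^{0,1}(ℝ⁺ × ℝ^N)`, 1-periodic in `t` and ℤ^N-periodic in `x`. -/
def H3 (N : ℕ) (σ : ℝ → EN N → ℝ) : Prop :=
  (∃ K : NNReal, LipschitzWith K (fun q : ℝ × EN N => σ q.1 q.2)) ∧
  (∀ t x, σ (t + 1) x = σ t x) ∧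
  (∀ (k : Fin N → ℤ) (t : ℝ) (x : EN N), σ t (x + (WithLp.equiv 2 (Fin N → ℝ)).symm (fun j => (k j : ℝ))) = σ t x)

/-- (H4): `u₀ ∈ W^{2,∞}(ℝ^N)`. -/
def H4 (N : ℕ) (u₀ : EN N → ℝ) : Prop :=
  ContDiff ℝ 2 u₀ ∧
  ∃ M, ∀ x, |u₀ x| ≤ M ∧ ‖fderiv ℝ u₀ x‖ ≤ M ∧ ‖fderiv ℝ (fderiv ℝ u₀) x‖ ≤ M

/-- Boundedness on `(0,T) × ℝ^N` for every `T > 0`. -/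
def LocBddPos (N : ℕ) (u : ℝ → EN N → ℝ) : Prop :=
  ∀ T > 0, ∃ M, ∀ t ∈ Ioc (0:ℝ) T, ∀ x, |u t x| ≤ M

/-- Viscosity subsolution of `∂_t u = F(t, x, u, ∇_x u, I_s[u(t,·)])` with initial datum `u₀`. -/
def IsSubsol (N : ℕ) (s : ℝ) (g : EN N → ℝ)
    (F : ℝ → EN N → ℝ → (EN N →L[ℝ] ℝ) → ℝ → ℝ)
    (u₀ : EN N → ℝ) (u : ℝ → EN N → ℝ) : Prop :=
  UpperSemicontinuousOn (fun q : ℝ × EN N => u q.1 q.2) (Ici 0 ×ˢ univ) ∧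
  LocBddPos N u ∧
  (∀ x, u 0 x ≤ u₀ x) ∧
  ∀ (t₀ : ℝ) (x₀ : EN N), 0 < t₀ →
    ∀ (φ : ℝ → EN N → ℝ), ContDiff ℝ 2 (fun q : ℝ × EN N => φ q.1 q.2) →
    ∀ τ r : ℝ, 0 < τ → τ < t₀ → 0 < r →
    (∀ t x, t ∈ Ioo (t₀ - τ) (t₀ + τ) → x ∈ ball x₀ r →
      u t x - φ t x ≤ u t₀ x₀ - φ t₀ x₀) →
    deriv (fun t => φ t x₀) t₀ -
      F t₀ x₀ (u t₀ x₀) (fderiv ℝ (fun x => φ t₀ x) x₀)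
        (levyI1 N s g (fun x => φ t₀ x) r x₀ + levyI2 N s g (fun x => u t₀ x) r x₀) ≤ 0

/-- Viscosity supersolution of `∂_t u = F(t, x, u, ∇_x u, I_s[u(t,·)])` with initial datum `u₀`. -/
def IsSupersol (N : ℕ) (s : ℝ) (g : EN N → ℝ)
    (F : ℝ → EN N → ℝ → (EN N →L[ℝ] ℝ) → ℝ → ℝ)
    (u₀ : EN N → ℝ) (u : ℝ → EN N → ℝ) : Prop :=
  LowerSemicontinuousOn (fun q : ℝ × EN N => u q.1 q.2) (Ici 0 ×ˢ univ) ∧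
  LocBddPos N u ∧
  (∀ x, u₀ x ≤ u 0 x) ∧
  ∀ (t₀ : ℝ) (x₀ : EN N), 0 < t₀ →
    ∀ (φ : ℝ → EN N → ℝ), ContDiff ℝ 2 (fun q : ℝ × EN N => φ q.1 q.2) →
    ∀ τ r : ℝ, 0 < τ → τ < t₀ → 0 < r →
    (∀ t x, t ∈ Ioo (t₀ - τ) (t₀ + τ) → x ∈ ball x₀ r →
      u t₀ x₀ - φ t₀ x₀ ≤ u t x - φ t x) →
    0 ≤ deriv (fun t => φ t x₀) t₀ -
      F t₀ x₀ (u t₀ x₀) (fderiv ℝ (fun x => φ t₀ x) x₀)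
        (levyI1 N s g (fun x => φ t₀ x) r x₀ + levyI2 N s g (fun x => u t₀ x) r x₀)

/-- Viscosity solution in `C_b(ℝ⁺ × ℝ^N)`. -/
def IsSol (N : ℕ) (s : ℝ) (g : EN N → ℝ)
    (F : ℝ → EN N → ℝ → (EN N →L[ℝ] ℝ) → ℝ → ℝ)
    (u₀ : EN N → ℝ) (u : ℝ → EN N → ℝ) : Prop :=
  ContinuousOn (fun q : ℝ × EN N => u q.1 q.2) (Ici 0 ×ˢ univ) ∧
  IsSubsol N s g F u₀ u ∧ IsSupersol N s g F u₀ u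

/-- The right-hand side of the cell problem
`∂_τ w = I_s[w(τ,·)] + L − W'(w + p·y) + σ(τ,y)`. -/
def cellF (N : ℕ) (W : ℝ → ℝ) (σ : ℝ → EN N → ℝ) (p : EN N) (L : ℝ) :
    ℝ → EN N → ℝ → (EN N →L[ℝ] ℝ) → ℝ → ℝ :=
  fun τ y v _ I => I + L - deriv W (v + ⟪p, y⟫) + σ τ y

/-- `w(τ,y)/τ → lam` as `τ → +∞`, locally uniformly in `y`. -/
def SlopeLim (N : ℕ) (w : ℝ → EN N → ℝ) (lam : ℝ) : Prop :=
  ∀ ε > 0, ∀ R > 0, ∃ T : ℝ, ∀ τ, T ≤ τ → ∀ y : EN N, ‖y‖ ≤ R → |w τ y / τ - lam| ≤ ε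

end

/-! ### The Lévy measure -/

/-- The Lévy measure `μ(dz) = g(z/|z|) |z|^{-N-2s} dz`. -/
noncomputable def levyMeas (N : ℕ) (s : ℝ) (g : EN N → ℝ) : Measure (EN N) :=
  volume.withDensity (fun z => ENNReal.ofReal (levyKernel N s g z))

/-- The properties of the Lévy measure used in the construction of solutions and in the
long-time analysis. The last one is a quantitative form of the fact that large jumps started
from two points at bounded distance can be coupled with positive intensity. -/
structure LevyM {N : ℕ} (μ : Measure (EN N)) : Prop where
  int : Integrable (fun z : EN N => min 1 (‖z‖ ^ 2)) μ
  even : MeasurePreserving (fun z : EN N => -z) μ μ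
  minor : ∀ R : ℝ, ∃ κ > 0, ∀ Y y : EN N, ‖Y - y‖ ≤ R → ∀ (F G : EN N → ℝ) (c : ℝ),
    Continuous F → Continuous G → (∀ x, 0 ≤ F x) → (∀ x, 0 ≤ G x) → (∀ x, F x + G x = c) →
    κ * c ≤ (∫ z in {z : EN N | 1 < ‖z‖}, F (Y + z) ∂μ) +
      (∫ z in {z : EN N | 1 < ‖z‖}, G (y + z) ∂μ)

section kernel
variable {N : ℕ} {s : ℝ} {g : EN N → ℝ}

lemma levyKernel_measurable (hg : H1 N g) : Measurable (levyKernel N s g) := by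
  unfold levyKernel
  have h1 : Measurable g := hg.1.measurable
  have h2 : Measurable fun z : EN N => ‖z‖⁻¹ • z := by fun_prop
  exact (h1.comp h2).mul (measurable_norm.pow_const _)

lemma norm_unit {z : EN N} (hz : z ≠ 0) : ‖‖z‖⁻¹ • z‖ = 1 := by
  rw [norm_smul, norm_inv, norm_norm, inv_mul_cancel₀ (norm_ne_zero_iff.2 hz)]

lemma levyExp_neg (hN : 1 ≤ N) (hs : s ∈ Set.Ioo (0:ℝ) 1) : -(N : ℝ) - 2 * s < 0 := by
  have : (1:ℝ) ≤ N := by exact_mod_cast hN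
  linarith [hs.1]

lemma levyKernel_nonneg (hN : 1 ≤ N) (hs : s ∈ Set.Ioo (0:ℝ) 1) (hg : H1 N g) (z : EN N) :
    0 ≤ levyKernel N s g z := by
  unfold levyKernel
  by_cases hz : z = 0
  · rw [hz, norm_zero, Real.zero_rpow (levyExp_neg hN hs).ne, mul_zero]
  · exact mul_nonneg (hg.2.1 _ (norm_unit hz)).le (by positivity)

lemma levyKernel_even (hg : H1 N g) (z : EN N) :
    levyKernel N s g (-z) = levyKernel N s g z := by
  simp [levyKernel, hg.2.2]

lemma g_bounds (hN : 1 ≤ N) (hg : H1 N g) :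
    ∃ a > 0, ∃ b, ∀ z : EN N, z ≠ 0 → a ≤ g (‖z‖⁻¹ • z) ∧ g (‖z‖⁻¹ • z) ≤ b := by
  have hc : IsCompact (sphere (0 : EN N) 1) := isCompact_sphere _ _
  have : Nonempty (Fin N) := ⟨⟨0, hN⟩⟩
  have hne : (sphere (0 : EN N) 1).Nonempty :=
    NormedSpace.sphere_nonempty.2 zero_le_one
  obtain ⟨x, hx, hxm⟩ := hc.exists_isMinOn hne hg.1.continuousOn
  obtain ⟨y, hy, hym⟩ := hc.exists_isMaxOn hne hg.1.continuousOn
  refine ⟨g x, hg.2.1 x (by simpa using hx), g y, fun z hz => ⟨?_, ?_⟩⟩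
  · exact hxm (by simpa using norm_unit hz)
  · exact hym (by simpa using norm_unit hz)

lemma integral_levyMeas (hN : 1 ≤ N) (hs : s ∈ Set.Ioo (0:ℝ) 1) (hg : H1 N g)
    {A : Set (EN N)} (hA : MeasurableSet A) (F : EN N → ℝ) :
    ∫ z in A, F z ∂(levyMeas N s g) = ∫ z in A, F z * levyKernel N s g z := by
  unfold levyMeas
  rw [restrict_withDensity hA, integral_withDensity_eq_integral_toReal_smul
    (levyKernel_measurable hg).ennreal_ofReal (by simp)]
  refine integral_congr_ae (Eventually.of_forall fun z => ?_)
  simp only [smul_eq_mul]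
  rw [ENNReal.toReal_ofReal (levyKernel_nonneg hN hs hg z), mul_comm]

lemma radial_integrable (hN : 1 ≤ N) (hs : s ∈ Set.Ioo (0:ℝ) 1) :
    Integrable (fun z : EN N => min 1 (‖z‖ ^ 2) * ‖z‖ ^ (-(N : ℝ) - 2 * s)) := by
  have : Nonempty (Fin N) := ⟨⟨0, hN⟩⟩
  have key := (integrable_fun_norm_addHaar (volume : Measure (EN N))
    (f := fun r : ℝ => min 1 (r ^ 2) * r ^ (-(N : ℝ) - 2 * s))).2
  refine key ?_
  simp only [finrank_euclideanSpace, Fintype.card_fin, smul_eq_mul]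
  have hpow : ∀ r : ℝ, 0 < r → r ^ (N - 1) * r ^ (-(N : ℝ) - 2 * s) = r ^ (-1 - 2 * s) := by
    intro r hr
    rw [← Real.rpow_natCast, ← Real.rpow_add hr, Nat.cast_sub hN]
    congr 1; push_cast; ring
  have h1 : IntegrableOn (fun r : ℝ => r ^ (N - 1) * (min 1 (r ^ 2) * r ^ (-(N : ℝ) - 2 * s)))
      (Ioc 0 1) := by
    have h : IntegrableOn (fun r : ℝ => r ^ (1 - 2 * s)) (Ioc 0 1) := by
      have := (intervalIntegral.intervalIntegrable_rpow' (a := 0) (b := 1)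
        (r := 1 - 2 * s) (by linarith [hs.2]))
      rwa [intervalIntegrable_iff_integrableOn_Ioc_of_le zero_le_one] at this
    refine h.congr_fun (fun r hr => ?_) measurableSet_Ioc
    have hm : min 1 (r ^ 2) = r ^ 2 := min_eq_right (by nlinarith [hr.1, hr.2])
    simp only
    rw [hm, mul_left_comm, hpow r hr.1, ← Real.rpow_natCast, ← Real.rpow_add hr.1]
    congr 1; push_cast; ring
  have h2 : IntegrableOn (fun r : ℝ => r ^ (N - 1) * (min 1 (r ^ 2) * r ^ (-(N : ℝ) - 2 * s)))
      (Ioi 1) := by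
    have h := integrableOn_Ioi_rpow_of_lt (a := -1 - 2 * s) (c := 1) (by linarith [hs.1]) one_pos
    refine h.congr_fun (fun r (hr : 1 < r) => ?_) measurableSet_Ioi
    have hm : min 1 (r ^ 2) = 1 := min_eq_left (by nlinarith)
    simp only
    rw [hm, one_mul, hpow r (by linarith)]
  have := h1.union h2
  rwa [Ioc_union_Ioi_eq_Ioi zero_le_one] at this

lemma levyMeas_int (hN : 1 ≤ N) (hs : s ∈ Set.Ioo (0:ℝ) 1) (hg : H1 N g) :
    Integrable (fun z : EN N => min 1 (‖z‖ ^ 2)) (levyMeas N s g) := by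
  unfold levyMeas
  rw [integrable_withDensity_iff_integrable_smul' (levyKernel_measurable hg).ennreal_ofReal
    (by simp)]
  obtain ⟨a, ha, b, hb⟩ := g_bounds hN hg
  refine ((radial_integrable hN hs).const_mul (|b| )).mono' ?_ ?_
  · exact ((levyKernel_measurable hg).ennreal_ofReal.ennreal_toReal.smul
      (by fun_prop)).aestronglyMeasurable
  · refine Eventually.of_forall fun z => ?_
    rw [ENNReal.toReal_ofReal (levyKernel_nonneg hN hs hg z), smul_eq_mul, Real.norm_eq_abs,
      abs_of_nonneg (mul_nonneg (levyKernel_nonneg hN hs hg z) (by positivity))]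
    unfold levyKernel
    by_cases hz : z = 0
    · rw [hz, norm_zero, Real.zero_rpow (levyExp_neg hN hs).ne]; simp
    · have h1 : g (‖z‖⁻¹ • z) ≤ |b| := (hb z hz).2.trans (le_abs_self b)
      have h2 : 0 ≤ min 1 (‖z‖ ^ 2) * ‖z‖ ^ (-(N : ℝ) - 2 * s) := by positivity
      nlinarith [mul_le_mul_of_nonneg_right h1 h2]

lemma levyMeas_even (hg : H1 N g) :
    MeasurePreserving (fun z : EN N => -z) (levyMeas N s g) (levyMeas N s g) := by
  refine ⟨measurable_neg, ?_⟩
  ext A hA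
  rw [Measure.map_apply measurable_neg hA]
  unfold levyMeas
  rw [withDensity_apply _ (measurable_neg hA), withDensity_apply _ hA]
  have := (Measure.measurePreserving_neg (volume : Measure (EN N))).setLIntegral_comp_preimage hA
    (levyKernel_measurable (s := s) hg).ennreal_ofReal
  rw [← this]
  refine setLIntegral_congr_fun (measurable_neg hA) (fun z _ => ?_)
  simp only [levyKernel_even hg]

lemma levyMeas_minor (hN : 1 ≤ N) (hs : s ∈ Set.Ioo (0:ℝ) 1) (hg : H1 N g) (R : ℝ) :
    ∃ κ > 0, ∀ Y y : EN N, ‖Y - y‖ ≤ R → ∀ (F G : EN N → ℝ) (c : ℝ),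
    Continuous F → Continuous G → (∀ x, 0 ≤ F x) → (∀ x, 0 ≤ G x) → (∀ x, F x + G x = c) →
    κ * c ≤ (∫ z in {z : EN N | 1 < ‖z‖}, F (Y + z) ∂(levyMeas N s g)) +
      (∫ z in {z : EN N | 1 < ‖z‖}, G (y + z) ∂(levyMeas N s g)) := by
  have : Nonempty (Fin N) := ⟨⟨0, hN⟩⟩
  obtain ⟨a, ha, b, hb⟩ := g_bounds hN hg
  set R' := max R 0 with hR'
  have hR0 : 0 ≤ R' := le_max_right _ _
  set P : ℝ := a * (2 * R' + 4) ^ (-(N : ℝ) - 2 * s) with hP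
  have hPpos : 0 < P := by positivity
  -- a lower bound for the kernel on an annulus
  have hK : ∀ z : EN N, 1 < ‖z‖ → ‖z‖ ≤ 2 * R' + 4 → P ≤ levyKernel N s g z := by
    intro z hz1 hz2
    unfold levyKernel
    have hz : z ≠ 0 := by rintro rfl; simp at hz1; linarith
    have : (2 * R' + 4) ^ (-(N : ℝ) - 2 * s) ≤ ‖z‖ ^ (-(N : ℝ) - 2 * s) :=
      Real.rpow_le_rpow_of_nonpos (by linarith) hz2 (levyExp_neg hN hs).le
    exact mul_le_mul (hb z hz).1 this (by positivity) (ha.le.trans (hb z hz).1)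
  obtain ⟨e, he⟩ : ∃ e : EN N, ‖e‖ = R' + 3 := by
    obtain ⟨e, he⟩ := (NormedSpace.sphere_nonempty (E := EN N) (x := 0) (r := R' + 3)).2
      (by linarith)
    exact ⟨e, by simpa using he⟩
  set v := (volume : Measure (EN N)).real (ball 0 1) with hv
  have hvpos : 0 < v := by
    rw [hv, Measure.real, ENNReal.toReal_pos_iff]
    exact ⟨measure_ball_pos _ _ one_pos, measure_ball_lt_top⟩
  have main : ∀ (Y b : EN N) (F : EN N → ℝ) (C : ℝ), Continuous F → (∀ x, 0 ≤ F x) →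
      (∀ x, F x ≤ C) → (∀ x ∈ ball b 1, 1 < ‖x - Y‖ ∧ ‖x - Y‖ ≤ 2 * R' + 4) →
      P * ∫ x in ball b 1, F x ≤ ∫ z in {z : EN N | 1 < ‖z‖}, F (Y + z) ∂(levyMeas N s g) := by
    intro Y b F C hF hF0 hFC hb
    have hmeas : MeasurableSet {z : EN N | 1 < ‖z‖} :=
      measurableSet_lt measurable_const measurable_norm
    have hintg : IntegrableOn (fun z => F (Y + z) * levyKernel N s g z) {z : EN N | 1 < ‖z‖} := by
      have h1 : Integrable (fun z => min 1 (‖z‖ ^ 2) * levyKernel N s g z) := by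
        have := levyMeas_int hN hs hg
        unfold levyMeas at this
        rw [integrable_withDensity_iff_integrable_smul'
          (levyKernel_measurable hg).ennreal_ofReal (by simp)] at this
        refine this.congr (Eventually.of_forall fun z => ?_)
        simp only [smul_eq_mul]
        rw [ENNReal.toReal_ofReal (levyKernel_nonneg hN hs hg z), mul_comm]
      refine ((h1.const_mul C).integrableOn).mono' ?_ ?_
      · exact (((hF.comp (continuous_const_add Y)).measurable.mul
          (levyKernel_measurable hg))).aestronglyMeasurable
      · refine (ae_restrict_iff' hmeas).2 (Eventually.of_forall fun z (hz : 1 < ‖z‖) => ?_)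
        have hm : min 1 (‖z‖ ^ 2) = 1 := min_eq_left (by nlinarith)
        rw [hm, one_mul, Real.norm_eq_abs,
          abs_of_nonneg (mul_nonneg (hF0 _) (levyKernel_nonneg hN hs hg z))]
        exact mul_le_mul_of_nonneg_right (hFC _) (levyKernel_nonneg hN hs hg z)
    rw [integral_levyMeas hN hs hg hmeas]
    have hsub : ball (b - Y) 1 ⊆ {z : EN N | 1 < ‖z‖} := by
      intro z hz
      have := (hb (Y + z) (by
        rw [mem_ball, dist_eq_norm] at hz ⊢
        rwa [show Y + z - b = z - (b - Y) by abel])).1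
      simpa using this
    calc P * ∫ x in ball b 1, F x = ∫ x in ball b 1, P * F x := by rw [integral_const_mul]
      _ = ∫ z in ball (b - Y) 1, P * F (Y + z) := by
        have := (measurePreserving_add_left (volume : Measure (EN N)) Y).setIntegral_preimage_emb
          (MeasurableEquiv.addLeft Y).measurableEmbedding (fun x => P * F x) (ball b 1)
        rw [← this]
        congr 2
        ext z
        simp only [mem_preimage, mem_ball, dist_eq_norm]
        rw [show Y + z - b = z - (b - Y) by abel]
      _ ≤ ∫ z in ball (b - Y) 1, F (Y + z) * levyKernel N s g z := by
        refine setIntegral_mono_on ?_ (hintg.mono_set hsub) measurableSet_ball (fun z hz => ?_)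
        · have : Continuous fun z => P * F (Y + z) := by fun_prop
          exact (this.locallyIntegrable.integrableOn_isCompact
            (isCompact_closedBall (b - Y) 1)).mono_set ball_subset_closedBall
        · have := hb (Y + z) (by
            rw [mem_ball, dist_eq_norm] at hz ⊢
            rwa [show Y + z - b = z - (b - Y) by abel])
          rw [mul_comm]
          refine mul_le_mul_of_nonneg_left (hK z ?_ ?_) (hF0 _)
          · simpa using this.1
          · simpa using this.2
      _ ≤ _ := by
        refine setIntegral_mono_set hintg ?_ hsub.eventuallyLE
        exact Eventually.of_forall fun z =>
          mul_nonneg (hF0 _) (levyKernel_nonneg hN hs hg z)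
  refine ⟨P * v, by positivity, fun Y y hYy F G c hF hG hF0 hG0 hFG => ?_⟩
  have hYy' : ‖Y - y‖ ≤ R' := hYy.trans (le_max_left _ _)
  have hball : ∀ x ∈ ball (Y + e) 1, R' + 2 < ‖x - Y‖ ∧ ‖x - Y‖ < R' + 4 := by
    intro x hx
    rw [mem_ball, dist_eq_norm] at hx
    have e1 : x - Y = e + (x - (Y + e)) := by abel
    have e2 : e = (x - Y) - (x - (Y + e)) := by abel
    constructor
    · have := norm_sub_le (x - Y) (x - (Y + e)); rw [← e2] at this; linarith
    · have := norm_add_le e (x - (Y + e)); rw [← e1] at this; linarith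
  have hball2 : ∀ x ∈ ball (Y + e) 1, 1 < ‖x - y‖ ∧ ‖x - y‖ ≤ 2 * R' + 4 := by
    intro x hx
    obtain ⟨h1, h2⟩ := hball x hx
    have e1 : x - y = (x - Y) + (Y - y) := by abel
    have e2 : x - Y = (x - y) - (Y - y) := by abel
    constructor
    · have := norm_sub_le (x - y) (Y - y); rw [← e2] at this; linarith
    · have := norm_add_le (x - Y) (Y - y); rw [← e1] at this; linarith
  have A1 := main Y (Y + e) F c hF hF0 (fun x => by linarith [hFG x, hG0 x])
    (fun x hx => ⟨by linarith [(hball x hx).1], by linarith [(hball x hx).2]⟩)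
  have A2 := main y (Y + e) G c hG hG0 (fun x => by linarith [hFG x, hF0 x]) hball2
  have hI : ∀ H : EN N → ℝ, Continuous H → IntegrableOn H (ball (Y + e) 1) := fun H hH =>
    (hH.locallyIntegrable.integrableOn_isCompact
      (isCompact_closedBall (Y + e) 1)).mono_set ball_subset_closedBall
  have A3 : (∫ x in ball (Y + e) 1, F x) + (∫ x in ball (Y + e) 1, G x) = v * c := by
    rw [← integral_add (hI F hF) (hI G hG)]
    simp only [hFG]
    rw [setIntegral_const, smul_eq_mul, Measure.real, Measure.addHaar_ball_center, hv, Measure.real]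
  calc P * v * c = P * (∫ x in ball (Y + e) 1, F x) + P * (∫ x in ball (Y + e) 1, G x) := by
        rw [← mul_add, A3, mul_assoc]
    _ ≤ _ := add_le_add A1 A2

theorem levyMeas_LevyM (hN : 1 ≤ N) (hs : s ∈ Set.Ioo (0:ℝ) 1) (hg : H1 N g) :
    LevyM (levyMeas N s g) :=
  ⟨levyMeas_int hN hs hg, levyMeas_even hg, levyMeas_minor hN hs hg⟩

end kernel

/-! ### A monotone explicit scheme -/

/-- Half of the symmetric second difference of `u` at `x` in direction `z`. -/
noncomputable def D2 {N : ℕ} (u : EN N → ℝ) (x z : EN N) : ℝ := (u (x + z) + u (x - z)) / 2 - u x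

/-- The symmetrized jump operator `u ↦ ∫ D2 u x z μ(dz)`. For an even Lévy measure and a bounded
`C²` function it is the operator `I_s`. -/
noncomputable def Aop {N : ℕ} (μ : Measure (EN N)) (u : EN N → ℝ) (x : EN N) : ℝ :=
  ∫ z, D2 u x z ∂μ

/-- Bounded continuous functions. -/
structure BC {N : ℕ} (u : EN N → ℝ) : Prop where
  cont : Continuous u
  bdd : ∃ B, ∀ x, |u x| ≤ B

/-- Reaction terms `f(t,x,v)` bounded by `Cf`, `K`-Lipschitz in `v` and `Kx`-Lipschitz in
`(t,x)`. -/
structure FC {N : ℕ} (f : ℝ → EN N → ℝ → ℝ) (Cf K Kx : ℝ) : Prop where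
  bdd : ∀ t x v, |f t x v| ≤ Cf
  lipv : ∀ t x v v', |f t x v - f t x v'| ≤ K * |v - v'|
  lipx : ∀ t₁ t₂ x₁ x₂ v, |f t₁ x₁ v - f t₂ x₂ v| ≤ Kx * (|t₁ - t₂| + ‖x₁ - x₂‖)

/-- Explicit Euler scheme with time step `h` for `∂ₜ u = ∫ D2 u x z μ(dz) + f(t,x,u)`, started
from `0`. -/
noncomputable def scheme {N : ℕ} (μ : Measure (EN N)) (h : ℝ) (f : ℝ → EN N → ℝ → ℝ) :
    ℕ → EN N → ℝ
  | 0 => fun _ => 0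
  | n + 1 => fun x => scheme μ h f n x + h * (Aop μ (scheme μ h f n) x +
      f (n * h) x (scheme μ h f n x))

section
variable {N : ℕ} {μ : Measure (EN N)}

namespace FC
variable {f : ℝ → EN N → ℝ → ℝ} {Cf K Kx : ℝ}

lemma Cf_nonneg (hf : FC f Cf K Kx) : 0 ≤ Cf := (abs_nonneg _).trans (hf.bdd 0 0 0)
lemma K_nonneg (hf : FC f Cf K Kx) : 0 ≤ K := by
  have := (abs_nonneg _).trans (hf.lipv 0 0 1 0); simpa using this
lemma Kx_nonneg (hf : FC f Cf K Kx) : 0 ≤ Kx := by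
  have := (abs_nonneg _).trans (hf.lipx 1 0 0 0 0); simpa using this
lemma cont (hf : FC f Cf K Kx) : Continuous fun q : ℝ × EN N × ℝ => f q.1 q.2.1 q.2.2 := by
  rw [continuous_iff_continuousAt]
  rintro ⟨t, x, v⟩
  rw [ContinuousAt, tendsto_iff_norm_sub_tendsto_zero]
  have hlim : Tendsto (fun q : ℝ × EN N × ℝ => Kx * (|q.1 - t| + ‖q.2.1 - x‖) + K * |q.2.2 - v|)
      (nhds (t, x, v)) (nhds 0) := by
    have : Continuous fun q : ℝ × EN N × ℝ =>
      Kx * (|q.1 - t| + ‖q.2.1 - x‖) + K * |q.2.2 - v| := by fun_prop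
    simpa using this.tendsto (t, x, v)
  refine squeeze_zero (fun _ => norm_nonneg _) (fun q => ?_) hlim
  rw [Real.norm_eq_abs]
  have h1 := hf.lipx q.1 t q.2.1 x q.2.2
  have h2 := hf.lipv t x q.2.2 v
  exact (abs_sub_le _ (f t x q.2.2) _).trans (add_le_add h1 h2)

end FC

lemma BC.integrable_avg [IsFiniteMeasure μ] {u : EN N → ℝ} (hu : BC u) (x : EN N) :
    Integrable (fun z => (u (x + z) + u (x - z)) / 2) μ := by
  obtain ⟨B, hB⟩ := hu.bdd
  have hc := hu.cont
  refine Integrable.of_bound (by fun_prop) B (Eventually.of_forall fun z => ?_)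
  rw [Real.norm_eq_abs, abs_le]
  have h1 := abs_le.1 (hB (x + z)); have h2 := abs_le.1 (hB (x - z))
  constructor <;> linarith [h1.1, h1.2, h2.1, h2.2]

lemma Aop_eq [IsFiniteMeasure μ] {u : EN N → ℝ} (hu : BC u) (x : EN N) :
    Aop μ u x = (∫ z, (u (x + z) + u (x - z)) / 2 ∂μ) - μ.real univ * u x := by
  unfold Aop D2
  rw [integral_sub (hu.integrable_avg x) (integrable_const _), integral_const, smul_eq_mul]

lemma Aop_add_const (u : EN N → ℝ) (c : ℝ) (x : EN N) :
    Aop μ (fun y => u y + c) x = Aop μ u x := by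
  unfold Aop D2
  congr 1; ext z; ring

lemma Aop_translate (u : EN N → ℝ) (k x : EN N) :
    Aop μ (fun y => u (y + k)) x = Aop μ u (x + k) := by
  unfold Aop D2
  congr 1; ext z
  simp only [add_right_comm, sub_add_eq_add_sub]

lemma step_compare [IsFiniteMeasure μ] {h K c e a b : ℝ} (hh : 0 ≤ h) (hK : 0 ≤ K)
    (hcfl : h * (μ.real univ + K) ≤ 1) {u v : EN N → ℝ} (hu : BC u) (hv : BC v) (hc : 0 ≤ c)
    (huv : ∀ x, u x ≤ v x + c) (x : EN N) (hab : a ≤ b + K * |u x - v x| + e) :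
    u x + h * (Aop μ u x + a) ≤ v x + h * (Aop μ v x + b) + (1 + h * K) * c + h * e := by
  rw [Aop_eq hu, Aop_eq hv]
  have h1 : (∫ z, (u (x + z) + u (x - z)) / 2 ∂μ) ≤
      (∫ z, (v (x + z) + v (x - z)) / 2 ∂μ) + μ.real univ * c := by
    have : (∫ z, (v (x + z) + v (x - z)) / 2 ∂μ) + μ.real univ * c
        = ∫ z, ((v (x + z) + v (x - z)) / 2 + c) ∂μ := by
      rw [integral_add (hv.integrable_avg x) (integrable_const _), integral_const, smul_eq_mul]
    rw [this]
    refine integral_mono (hu.integrable_avg x) ((hv.integrable_avg x).add (integrable_const _)) ?_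
    intro z
    have := huv (x + z); have := huv (x - z)
    simp only; linarith
  set Λ := μ.real univ
  have hΛ : 0 ≤ Λ := measureReal_nonneg
  set d := u x - v x with hd
  have hdc : d ≤ c := by have := huv x; linarith
  have h2 : (1 - h * Λ) * d + h * K * |d| ≤ (1 - h * Λ + h * K) * c := by
    have h3 : 0 ≤ h * K := by positivity
    rcases le_total 0 d with h0 | h0
    · rw [abs_of_nonneg h0]; nlinarith
    · rw [abs_of_nonpos h0]; nlinarith
  have h4 := mul_le_mul_of_nonneg_left h1 hh
  have h5 := mul_le_mul_of_nonneg_left hab hh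
  have h6 : u x = v x + d := by rw [hd]; ring
  rw [h6]
  nlinarith

/-- Discrete comparison principle: two sequences satisfying the scheme with inequalities in
opposite directions and consistency error `e` stay ordered up to a Grönwall factor. -/
lemma gronwall [IsFiniteMeasure μ] {h K c e : ℝ} (hh : 0 ≤ h) (hK : 0 ≤ K)
    (hcfl : h * (μ.real univ + K) ≤ 1) (hc : 0 ≤ c) (he : 0 ≤ e) (M : ℕ)
    (u v a b : ℕ → EN N → ℝ) (hu : ∀ n, BC (u n)) (hv : ∀ n, BC (v n))
    (hu1 : ∀ n < M, ∀ x, u (n + 1) x ≤ u n x + h * (Aop μ (u n) x + a n x))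
    (hv1 : ∀ n < M, ∀ x, v n x + h * (Aop μ (v n) x + b n x) ≤ v (n + 1) x)
    (hab : ∀ n < M, ∀ x, a n x ≤ b n x + K * |u n x - v n x| + e)
    (h0 : ∀ x, u 0 x ≤ v 0 x + c) :
    ∀ n ≤ M, ∀ x, u n x ≤ v n x + (1 + h * K) ^ n * (c + n * h * e) := by
  intro n
  induction n with
  | zero => intro _ x; simpa using h0 x
  | succ n ih =>
    intro hn x
    have hn' : n < M := hn
    have hpow : (1:ℝ) ≤ (1 + h * K) ^ (n + 1) := one_le_pow₀ (by nlinarith [mul_nonneg hh hK])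
    have h1 := step_compare hh hK hcfl (hu n) (hv n) (by positivity) (ih hn'.le) x (hab n hn' x)
    have h2 := hu1 n hn' x
    have h3 := hv1 n hn' x
    have h4 : h * e ≤ (1 + h * K) ^ (n + 1) * (h * e) := le_mul_of_one_le_left (by positivity) hpow
    push_cast
    rw [pow_succ] at h4 ⊢
    nlinarith

lemma pow_le_exp {h K T : ℝ} (hh : 0 ≤ h) (hK : 0 ≤ K) {n : ℕ} (hn : n * h ≤ T) :
    (1 + h * K) ^ n ≤ Real.exp (K * T) := by
  have h1 : 1 + h * K ≤ Real.exp (h * K) := by linarith [Real.add_one_le_exp (h * K)]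
  calc (1 + h * K) ^ n ≤ Real.exp (h * K) ^ n := pow_le_pow_left₀ (by positivity) h1 n
    _ = Real.exp (n * (h * K)) := (Real.exp_nat_mul _ _).symm
    _ ≤ _ := Real.exp_le_exp.2 (by nlinarith)

/-- Joint continuity of the scheme in the space variable and in a parameter of the reaction
term. -/
lemma scheme_param [IsFiniteMeasure μ] {P : Type*} [TopologicalSpace P] [FirstCountableTopology P]
    (h : ℝ) (hh : 0 ≤ h) (f : P → ℝ → EN N → ℝ → ℝ) (C : P → ℝ) (hC : Continuous C)
    (hfC : ∀ p t x v, |f p t x v| ≤ C p)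
    (hf : ∀ t, Continuous fun q : P × EN N × ℝ => f q.1 t q.2.1 q.2.2) (n : ℕ) :
    Continuous (fun q : P × EN N => scheme μ h (f q.1) n q.2) ∧
      ∃ c : ℝ, ∀ p x, |scheme μ h (f p) n x| ≤ c * C p := by
  induction n with
  | zero => exact ⟨by simpa [scheme] using continuous_const, 0, by simp [scheme]⟩
  | succ n ih =>
    obtain ⟨hcont, c, hc⟩ := ih
    have hD : ∀ p x z, |D2 (scheme μ h (f p) n) x z| ≤ 2 * (c * C p) := by
      intro p x z
      have h1 := abs_le.1 (hc p (x + z)); have h2 := abs_le.1 (hc p (x - z))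
      have h3 := abs_le.1 (hc p x)
      unfold D2
      rw [abs_le]; constructor <;> linarith [h1.1, h1.2, h2.1, h2.2, h3.1, h3.2]
    have hA : Continuous (fun q : P × EN N => Aop μ (scheme μ h (f q.1) n) q.2) := by
      unfold Aop
      rw [continuous_iff_continuousAt]
      rintro ⟨p0, x0⟩
      refine continuousAt_of_dominated (bound := fun _ => 2 * (c * C p0) + 1) ?_ ?_
        (integrable_const _) ?_
      · refine Eventually.of_forall fun q => ?_
        have : Continuous fun z => D2 (scheme μ h (f q.1) n) q.2 z := by
          unfold D2
          have e1 : Continuous fun z : EN N => scheme μ h (f q.1) n (q.2 + z) :=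
            hcont.comp (by fun_prop : Continuous fun z : EN N => (q.1, q.2 + z))
          have e2 : Continuous fun z : EN N => scheme μ h (f q.1) n (q.2 - z) :=
            hcont.comp (by fun_prop : Continuous fun z : EN N => (q.1, q.2 - z))
          exact ((e1.add e2).div_const 2).sub continuous_const
        exact this.aestronglyMeasurable
      · have hcc : Continuous fun q : P × EN N => 2 * (c * C q.1) := by fun_prop
        have := (hcc.tendsto (p0, x0)).eventually (gt_mem_nhds (lt_add_one (2 * (c * C p0))))
        filter_upwards [this] with q hq
        refine Eventually.of_forall fun z => ?_
        rw [Real.norm_eq_abs]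
        exact (hD q.1 q.2 z).trans hq.le
      · refine Eventually.of_forall fun z => ?_
        have : Continuous fun q : P × EN N => D2 (scheme μ h (f q.1) n) q.2 z := by
          unfold D2
          have e1 : Continuous fun q : P × EN N => scheme μ h (f q.1) n (q.2 + z) :=
            hcont.comp (by fun_prop : Continuous fun q : P × EN N => (q.1, q.2 + z))
          have e2 : Continuous fun q : P × EN N => scheme μ h (f q.1) n (q.2 - z) :=
            hcont.comp (by fun_prop : Continuous fun q : P × EN N => (q.1, q.2 - z))
          exact ((e1.add e2).div_const 2).sub hcont
        exact this.continuousAt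
    refine ⟨?_, c + h * (2 * c * μ.real univ + 1), fun p x => ?_⟩
    · have e3 : Continuous fun q : P × EN N => f q.1 (n * h) q.2 (scheme μ h (f q.1) n q.2) :=
        (hf (n * h)).comp (continuous_fst.prodMk (continuous_snd.prodMk hcont))
      simp only [scheme]
      exact hcont.add (continuous_const.mul (hA.add e3))
    · simp only [scheme]
      have h1 : |Aop μ (scheme μ h (f p) n) x| ≤ 2 * (c * C p) * μ.real univ := by
        have := norm_integral_le_of_norm_le_const (μ := μ) (f := D2 (scheme μ h (f p) n) x)
          (Eventually.of_forall fun z => (hD p x z))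
        simpa [Aop] using this
      have h2 := hfC p (n * h) x (scheme μ h (f p) n x)
      calc _ ≤ |scheme μ h (f p) n x| + h * (|Aop μ (scheme μ h (f p) n) x| +
            |f p (n * h) x (scheme μ h (f p) n x)|) := by
              refine (abs_add_le _ _).trans (add_le_add le_rfl ?_)
              rw [abs_mul, abs_of_nonneg hh]
              exact mul_le_mul_of_nonneg_left (abs_add_le _ _) hh
        _ ≤ c * C p + h * (2 * (c * C p) * μ.real univ + C p) := by gcongr; exact hc p x
        _ = _ := by ring

variable {f : ℝ → EN N → ℝ → ℝ} {Cf K Kx : ℝ}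

lemma scheme_BC [IsFiniteMeasure μ] (hf : FC f Cf K Kx) {h : ℝ} (hh : 0 ≤ h) (n : ℕ) :
    BC (scheme μ h f n) := by
  have hfc := hf.cont
  obtain ⟨h1, c, h2⟩ := scheme_param (μ := μ) (P := Unit) h hh (fun _ => f) (fun _ => Cf)
    continuous_const (fun _ => hf.bdd)
    (fun t => hfc.comp (by fun_prop : Continuous fun q : Unit × EN N × ℝ => (t, q.2.1, q.2.2))) n
  exact ⟨h1.comp (by fun_prop : Continuous fun x : EN N => ((), x)), c * Cf, h2 ()⟩

lemma scheme_bound [IsFiniteMeasure μ] (hf : FC f Cf K Kx) {h : ℝ} (hh : 0 ≤ h)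
    (hcfl : h * (μ.real univ + K) ≤ 1) (n : ℕ) (x : EN N) :
    |scheme μ h f n x| ≤ n * h * Cf := by
  have hconst : ∀ c : ℝ, BC (fun _ : EN N => c) := fun c => ⟨continuous_const, |c|, fun _ => le_rfl⟩
  have hA : ∀ (c : ℝ) (x : EN N), Aop μ (fun _ => c) x = 0 := by intro c x; simp [Aop, D2]
  have hK := hf.K_nonneg
  have up := gronwall hh hK hcfl le_rfl le_rfl n (scheme μ h f) (fun n _ => n * h * Cf)
    (fun n x => f (n * h) x (scheme μ h f n x)) (fun _ _ => Cf) (scheme_BC hf hh)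
    (fun _ => hconst _) (fun _ _ _ => le_rfl)
    (fun n _ x => by rw [hA]; push_cast; linarith)
    (fun n _ x => by
      have h1 := (abs_le.1 (hf.bdd (n * h) x (scheme μ h f n x))).2
      have h2 := mul_nonneg hK (abs_nonneg (scheme μ h f n x - n * h * Cf))
      linarith) (by simp [scheme]) n le_rfl x
  have lo := gronwall hh hK hcfl le_rfl le_rfl n (fun n _ => -(n * h * Cf)) (scheme μ h f)
    (fun _ _ => -Cf) (fun n x => f (n * h) x (scheme μ h f n x))
    (fun _ => hconst _) (scheme_BC hf hh)
    (fun n _ x => by rw [hA]; push_cast; linarith) (fun _ _ _ => le_rfl)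
    (fun n _ x => by
      have h1 := (abs_le.1 (hf.bdd (n * h) x (scheme μ h f n x))).1
      have h2 := mul_nonneg hK (abs_nonneg (-(n * h * Cf) - scheme μ h f n x))
      linarith) (by simp [scheme]) n le_rfl x
  simp only [add_zero, mul_zero] at up lo
  exact abs_le.2 ⟨lo, up⟩

lemma scheme_lip_x [IsFiniteMeasure μ] (hf : FC f Cf K Kx) {h T : ℝ} (hh : 0 ≤ h)
    (hcfl : h * (μ.real univ + K) ≤ 1) (n : ℕ) (hn : n * h ≤ T) (x y : EN N) :
    |scheme μ h f n x - scheme μ h f n y| ≤ Real.exp (K * T) * (T * Kx) * ‖x - y‖ := by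
  have hK := hf.K_nonneg
  have hKx := hf.Kx_nonneg
  have key : ∀ x y : EN N, scheme μ h f n x - scheme μ h f n y ≤
      Real.exp (K * T) * (T * Kx) * ‖x - y‖ := by
    intro x y
    set k := x - y with hk
    have := gronwall hh hK hcfl le_rfl (e := Kx * ‖k‖) (by positivity) n
      (fun n x => scheme μ h f n (x + k)) (scheme μ h f)
      (fun n x => f (n * h) (x + k) (scheme μ h f n (x + k)))
      (fun n x => f (n * h) x (scheme μ h f n x))
      (fun n => ⟨(scheme_BC hf hh n).cont.comp (continuous_add_const k),
        (scheme_BC hf hh n).bdd.imp fun B hB x => hB _⟩) (scheme_BC hf hh)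
      (fun n _ x => by rw [Aop_translate]; simp only [scheme]; exact le_rfl) (fun _ _ _ => le_rfl)
      (fun n _ x => by
        have h1 := (abs_le.1 (hf.lipx (n * h) (n * h) (x + k) x (scheme μ h f n (x + k)))).2
        have h2 := (abs_le.1 (hf.lipv (n * h) x (scheme μ h f n (x + k)) (scheme μ h f n x))).2
        simp only [sub_self, abs_zero, zero_add, add_sub_cancel_left] at h1
        linarith) (by simp [scheme]) n le_rfl y
    rw [hk, add_sub_cancel, ← hk] at this
    have h1 := pow_le_exp hh hK hn
    have h2 : (1 + h * K) ^ n * (n * h * (Kx * ‖k‖)) ≤ Real.exp (K * T) * (T * (Kx * ‖k‖)) := by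
      gcongr
    calc _ ≤ (1 + h * K) ^ n * (n * h * (Kx * ‖k‖)) := by linarith
      _ ≤ _ := h2.trans_eq (by ring)
  exact abs_le.2 ⟨by have := key y x; rw [norm_sub_rev] at this; linarith, key x y⟩

lemma scheme_lip_t [IsFiniteMeasure μ] (hf : FC f Cf K Kx) {h T : ℝ} (hh : 0 ≤ h)
    (hcfl : h * (μ.real univ + K) ≤ 1) (n : ℕ) (hn : n * h ≤ T) (x : EN N) :
    |scheme μ h f (n + 1) x - scheme μ h f n x| ≤ Real.exp (K * T) * (Cf + T * Kx) * h := by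
  have hK := hf.K_nonneg
  have hKx := hf.Kx_nonneg
  have hCf := hf.Cf_nonneg
  have h1 : ∀ x, |scheme μ h f 1 x| ≤ h * Cf := fun x => by
    simpa using scheme_bound hf hh hcfl 1 x
  have hpow := pow_le_exp hh hK hn
  have hfin : (1 + h * K) ^ n * (h * Cf + n * h * (Kx * h)) ≤
      Real.exp (K * T) * (Cf + T * Kx) * h := by
    calc _ ≤ Real.exp (K * T) * (h * Cf + T * (Kx * h)) := by gcongr
      _ = _ := by ring
  have hft : ∀ n : ℕ, ∀ x v, |f ((n + 1 : ℕ) * h) x v - f (n * h) x v| ≤ Kx * h := fun n x v => by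
    have h1 := hf.lipx ((n + 1 : ℕ) * h) (n * h) x x v
    rw [show ((n + 1 : ℕ) : ℝ) * h - n * h = h by push_cast; ring, sub_self, norm_zero, add_zero,
      abs_of_nonneg hh] at h1
    exact h1
  have up := gronwall hh hK hcfl (c := h * Cf) (by positivity) (e := Kx * h) (by positivity) n
    (fun n => scheme μ h f (n + 1)) (scheme μ h f)
    (fun n x => f ((n + 1 : ℕ) * h) x (scheme μ h f (n + 1) x))
    (fun n x => f (n * h) x (scheme μ h f n x))
    (fun n => scheme_BC hf hh _) (scheme_BC hf hh) (fun _ _ _ => le_rfl) (fun _ _ _ => le_rfl)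
    (fun n _ x => by
      have h1 := (abs_le.1 (hft n x (scheme μ h f (n + 1) x))).2
      have h2 := (abs_le.1 (hf.lipv (n * h) x (scheme μ h f (n + 1) x) (scheme μ h f n x))).2
      linarith) (fun x => by
        have := (abs_le.1 (h1 x)).2
        simpa [scheme] using this) n le_rfl x
  have lo := gronwall hh hK hcfl (c := h * Cf) (by positivity) (e := Kx * h) (by positivity) n
    (scheme μ h f) (fun n => scheme μ h f (n + 1))
    (fun n x => f (n * h) x (scheme μ h f n x))
    (fun n x => f ((n + 1 : ℕ) * h) x (scheme μ h f (n + 1) x))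
    (scheme_BC hf hh) (fun n => scheme_BC hf hh _) (fun _ _ _ => le_rfl) (fun _ _ _ => le_rfl)
    (fun n _ x => by
      have h1 := (abs_le.1 (hft n x (scheme μ h f n x))).1
      have h2 := (abs_le.1 (hf.lipv ((n + 1 : ℕ) * h) x (scheme μ h f (n + 1) x)
        (scheme μ h f n x))).1
      rw [abs_sub_comm (scheme μ h f n x)]
      linarith) (fun x => by
        have := (abs_le.1 (h1 x)).1
        simp only [scheme, zero_add] at this ⊢; linarith) n le_rfl x
  exact abs_le.2 ⟨by linarith, by linarith⟩

end

/-! ### Mollification in time and space -/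

section moll
variable {N : ℕ}

lemma taylor_of_compactSupport {E : Type*} [NormedAddCommGroup E] [NormedSpace ℝ E]
    {ψ : E → ℝ} (h1 : ContDiff ℝ 2 ψ) (h2 : HasCompactSupport ψ) :
    ∃ C : ℝ, 0 ≤ C ∧ ∀ a z, |ψ (a + z) - ψ a - fderiv ℝ ψ a z| ≤ C * ‖z‖ ^ 2 := by
  have h3 : ContDiff ℝ 1 (fderiv ℝ ψ) := h1.fderiv_right (by norm_num)
  obtain ⟨C, hC⟩ := h3.lipschitzWith_of_hasCompactSupport (h2.fderiv (𝕜 := ℝ)) (by norm_num)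
  refine ⟨C, C.2, fun a z => ?_⟩
  have hd : Differentiable ℝ ψ := h1.differentiable (by norm_num)
  have := (convex_closedBall a ‖z‖).norm_image_sub_le_of_norm_hasFDerivWithin_le'
    (f := ψ) (f' := fderiv ℝ ψ) (φ := fderiv ℝ ψ a) (C := C * ‖z‖) (x := a) (y := a + z)
    (fun x _ => (hd x).hasFDerivAt.hasFDerivWithinAt)
    (fun x hx => by
      refine (hC.norm_sub_le x a).trans ?_
      gcongr
      rwa [mem_closedBall, dist_eq_norm] at hx)
    (by simp) (by simp)
  simp only [add_sub_cancel_left, Real.norm_eq_abs] at this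
  refine this.trans_eq (by ring)

/-- A smooth mollifier at scale `δ`, given as a probability measure concentrated on times
in `[-3δ, -δ]`, so that averages `∫ ω (q - y) dν` only look forward in time. -/
lemma moll_exists (N : ℕ) {δ : ℝ} (hδ : 0 < δ) :
    ∃ ν : Measure (ℝ × EN N), IsProbabilityMeasure ν ∧
      (∀ᵐ y ∂ν, y.1 ∈ Icc (-(3 * δ)) (-δ) ∧ ‖y.2‖ ≤ δ) ∧ ∃ B : ℝ, 0 ≤ B ∧
      ∀ (ω : ℝ × EN N → ℝ) (M : ℝ), Measurable ω → (∀ q, |ω q| ≤ M) →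
        ContDiff ℝ 2 (fun q => ∫ y, ω (q - y) ∂ν) ∧
        ∀ q z, ‖z‖ ≤ 1 → |(∫ y, ω (q + z - y) ∂ν) - (∫ y, ω (q - y) ∂ν) -
          fderiv ℝ (fun q => ∫ y, ω (q - y) ∂ν) q z| ≤ B * M * ‖z‖ ^ 2 := by
  have hH : (volume : Measure (ℝ × EN N)).IsAddHaarMeasure :=
    Measure.prod.instIsAddHaarMeasure volume volume
  let b : ContDiffBump ((-(2 * δ), 0) : ℝ × EN N) := ⟨δ / 2, δ, by positivity, by linarith⟩
  set ψ : ℝ × EN N → ℝ := b.normed volume with hψ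
  have hψ2 : ContDiff ℝ 2 ψ := b.contDiff_normed
  have hψc : HasCompactSupport ψ := b.hasCompactSupport_normed
  have hψ0 : ∀ y, 0 ≤ ψ y := b.nonneg_normed
  have hψm : Measurable fun y => ENNReal.ofReal (ψ y) :=
    ENNReal.measurable_ofReal.comp hψ2.continuous.measurable
  have hψi : Integrable ψ := hψ2.continuous.integrable_of_hasCompactSupport hψc
  set ν : Measure (ℝ × EN N) := volume.withDensity fun y => ENNReal.ofReal (ψ y) with hν
  have hconv : ∀ F : ℝ × EN N → ℝ, ∫ y, F y ∂ν = ∫ y, ψ y * F y := by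
    intro F
    rw [hν, integral_withDensity_eq_integral_toReal_smul hψm (by simp)]
    simp [ENNReal.toReal_ofReal (hψ0 _)]
  obtain ⟨C, hC0, hC⟩ := taylor_of_compactSupport hψ2 hψc
  refine ⟨ν, ⟨?_⟩, ?_, C * volume.real (closedBall ((-(2 * δ), 0) : ℝ × EN N) (δ + 1)),
    by positivity, ?_⟩
  · rw [hν, withDensity_apply _ MeasurableSet.univ, setLIntegral_univ,
      ← ofReal_integral_eq_lintegral_ofReal hψi (Eventually.of_forall hψ0)]
    rw [b.integral_normed]; simp
  · rw [hν, ae_withDensity_iff hψm]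
    refine Eventually.of_forall fun y hy => ?_
    have : y ∈ Function.support ψ := by
      intro h0; simp [h0] at hy
    rw [hψ, b.support_normed_eq, mem_ball, dist_eq_norm, Prod.norm_def, max_lt_iff] at this
    obtain ⟨h1, h2⟩ := this
    simp only [Prod.fst_sub, Prod.snd_sub, sub_zero, Real.norm_eq_abs, abs_lt] at h1 h2
    have h1' : -δ < y.1 - -(2*δ) ∧ y.1 - -(2*δ) < δ := h1
    exact ⟨⟨by linarith, by linarith⟩, h2.le⟩
  · intro ω M hω hM
    have hM0 : 0 ≤ M := (abs_nonneg _).trans (hM 0)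
    have hloc : LocallyIntegrable ω volume := by
      refine (locallyIntegrable_const M).mono hω.aestronglyMeasurable (Eventually.of_forall fun q => ?_)
      rw [Real.norm_eq_abs, Real.norm_eq_abs, abs_of_nonneg hM0]; exact hM q
    have hV : (fun q => ∫ y, ω (q - y) ∂ν) =
        MeasureTheory.convolution ω ψ (ContinuousLinearMap.mul ℝ ℝ) volume := by
      ext q
      rw [hconv, ← convolution_flip]
      simp only [convolution_def, ContinuousLinearMap.flip_apply, ContinuousLinearMap.mul_apply']
      congr 1; ext y; ring
    have hV' : ∀ q, ∫ y, ω (q - y) ∂ν = ∫ y, ω y * ψ (q - y) := fun q => by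
      have := congrFun hV q
      simpa [convolution_def] using this
    refine ⟨by rw [hV]; exact hψc.contDiff_convolution_right _ hloc hψ2, fun q z hz => ?_⟩
    have hex : ∀ q, Integrable (fun y => ω y * ψ (q - y)) := fun q =>
      hψc.convolutionExists_right (ContinuousLinearMap.mul ℝ ℝ) hloc hψ2.continuous q
    have hder := hψc.hasFDerivAt_convolution_right (ContinuousLinearMap.mul ℝ ℝ) hloc
      (hψ2.of_le (by norm_num)) q
    have hexd : Integrable (fun y => ((ContinuousLinearMap.mul ℝ ℝ).precompR (ℝ × EN N)) (ω y)
        (fderiv ℝ ψ (q - y))) :=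
      (hψc.fderiv (𝕜 := ℝ)).convolutionExists_right _ hloc
        (hψ2.continuous_fderiv (by norm_num)) q
    rw [hV, hder.fderiv, hV', hV', convolution_def, ContinuousLinearMap.integral_apply hexd]
    have hexd' : Integrable (fun y => ω y * (fderiv ℝ ψ (q - y)) z) := by
      have := hexd.apply_continuousLinearMap z
      simpa using this
    change |(∫ y, ω y * ψ (q + z - y)) - (∫ y, ω y * ψ (q - y)) -
      (∫ y, ω y * (fderiv ℝ ψ (q - y)) z)| ≤ _
    rw [← integral_sub (hex _) (hex _), ← integral_sub (by exact (hex _).sub (hex _)) hexd']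
    set S : Set (ℝ × EN N) := closedBall (q - (-(2 * δ), 0)) (δ + 1) with hS
    have hout : ∀ y ∉ S, ω y * ψ (q + z - y) - ω y * ψ (q - y) - ω y * (fderiv ℝ ψ (q - y)) z = 0 := by
      intro y hy
      rw [hS, mem_closedBall, not_le, dist_eq_norm] at hy
      have ht : tsupport ψ = closedBall ((-(2 * δ), 0) : ℝ × EN N) δ := b.tsupport_normed_eq
      have h1 : q - y ∉ tsupport ψ := by
        rw [ht, mem_closedBall, not_le, dist_eq_norm, ← norm_neg]
        have : -(q - y - (-(2 * δ), 0)) = y - (q - (-(2 * δ), 0)) := by abel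
        rw [this]; linarith
      have h2 : q + z - y ∉ tsupport ψ := by
        rw [ht, mem_closedBall, not_le, dist_eq_norm, ← norm_neg]
        have : -(q + z - y - (-(2 * δ), 0)) = y - (q - (-(2 * δ), 0)) - z := by abel
        rw [this]; linarith [norm_sub_norm_le (y - (q - (-(2 * δ), 0))) z]
      have h3 : fderiv ℝ ψ (q - y) = 0 := by
        by_contra h
        exact h1 (support_fderiv_subset ℝ h)
      rw [image_eq_zero_of_notMem_tsupport h1, image_eq_zero_of_notMem_tsupport h2, h3]
      simp
    rw [← setIntegral_eq_integral_of_forall_compl_eq_zero hout]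
    have hvol : volume.real S = volume.real (closedBall ((-(2 * δ), 0) : ℝ × EN N) (δ + 1)) := by
      rw [hS, Measure.real, Measure.real, Measure.addHaar_closedBall_center,
        Measure.addHaar_closedBall_center _ ((-(2 * δ), 0) : ℝ × EN N)]
    have := norm_setIntegral_le_of_norm_le_const (μ := volume) (s := S) (C := M * (C * ‖z‖ ^ 2))
      (f := fun y => ω y * ψ (q + z - y) - ω y * ψ (q - y) - ω y * (fderiv ℝ ψ (q - y)) z)
      measure_closedBall_lt_top (fun y _ => by
        rw [← mul_sub, ← mul_sub, Real.norm_eq_abs, abs_mul]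
        refine mul_le_mul (hM y) ?_ (abs_nonneg _) hM0
        have := hC (q - y) z
        rwa [show q - y + z = q + z - y by abel] at this)
    rw [Real.norm_eq_abs, hvol] at this
    refine this.trans_eq (by ring)

end moll

/-! ### Smooth approximate solutions -/

section
variable {N : ℕ}

/-- The Lévy measure without its jumps of size at most `1/(j+1)`. -/
noncomputable def trunc (μ : Measure (EN N)) (j : ℕ) : Measure (EN N) :=
  μ.restrict {z | 1 / ((j : ℝ) + 1) < ‖z‖}

/-- Number of time steps per unit time at level `j`; large enough for monotonicity. -/
noncomputable def nst (μ : Measure (EN N)) (K : ℝ) (j : ℕ) : ℕ :=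
  ⌈(trunc μ j).real univ + K⌉₊ + j + 1

/-- The time step at level `j`. -/
noncomputable def hst (μ : Measure (EN N)) (K : ℝ) (j : ℕ) : ℝ := 1 / nst μ K j

/-- The level-`j` approximation, piecewise constant in time. -/
noncomputable def om (μ : Measure (EN N)) (K : ℝ) (f : ℝ → EN N → ℝ → ℝ) (j : ℕ) (t : ℝ)
    (x : EN N) : ℝ :=
  scheme (trunc μ j) (hst μ K j) f ⌊t / hst μ K j⌋₊ x

/-- `V` is a bounded `C²` function solving `∂ₜV = ∫ D2 V dμ + f(t,x,V)`, `V(0,·) = 0` on `[0,T]`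
up to an error `η`. The constant `M` bounds `V`, and `B` its second order increments. -/
structure Near (μ : Measure (EN N)) (f : ℝ → EN N → ℝ → ℝ) (T η M B : ℝ) (V : ℝ → EN N → ℝ) :
    Prop where
  cd : ContDiff ℝ 2 (fun q : ℝ × EN N => V q.1 q.2)
  bdd : ∀ t x, |V t x| ≤ M
  tt : ∀ t x h, 0 ≤ h → h ≤ 1 →
    |V (t + h) x - V t x - h * deriv (fun t => V t x) t| ≤ B * h ^ 2
  tx : ∀ t x z, |D2 (V t) x z| ≤ B * min 1 (‖z‖ ^ 2)
  eq : ∀ t x, 0 ≤ t → t ≤ T →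
    |deriv (fun t => V t x) t - Aop μ (V t) x - f t x (V t x)| ≤ η
  initial : ∀ x, |V 0 x| ≤ η

variable {μ : Measure (EN N)} {K : ℝ}

lemma trunc_finite (hμ : LevyM μ) (j : ℕ) : IsFiniteMeasure (trunc μ j) := by
  have hj : (0:ℝ) < 1 / ((j : ℝ) + 1) := by positivity
  refine ⟨?_⟩
  rw [trunc, Measure.restrict_apply_univ]
  set ε := 1 / ((j : ℝ) + 1)
  have h1 := hμ.int.measure_norm_ge_lt_top (ε := min 1 (ε ^ 2)) (by positivity)
  refine (measure_mono fun z hz => ?_).trans_lt h1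
  simp only [mem_ofPred_eq] at hz ⊢
  rw [Real.norm_of_nonneg (by positivity)]
  gcongr

lemma nst_pos (j : ℕ) : (0:ℝ) < nst μ K j := by unfold nst; positivity
lemma hst_pos (j : ℕ) : 0 < hst μ K j := by
  unfold hst; have := nst_pos (μ := μ) (K := K) j; positivity
lemma hst_le (j : ℕ) : hst μ K j ≤ 1 / ((j : ℝ) + 1) := by
  unfold hst nst
  apply one_div_le_one_div_of_le (by positivity)
  push_cast
  have : (0:ℝ) ≤ ⌈(trunc μ j).real univ + K⌉₊ := by positivity
  linarith
lemma hst_le_one (j : ℕ) : hst μ K j ≤ 1 := by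
  refine (hst_le j).trans ?_
  rw [div_le_one (by positivity)]; linarith [(Nat.cast_nonneg j : (0:ℝ) ≤ j)]
lemma hst_tendsto : Tendsto (hst μ K) atTop (nhds 0) :=
  squeeze_zero (fun j => (hst_pos j).le) hst_le tendsto_one_div_add_atTop_nhds_zero_nat
lemma hst_cfl (j : ℕ) : hst μ K j * ((trunc μ j).real univ + K) ≤ 1 := by
  have h1 := nst_pos (μ := μ) (K := K) j
  unfold hst
  rw [div_mul_eq_mul_div, one_mul, div_le_one h1]
  unfold nst; push_cast
  have := Nat.le_ceil ((trunc μ j).real univ + K)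
  linarith [(Nat.cast_nonneg j : (0:ℝ) ≤ j)]

lemma tail_tendsto (hμ : LevyM μ) :
    Tendsto (fun j : ℕ => ∫ z in {z | 1 / ((j : ℝ) + 1) < ‖z‖}ᶜ, min 1 (‖z‖ ^ 2) ∂μ) atTop
      (nhds 0) := by
  have hm : ∀ j : ℕ, MeasurableSet {z : EN N | 1 / ((j : ℝ) + 1) < ‖z‖}ᶜ := fun j =>
    (measurableSet_lt measurable_const measurable_norm).compl
  have := tendsto_setIntegral_of_antitone (μ := μ) (f := fun z : EN N => min 1 (‖z‖ ^ 2)) hm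
    (fun i j hij z hz => by
      simp only [mem_compl_iff, mem_ofPred_eq, not_lt] at hz ⊢
      refine hz.trans ?_
      apply one_div_le_one_div_of_le (by positivity)
      have : (i : ℝ) ≤ j := by exact_mod_cast hij
      linarith) ⟨0, hμ.int.integrableOn⟩
  convert this
  symm
  refine setIntegral_eq_zero_of_forall_eq_zero fun z hz => ?_
  have hz0 : ‖z‖ ≤ 0 := by
    refine ge_of_tendsto' tendsto_one_div_add_atTop_nhds_zero_nat fun j => ?_
    have := mem_iInter.1 hz j
    simpa using this
  rw [le_antisymm hz0 (norm_nonneg z)]; simp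

variable {f : ℝ → EN N → ℝ → ℝ} {Cf Kx : ℝ}

lemma scheme_lip {μ : Measure (EN N)} [IsFiniteMeasure μ] (hf : FC f Cf K Kx) {h T : ℝ}
    (hh : 0 ≤ h)
    (hcfl : h * (μ.real univ + K) ≤ 1) (a b : ℕ) (ha : a * h ≤ T) (hb : b * h ≤ T) (x y : EN N) :
    |scheme μ h f a x - scheme μ h f b y| ≤
      Real.exp (K * T) * (Cf + T * Kx) * (|(a : ℝ) * h - b * h| + ‖x - y‖) := by
  have hCf := hf.Cf_nonneg
  have hKx := hf.Kx_nonneg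
  have mono : ∀ (a k : ℕ), (a + k : ℕ) * h ≤ T → |scheme μ h f (a + k) x - scheme μ h f a x| ≤
      Real.exp (K * T) * (Cf + T * Kx) * (k * h) := by
    intro a k
    induction k with
    | zero => intro _; simp
    | succ k ih =>
      intro hk
      have hk' : ((a + k : ℕ) : ℝ) * h ≤ T := by push_cast at hk ⊢; nlinarith
      have h1 := ih hk'
      have h2 := scheme_lip_t hf hh hcfl (a + k) hk' x
      rw [← add_assoc]
      push_cast
      refine (abs_sub_le _ (scheme μ h f (a + k) x) _).trans ?_
      linarith
  have ht : |scheme μ h f a x - scheme μ h f b x| ≤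
      Real.exp (K * T) * (Cf + T * Kx) * |(a : ℝ) * h - b * h| := by
    rcases le_total a b with hab | hab
    · obtain ⟨k, rfl⟩ := Nat.exists_eq_add_of_le hab
      have := mono a k hb
      rw [abs_sub_comm]
      refine this.trans_eq ?_
      push_cast
      rw [show (a : ℝ) * h - (a + k) * h = -(k * h) by ring, abs_neg, abs_of_nonneg (by positivity)]
    · obtain ⟨k, rfl⟩ := Nat.exists_eq_add_of_le hab
      refine (mono b k ha).trans_eq ?_
      push_cast
      rw [show ((b : ℝ) + k) * h - b * h = (k * h) by ring, abs_of_nonneg (by positivity)]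
  have hx := scheme_lip_x hf hh hcfl b hb x y
  have hx' : Real.exp (K * T) * (T * Kx) * ‖x - y‖ ≤
      Real.exp (K * T) * (Cf + T * Kx) * ‖x - y‖ := by gcongr; linarith
  refine (abs_sub_le _ (scheme μ h f b x) _).trans ?_
  linarith

lemma floor_near {h t : ℝ} (hh : 0 < h) (ht : 0 ≤ t) :
    (⌊t / h⌋₊ : ℝ) * h ≤ t ∧ t - h ≤ (⌊t / h⌋₊ : ℝ) * h := by
  have h1 := Nat.floor_le (div_nonneg ht hh.le)
  have h2 := Nat.lt_floor_add_one (t / h)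
  have h3 : t / h * h = t := div_mul_cancel₀ _ hh.ne'
  constructor
  · calc _ ≤ t / h * h := by gcongr
      _ = t := h3
  · nlinarith

/-- The jump operator commutes with averaging over translations in time and space. -/
lemma Aop_avg {μ : Measure (EN N)} [IsFiniteMeasure μ] {ν : Measure (ℝ × EN N)}
    [IsFiniteMeasure ν] {ω : ℝ × EN N → ℝ} (hω : Measurable ω) {M : ℝ} (hM : ∀ q, |ω q| ≤ M)
    (t : ℝ) (x : EN N) :
    Aop μ (fun x => ∫ y, ω ((t, x) - y) ∂ν) x =
      ∫ y, Aop μ (fun x => ω (t - y.1, x)) (x - y.2) ∂ν := by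
  have hi : ∀ q, Integrable (fun y => ω (q - y)) ν := fun q =>
    Integrable.of_bound (hω.comp (by fun_prop)).aestronglyMeasurable M
      (Eventually.of_forall fun y => hM _)
  unfold Aop
  rw [integral_integral_swap]
  · congr 1; ext z
    unfold D2
    rw [integral_sub (by
        refine Integrable.div_const (Integrable.add ?_ ?_) 2
        · refine (hi (t, x + z)).congr (Eventually.of_forall fun y => ?_)
          simp only [sub_add_eq_add_sub]
          rw [show ((t, x + z) : ℝ × EN N) - y = (t - y.1, x + z - y.2) from rfl]
        · refine (hi (t, x - z)).congr (Eventually.of_forall fun y => ?_)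
          simp only
          rw [show ((t, x - z) : ℝ × EN N) - y = (t - y.1, x - z - y.2) from rfl, sub_right_comm])
        (by exact hi (t, x)), integral_div, integral_add]
    · congr 3
      · refine integral_congr_ae (Eventually.of_forall fun y => ?_)
        simp only
        rw [show ((t, x + z) : ℝ × EN N) - y = (t - y.1, x + z - y.2) from rfl, sub_add_eq_add_sub]
      · refine integral_congr_ae (Eventually.of_forall fun y => ?_)
        simp only
        rw [show ((t, x - z) : ℝ × EN N) - y = (t - y.1, x - z - y.2) from rfl, sub_right_comm]
    · refine (hi (t, x + z)).congr (Eventually.of_forall fun y => ?_)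
      simp only
      rw [show ((t, x + z) : ℝ × EN N) - y = (t - y.1, x + z - y.2) from rfl, sub_add_eq_add_sub]
    · refine (hi (t, x - z)).congr (Eventually.of_forall fun y => ?_)
      simp only
      rw [show ((t, x - z) : ℝ × EN N) - y = (t - y.1, x - z - y.2) from rfl, sub_right_comm]
  · refine Integrable.of_bound ?_ (2 * M) (Eventually.of_forall fun q => ?_)
    · refine Measurable.aestronglyMeasurable ?_
      unfold Function.uncurry D2
      refine Measurable.sub (Measurable.div_const (Measurable.add ?_ ?_) 2) ?_
      · exact hω.comp (by fun_prop)
      · exact hω.comp (by fun_prop)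
      · exact hω.comp (by fun_prop)
    · unfold Function.uncurry D2
      simp only [Real.norm_eq_abs]
      have h1 := abs_le.1 (hM (t - q.1.1, x - q.1.2 + q.2))
      have h2 := abs_le.1 (hM (t - q.1.1, x - q.1.2 - q.2))
      have h3 := abs_le.1 (hM (t - q.1.1, x - q.1.2))
      rw [abs_le]
      constructor <;> linarith [h1.1, h1.2, h2.1, h2.2, h3.1, h3.2]

end

section
variable {N : ℕ} {μ : Measure (EN N)} {K : ℝ} {f : ℝ → EN N → ℝ → ℝ} {Cf Kx : ℝ}

lemma abs_integral_sub_le {α : Type*} [MeasurableSpace α] {ν : Measure α} [IsProbabilityMeasure ν]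
    {F : α → ℝ} (hF : Integrable F ν) {c e : ℝ} (h : ∀ᵐ y ∂ν, |F y - c| ≤ e) :
    |(∫ y, F y ∂ν) - c| ≤ e := by
  have h1 : (∫ y, F y ∂ν) - c = ∫ y, (F y - c) ∂ν := by
    rw [integral_sub hF (integrable_const _), integral_const]; simp
  rw [h1]
  have := norm_integral_le_of_norm_le_const (μ := ν) (f := fun y => F y - c) h
  simpa using this

set_option maxHeartbeats 1000000 in
/-- The mollified scheme is an approximate solution, with an explicit consistency error. -/
lemma near_core (hμ : LevyM μ) {T δ B η : ℝ} (hT : 0 ≤ T) (hδ : 0 < δ) (hδ1 : δ ≤ 1)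
    (hB : 0 ≤ B) {ν : Measure (ℝ × EN N)} [IsProbabilityMeasure ν]
    (hν : ∀ᵐ y ∂ν, y.1 ∈ Icc (-(3 * δ)) (-δ) ∧ ‖y.2‖ ≤ δ)
    (hmoll : ∀ (ω : ℝ × EN N → ℝ) (M : ℝ), Measurable ω → (∀ q, |ω q| ≤ M) →
        ContDiff ℝ 2 (fun q => ∫ y, ω (q - y) ∂ν) ∧
        ∀ q z, ‖z‖ ≤ 1 → |(∫ y, ω (q + z - y) ∂ν) - (∫ y, ω (q - y) ∂ν) -
          fderiv ℝ (fun q => ∫ y, ω (q - y) ∂ν) q z| ≤ B * M * ‖z‖ ^ 2)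
    (j : ℕ) (Ct : ℝ) (hCt : Ct = Real.exp (K * (T + 6)) * (Cf + (T + 6) * Kx))
    (he : Ct * (4 * δ + hst μ K j) ≤ η)
    (hE : Kx * (4 * δ + hst μ K j) + 2 * K * (Ct * (4 * δ + hst μ K j)) +
      (B + 2) * (Cf * (T + 6)) * hst μ K j + (B + 2) * (Cf * (T + 6)) *
      (∫ z in {z | 1 / ((j : ℝ) + 1) < ‖z‖}ᶜ, min 1 (‖z‖ ^ 2) ∂μ) ≤ η)
    (hf : FC f Cf K Kx) :
    ∃ V, Near μ f T η (Cf * (T + 6)) ((B + 2) * (Cf * (T + 6))) V ∧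
      ∀ t x, 0 ≤ t → t ≤ T → |V t x - om μ K f j t x| ≤ η := by
  have hCf := hf.Cf_nonneg
  have hK := hf.K_nonneg
  have hKx := hf.Kx_nonneg
  have := trunc_finite hμ j
  have hcfl := hst_cfl (μ := μ) (K := K) j
  have hh := hst_pos (μ := μ) (K := K) j
  have hh1 := hst_le_one (μ := μ) (K := K) j
  have hom : ∀ t x, om μ K f j t x =
    scheme (trunc μ j) (hst μ K j) f ⌊t / hst μ K j⌋₊ x := fun _ _ => rfl
  set h := hst μ K j with hhdef
  set m := trunc μ j with hm
  set M := Cf * (T + 6) with hMdef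
  have hM0 : 0 ≤ M := by positivity
  have hCt0 : 0 ≤ Ct := by rw [hCt]; positivity
  set n : ℕ := ⌈(T + 5) / h⌉₊ with hn
  have hnT : (n : ℝ) * h ≤ T + 6 := by
    have h1 := (Nat.ceil_lt_add_one (a := (T + 5) / h) (by positivity)).le
    calc (n : ℝ) * h ≤ ((T + 5) / h + 1) * h := by gcongr
      _ = T + 5 + h := by field_simp
      _ ≤ _ := by linarith
  set Nn : ℝ → ℕ := fun t => min ⌊t / h⌋₊ n with hNn
  have hNnT : ∀ t, (Nn t : ℝ) * h ≤ T + 6 := fun t => by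
    have : (Nn t : ℝ) ≤ n := by exact_mod_cast min_le_right _ _
    exact (mul_le_mul_of_nonneg_right this hh.le).trans hnT
  have hNeq : ∀ t, t ≤ T + 5 → Nn t = ⌊t / h⌋₊ := fun t ht => by
    apply min_eq_left
    have : t / h ≤ (T + 5) / h := by gcongr
    exact (Nat.floor_mono this).trans (Nat.floor_le_ceil _)
  set ω : ℝ × EN N → ℝ := fun q => scheme m h f (Nn q.1) q.2 with hω
  have hωm : Measurable ω := by
    have h1 : Measurable fun q : ℕ × EN N => scheme m h f q.1 q.2 :=
      measurable_from_prod_countable_right fun k => (scheme_BC hf hh.le k).cont.measurable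
    have h2 : Measurable Nn := by
      refine Measurable.min (Nat.measurable_floor.comp (by fun_prop)) measurable_const
    exact h1.comp ((h2.comp measurable_fst).prodMk measurable_snd)
  have hωM : ∀ q, |ω q| ≤ M := fun q => by
    refine (scheme_bound hf hh.le hcfl (Nn q.1) q.2).trans ?_
    rw [hMdef, mul_comm Cf]
    exact mul_le_mul_of_nonneg_right (hNnT _) hCf
  have hstep : ∀ t x, 0 ≤ t → t ≤ T + 4 → ω (t + h, x) =
      ω (t, x) + h * (Aop m (fun x => ω (t, x)) x + f (Nn t * h) x (ω (t, x))) := by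
    intro t x h0 h1
    have e1 : Nn (t + h) = Nn t + 1 := by
      rw [hNeq _ (by linarith), hNeq _ (by linarith), add_div, div_self hh.ne',
        Nat.floor_add_one (by positivity)]
    simp only [hω, e1, scheme]
  have hfl : ∀ t, 0 ≤ t → t ≤ T + 5 → Nn t * h ≤ t ∧ t - h ≤ Nn t * h := fun t h0 h1 => by
    rw [hNeq t h1]; exact floor_near hh h0
  have hlip : ∀ t t' x x', 0 ≤ t → t ≤ T + 5 → 0 ≤ t' → t' ≤ T + 5 →
      |ω (t, x) - ω (t', x')| ≤ Ct * (|t - t'| + h + ‖x - x'‖) := by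
    intro t t' x x' h0 h1 h0' h1'
    have := scheme_lip hf hh.le hcfl (Nn t) (Nn t') (hNnT t) (hNnT t') x x'
    rw [← hCt] at this
    refine this.trans (mul_le_mul_of_nonneg_left ?_ hCt0)
    have a1 := hfl t h0 h1
    have a2 := hfl t' h0' h1'
    have a3 := le_abs_self (t - t'); have a4 := neg_le_abs (t - t')
    gcongr
    rw [abs_le]; constructor <;> linarith [a1.1, a1.2, a2.1, a2.2]
  obtain ⟨hcd, htay⟩ := hmoll ω M hωm hωM
  set U : ℝ × EN N → ℝ := fun q => ∫ y, ω (q - y) ∂ν with hU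
  have hi : ∀ q, Integrable (fun y => ω (q - y)) ν := fun q =>
    Integrable.of_bound (hωm.comp (by fun_prop)).aestronglyMeasurable M
      (Eventually.of_forall fun y => hωM _)
  have hUM : ∀ q, |U q| ≤ M := fun q => by
    have := abs_integral_sub_le (hi q) (c := 0) (e := M)
      (Eventually.of_forall fun y => by simpa using hωM _)
    simpa using this
  have hder : ∀ t x, deriv (fun t => U (t, x)) t = fderiv ℝ U (t, x) (1, 0) := by
    intro t x
    have h1 : HasFDerivAt U (fderiv ℝ U (t, x)) (t, x) :=
      (hcd.differentiable (by norm_num) _).hasFDerivAt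
    have h2 : HasDerivAt (fun t : ℝ => ((t, x) : ℝ × EN N)) (1, 0) t :=
      (hasDerivAt_id t).prodMk (hasDerivAt_const t x)
    exact (h1.comp_hasDerivAt t h2).deriv
  have htt : ∀ t x h', 0 ≤ h' → h' ≤ 1 →
      |U (t + h', x) - U (t, x) - h' * deriv (fun t => U (t, x)) t| ≤ (B + 2) * M * h' ^ 2 := by
    intro t x h' h0 h1
    have hnorm : ‖((h', 0) : ℝ × EN N)‖ = h' := by simp [Prod.norm_def, abs_of_nonneg h0, h0]
    have := htay (t, x) (h', 0) (by rw [hnorm]; exact h1)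
    rw [hnorm, show ((h', 0) : ℝ × EN N) = h' • ((1, 0) : ℝ × EN N) by simp, map_smul,
      smul_eq_mul, ← hder] at this
    rw [show ((t, x) : ℝ × EN N) + h' • ((1, 0) : ℝ × EN N) = (t + h', x) by simp] at this
    refine this.trans ?_
    nlinarith [mul_nonneg hM0 (sq_nonneg h')]
  have htx : ∀ t x z, |D2 (fun x => U (t, x)) x z| ≤ (B + 2) * M * min 1 (‖z‖ ^ 2) := by
    intro t x z
    rcases le_or_gt ‖z‖ 1 with hz | hz
    · have hn1 : ∀ z : EN N, ‖((0, z) : ℝ × EN N)‖ = ‖z‖ := fun z => by simp [Prod.norm_def]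
      have h1 := htay (t, x) (0, z) (by rwa [hn1])
      have h2 := htay (t, x) (0, -z) (by rwa [hn1, norm_neg])
      rw [hn1] at h1
      rw [hn1, norm_neg, show ((0, -z) : ℝ × EN N) = -(0, z) by simp, map_neg] at h2
      rw [show ((t, x) : ℝ × EN N) + (0, z) = (t, x + z) by simp] at h1
      rw [show ((t, x) : ℝ × EN N) + -(0, z) = (t, x - z) by simp [sub_eq_add_neg]] at h2
      have h3 : ‖z‖ ^ 2 ≤ 1 := by nlinarith [norm_nonneg z]
      rw [min_eq_right h3]
      unfold D2
      have h1' : |U (t, x + z) - U (t, x) - fderiv ℝ U (t, x) (0, z)| ≤ B * M * ‖z‖ ^ 2 := h1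
      have h2' : |U (t, x - z) - U (t, x) - -(fderiv ℝ U (t, x) (0, z))| ≤ B * M * ‖z‖ ^ 2 := h2
      rw [abs_le] at h1' h2' ⊢
      have h4 : 0 ≤ M * ‖z‖ ^ 2 := by positivity
      constructor <;> nlinarith [h1'.1, h1'.2, h2'.1, h2'.2]
    · rw [min_eq_left (by nlinarith)]
      have h1 := abs_le.1 (hUM (t, x + z)); have h2 := abs_le.1 (hUM (t, x - z))
      have h3 := abs_le.1 (hUM (t, x))
      unfold D2
      have h4 : 0 ≤ B * M := by positivity
      rw [abs_le]; constructor <;> linarith [h1.1, h1.2, h2.1, h2.2, h3.1, h3.2]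
  have hclose : ∀ t x, 0 ≤ t → t ≤ T → ∀ᵐ y ∂ν, |ω ((t, x) - y) - ω (t, x)| ≤ Ct * (4 * δ + h) := by
    intro t x h0 h1
    filter_upwards [hν] with y hy
    obtain ⟨⟨hy1, hy2⟩, hy3⟩ := hy
    refine (hlip (t - y.1) t (x - y.2) x (by linarith) (by linarith) h0 (by linarith)).trans ?_
    refine mul_le_mul_of_nonneg_left ?_ hCt0
    rw [show t - y.1 - t = -y.1 by ring, show x - y.2 - x = -y.2 by abel, norm_neg,
      abs_of_nonneg (by linarith)]
    linarith
  have hUω : ∀ t x, 0 ≤ t → t ≤ T → |U (t, x) - ω (t, x)| ≤ Ct * (4 * δ + h) := fun t x h0 h1 =>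
    abs_integral_sub_le (hi _) (hclose t x h0 h1)
  refine ⟨fun t x => U (t, x), ⟨hcd, fun t x => hUM _, htt, htx, ?_, ?_⟩, ?_⟩
  · intro t x h0 h1
    set F : ℝ × EN N → ℝ := fun y => f (Nn (t - y.1) * h) (x - y.2) (ω ((t, x) - y)) with hF
    have hFm : Measurable F := by
      have h2 : Measurable fun t : ℝ => (Nn t : ℝ) :=
        (measurable_from_top (f := fun k : ℕ => (k : ℝ))).comp
          (Measurable.min (Nat.measurable_floor.comp (by fun_prop)) measurable_const)
      have h3 : Measurable fun y : ℝ × EN N => ((Nn (t - y.1) : ℝ) * h, x - y.2, ω ((t, x) - y)) :=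
        ((h2.comp (by fun_prop)).mul_const h).prodMk
          ((by fun_prop : Measurable fun y : ℝ × EN N => x - y.2).prodMk (hωm.comp (by fun_prop)))
      exact hf.cont.measurable.comp h3
    have hFi : Integrable F ν := Integrable.of_bound hFm.aestronglyMeasurable Cf
      (Eventually.of_forall fun y => hf.bdd _ _ _)
    have hrel : U (t + h, x) - U (t, x) - h * (∫ y, F y ∂ν) = h * Aop m (fun x => U (t, x)) x := by
      rw [hU, Aop_avg hωm hωM t x, ← integral_const_mul, ← integral_const_mul,
        ← integral_sub (hi _) (hi _), ← integral_sub (by exact (hi _).sub (hi _)) (hFi.const_mul h)]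
      refine integral_congr_ae ?_
      filter_upwards [hν] with y hy
      obtain ⟨⟨hy1, hy2⟩, hy3⟩ := hy
      have := hstep (t - y.1) (x - y.2) (by linarith) (by linarith)
      have e1 : ((t + h, x) : ℝ × EN N) - y = (t - y.1 + h, x - y.2) := by
        rw [show ((t + h, x) : ℝ × EN N) - y = (t + h - y.1, x - y.2) from rfl]
        congr 1; ring
      have e2 : ((t, x) : ℝ × EN N) - y = (t - y.1, x - y.2) := rfl
      simp only [hF]
      rw [e1, e2, this]; ring
    have hFc : |(∫ y, F y ∂ν) - f t x (U (t, x))| ≤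
        Kx * (4 * δ + h) + 2 * K * (Ct * (4 * δ + h)) := by
      refine abs_integral_sub_le hFi ?_
      filter_upwards [hν, hclose t x h0 h1] with y hy hy'
      obtain ⟨⟨hy1, hy2⟩, hy3⟩ := hy
      have a1 := hf.lipx (Nn (t - y.1) * h) t (x - y.2) x (ω ((t, x) - y))
      have a2 := hf.lipv t x (ω ((t, x) - y)) (U (t, x))
      have a3 := hUω t x h0 h1
      have a4 := hfl (t - y.1) (by linarith) (by linarith)
      have a5 : |(Nn (t - y.1) : ℝ) * h - t| + ‖x - y.2 - x‖ ≤ 4 * δ + h := by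
        rw [show x - y.2 - x = -y.2 by abel, norm_neg]
        have : |(Nn (t - y.1) : ℝ) * h - t| ≤ 3 * δ + h := by
          rw [abs_le]; constructor <;> linarith [a4.1, a4.2]
        linarith
      have a6 : |ω ((t, x) - y) - U (t, x)| ≤ 2 * (Ct * (4 * δ + h)) := by
        rw [abs_sub_comm] at a3
        refine (abs_sub_le _ (ω (t, x)) _).trans ?_
        linarith
      have a7 := mul_le_mul_of_nonneg_left a5 hKx
      have a8 := mul_le_mul_of_nonneg_left a6 hK
      refine (abs_sub_le _ (f t x (ω ((t, x) - y))) _).trans ?_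
      linarith
    have hA : |Aop m (fun x => U (t, x)) x - Aop μ (fun x => U (t, x)) x| ≤ (B + 2) * M *
        (∫ z in {z | 1 / ((j : ℝ) + 1) < ‖z‖}ᶜ, min 1 (‖z‖ ^ 2) ∂μ) := by
      have hUc : Continuous U := hcd.continuous
      have hDm : AEStronglyMeasurable (D2 (fun x => U (t, x)) x) μ := by
        unfold D2; fun_prop
      have hDi : Integrable (D2 (fun x => U (t, x)) x) μ := by
        refine (hμ.int.const_mul ((B + 2) * M)).mono' hDm (Eventually.of_forall fun z => ?_)
        exact htx t x z
      have hms : MeasurableSet {z : EN N | 1 / ((j : ℝ) + 1) < ‖z‖} :=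
        measurableSet_lt measurable_const measurable_norm
      have e1 : Aop m (fun x => U (t, x)) x - Aop μ (fun x => U (t, x)) x =
          -∫ z in {z | 1 / ((j : ℝ) + 1) < ‖z‖}ᶜ, D2 (fun x => U (t, x)) x z ∂μ := by
        unfold Aop
        rw [← integral_add_compl hms hDi, hm, trunc]; ring
      rw [e1, abs_neg, ← integral_const_mul]
      exact norm_integral_le_of_norm_le (f := D2 (fun x => U (t, x)) x)
        (hμ.int.const_mul ((B + 2) * M)).integrableOn (Eventually.of_forall fun z => htx t x z)
    have hd := htt t x h hh.le hh1
    have hd' : |(∫ y, F y ∂ν) + Aop m (fun x => U (t, x)) x - deriv (fun t => U (t, x)) t| ≤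
        (B + 2) * M * h := by
      have e1 : U (t + h, x) - U (t, x) - h * deriv (fun t => U (t, x)) t =
          h * ((∫ y, F y ∂ν) + Aop m (fun x => U (t, x)) x - deriv (fun t => U (t, x)) t) := by
        linarith
      rw [e1, abs_mul, abs_of_pos hh] at hd
      have : h * |(∫ y, F y ∂ν) + Aop m (fun x => U (t, x)) x - deriv (fun t => U (t, x)) t| ≤
        h * ((B + 2) * M * h) := by linarith
      exact le_of_mul_le_mul_left this hh
    rw [abs_le] at hFc hA hd' ⊢
    constructor <;> linarith [hFc.1, hFc.2, hA.1, hA.2, hd'.1, hd'.2]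
  · intro x
    have h1 := hUω 0 x le_rfl hT
    have h2 : ω (0, x) = 0 := by simp [hω, hNn, scheme]
    rw [h2, sub_zero] at h1
    exact h1.trans he
  · intro t x h0 h1
    have h2 := hUω t x h0 h1
    have h3 : ω (t, x) = om μ K f j t x := by
      rw [hom, hω]; simp only; rw [hNeq t (by linarith)]
    rw [← h3]; exact h2.trans he

/-- Existence of smooth approximate solutions, uniformly over the class of reaction terms. -/
lemma near_exists (hμ : LevyM μ) (hCf : 0 ≤ Cf) (hK : 0 ≤ K) (hKx : 0 ≤ Kx) {T η : ℝ}
    (hT : 0 ≤ T) (hη : 0 < η) :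
    ∃ (B : ℝ) (j : ℕ), 0 ≤ B ∧ ∀ f : ℝ → EN N → ℝ → ℝ, FC f Cf K Kx →
      ∃ V, Near μ f T η (Cf * (T + 6)) B V ∧
        ∀ t x, 0 ≤ t → t ≤ T → |V t x - om μ K f j t x| ≤ η := by
  set Ct : ℝ := Real.exp (K * (T + 6)) * (Cf + (T + 6) * Kx) with hCt
  have hCt0 : 0 ≤ Ct := by positivity
  set Q : ℝ := Kx + 2 * K * Ct + Ct + 1 with hQ
  have hQ0 : 0 < Q := by positivity
  set δ : ℝ := min 1 (η / (8 * Q)) with hδ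
  have hδ0 : 0 < δ := by positivity
  have hδQ : Q * (4 * δ) ≤ η / 2 := by
    have : δ ≤ η / (8 * Q) := min_le_right _ _
    calc Q * (4 * δ) ≤ Q * (4 * (η / (8 * Q))) := by gcongr
      _ = η / 2 := by field_simp; norm_num
  obtain ⟨ν, hνp, hν, B, hB, hmoll⟩ := moll_exists N hδ0
  have hlim : Tendsto (fun j => Q * hst μ K j + (B + 2) * (Cf * (T + 6)) * hst μ K j +
      (B + 2) * (Cf * (T + 6)) * (∫ z in {z | 1 / ((j : ℝ) + 1) < ‖z‖}ᶜ, min 1 (‖z‖ ^ 2) ∂μ))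
      atTop (nhds 0) := by
    have h1 := (hst_tendsto (μ := μ) (K := K)).const_mul Q
    have h2 := (hst_tendsto (μ := μ) (K := K)).const_mul ((B + 2) * (Cf * (T + 6)))
    have h3 := (tail_tendsto hμ).const_mul ((B + 2) * (Cf * (T + 6)))
    simpa using (h1.add h2).add h3
  obtain ⟨j, hj⟩ := (hlim.eventually (gt_mem_nhds (half_pos hη))).exists
  have hh := hst_pos (μ := μ) (K := K) j
  have htail : 0 ≤ ∫ z in {z | 1 / ((j : ℝ) + 1) < ‖z‖}ᶜ, min 1 (‖z‖ ^ 2) ∂μ :=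
    integral_nonneg fun z => by positivity
  have hM0 : 0 ≤ (B + 2) * (Cf * (T + 6)) := by positivity
  have p1 := mul_nonneg hM0 htail
  have p2 := mul_nonneg hM0 hh.le
  have p3 : 0 ≤ K * Ct := by positivity
  refine ⟨(B + 2) * (Cf * (T + 6)), j, hM0, fun f hf => ?_⟩
  refine near_core hμ hT hδ0 (min_le_left _ _) hB hν hmoll j Ct hCt ?_ ?_ hf
  · have : Ct * (4 * δ + hst μ K j) ≤ Q * (4 * δ + hst μ K j) := by
      gcongr; rw [hQ]; nlinarith
    nlinarith
  · have : (Kx + 2 * K * Ct) * (4 * δ + hst μ K j) ≤ Q * (4 * δ + hst μ K j) := by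
      gcongr; rw [hQ]; nlinarith
    nlinarith

end

/-! ### Convergence of the scheme -/

section
variable {N : ℕ} {μ : Measure (EN N)} {K : ℝ} {f : ℝ → EN N → ℝ → ℝ} {Cf Kx T η M B : ℝ}
  {V : ℝ → EN N → ℝ}

namespace Near

lemma mono (hV : Near μ f T η M B V) {η' : ℝ} (h : η ≤ η') : Near μ f T η' M B V :=
  ⟨hV.cd, hV.bdd, hV.tt, hV.tx, fun t x h0 h1 => (hV.eq t x h0 h1).trans h,
    fun x => (hV.initial x).trans h⟩

lemma contx (hV : Near μ f T η M B V) (t : ℝ) : Continuous (V t) :=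
  hV.cd.continuous.comp (by fun_prop : Continuous fun x : EN N => ((t, x) : ℝ × EN N))

lemma BCx (hV : Near μ f T η M B V) (t : ℝ) : BC (V t) := ⟨hV.contx t, M, hV.bdd t⟩

lemma D2_int (hμ : LevyM μ) (hV : Near μ f T η M B V) (t : ℝ) (x : EN N) :
    Integrable (D2 (V t) x) μ := by
  refine (hμ.int.const_mul B).mono' ?_ (Eventually.of_forall fun z => hV.tx t x z)
  have := hV.contx t
  have h : Continuous (D2 (V t) x) := by unfold D2; fun_prop
  exact h.aestronglyMeasurable

lemma Aop_trunc (hμ : LevyM μ) (hV : Near μ f T η M B V) (j : ℕ) (t : ℝ) (x : EN N) :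
    |Aop (trunc μ j) (V t) x - Aop μ (V t) x| ≤
      B * (∫ z in {z | 1 / ((j : ℝ) + 1) < ‖z‖}ᶜ, min 1 (‖z‖ ^ 2) ∂μ) := by
  have hms : MeasurableSet {z : EN N | 1 / ((j : ℝ) + 1) < ‖z‖} :=
    measurableSet_lt measurable_const measurable_norm
  have e1 : Aop (trunc μ j) (V t) x - Aop μ (V t) x =
      -∫ z in {z | 1 / ((j : ℝ) + 1) < ‖z‖}ᶜ, D2 (V t) x z ∂μ := by
    unfold Aop
    rw [← integral_add_compl hms (hV.D2_int hμ t x), trunc]; ring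
  rw [e1, abs_neg, ← integral_const_mul]
  exact norm_integral_le_of_norm_le (f := D2 (V t) x)
    (hμ.int.const_mul B).integrableOn (Eventually.of_forall fun z => hV.tx t x z)

lemma lip_t (hV : Near μ f T η M B V) (t x s) (h0 : 0 ≤ s) (h1 : s ≤ 1) :
    |V (t + s) x - V t x| ≤ s * (2 * M + 2 * B) := by
  have a1 := abs_le.1 (hV.tt t x 1 zero_le_one le_rfl)
  have a2 := abs_le.1 (hV.tt t x s h0 h1)
  have a3 := abs_le.1 (hV.bdd (t + 1) x)
  have a4 := abs_le.1 (hV.bdd t x)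
  have hB : 0 ≤ B := by nlinarith [a1.1, a1.2]
  set d := deriv (fun t => V t x) t
  have b1 : d ≤ 2 * M + B := by linarith [a1.1]
  have b2 : -(2 * M + B) ≤ d := by linarith [a1.2]
  have c1 := mul_le_mul_of_nonneg_left b1 h0
  have c2 := mul_le_mul_of_nonneg_left b2 h0
  have c3 : B * s ^ 2 ≤ B * s := mul_le_mul_of_nonneg_left (by nlinarith) hB
  rw [abs_le]; constructor <;> nlinarith [a2.1, a2.2]

end Near

lemma near_close_grid (hμ : LevyM μ) (hf : FC f Cf K Kx) (hV : Near μ f T η M B V) (hη : 0 ≤ η)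
    (j : ℕ) (hj : B * hst μ K j +
      B * (∫ z in {z | 1 / ((j : ℝ) + 1) < ‖z‖}ᶜ, min 1 (‖z‖ ^ 2) ∂μ) ≤ η)
    (n : ℕ) (hn : n * hst μ K j ≤ T) (x : EN N) :
    |V (n * hst μ K j) x - scheme (trunc μ j) (hst μ K j) f n x| ≤
      Real.exp (K * T) * (1 + 2 * T) * η := by
  have hK := hf.K_nonneg
  have hfin := trunc_finite hμ j
  have hcfl := hst_cfl (μ := μ) (K := K) j
  have hh := hst_pos (μ := μ) (K := K) j
  have hh1 := hst_le_one (μ := μ) (K := K) j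
  set h := hst μ K j with hhdef
  have hT : 0 ≤ T := le_trans (by positivity) hn
  have hcons : ∀ k < n, ∀ x, |V ((k + 1 : ℕ) * h) x - V (k * h) x -
      h * (Aop (trunc μ j) (V (k * h)) x + f (k * h) x (V (k * h) x))| ≤ h * (2 * η) := by
    intro k hk x
    have hk' : (k : ℝ) * h ≤ T := by
      have : (k : ℝ) ≤ n := by exact_mod_cast hk.le
      exact (mul_le_mul_of_nonneg_right this hh.le).trans hn
    have a1 := abs_le.1 (hV.tt (k * h) x h hh.le hh1)
    have a2 := abs_le.1 (hV.eq (k * h) x (by positivity) hk')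
    have a3 := abs_le.1 (hV.Aop_trunc hμ j (k * h) x)
    rw [show ((k + 1 : ℕ) : ℝ) * h = k * h + h by push_cast; ring]
    set d := deriv (fun t => V t x) (k * h)
    set tl := B * (∫ z in {z | 1 / ((j : ℝ) + 1) < ‖z‖}ᶜ, min 1 (‖z‖ ^ 2) ∂μ)
    set am := Aop (trunc μ j) (V (k * h)) x
    set aμ := Aop μ (V (k * h)) x
    set ff := f (k * h) x (V (k * h) x)
    have b1 : d - (am + ff) ≤ η + tl := by linarith [a2.2, a3.1]
    have b2 : -(η + tl) ≤ d - (am + ff) := by linarith [a2.1, a3.2]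
    have c1 := mul_le_mul_of_nonneg_left b1 hh.le
    have c2 := mul_le_mul_of_nonneg_left b2 hh.le
    have c3 := mul_le_mul_of_nonneg_left hj hh.le
    rw [abs_le]; constructor <;> nlinarith [a1.1, a1.2]
  have hpow := pow_le_exp hh.le hK hn
  have hfinal : (1 + h * K) ^ n * (η + n * h * (2 * η)) ≤ Real.exp (K * T) * (1 + 2 * T) * η := by
    calc _ ≤ Real.exp (K * T) * (η + T * (2 * η)) := by gcongr
      _ = _ := by ring
  have up := gronwall hh.le hK hcfl hη (e := 2 * η) (by positivity) n (fun k => V (k * h))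
    (scheme (trunc μ j) h f) (fun k x => f (k * h) x (V (k * h) x) + 2 * η)
    (fun k x => f (k * h) x (scheme (trunc μ j) h f k x)) (fun k => hV.BCx _)
    (scheme_BC hf hh.le) (fun k hk x => by
      have := (abs_le.1 (hcons k hk x)).2
      linarith) (fun _ _ _ => le_rfl) (fun k hk x => by
      have := (abs_le.1 (hf.lipv (k * h) x (V (k * h) x) (scheme (trunc μ j) h f k x))).2
      linarith) (fun x => by
        have := (abs_le.1 (hV.initial x)).2
        simpa [scheme] using this) n le_rfl x
  have lo := gronwall hh.le hK hcfl hη (e := 2 * η) (by positivity) n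
    (scheme (trunc μ j) h f) (fun k => V (k * h))
    (fun k x => f (k * h) x (scheme (trunc μ j) h f k x))
    (fun k x => f (k * h) x (V (k * h) x) - 2 * η)
    (scheme_BC hf hh.le) (fun k => hV.BCx _) (fun _ _ _ => le_rfl) (fun k hk x => by
      have := (abs_le.1 (hcons k hk x)).1
      linarith) (fun k hk x => by
      have := (abs_le.1 (hf.lipv (k * h) x (scheme (trunc μ j) h f k x) (V (k * h) x))).2
      linarith) (fun x => by
        have := (abs_le.1 (hV.initial x)).1
        simp only [scheme, Nat.cast_zero, zero_mul]; linarith) n le_rfl x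
  rw [abs_le]; constructor <;> linarith

lemma near_close (hμ : LevyM μ) (hf : FC f Cf K Kx) (hV : Near μ f T η M B V) (hη : 0 ≤ η)
    (j : ℕ) (hj : B * hst μ K j +
      B * (∫ z in {z | 1 / ((j : ℝ) + 1) < ‖z‖}ᶜ, min 1 (‖z‖ ^ 2) ∂μ) ≤ η)
    (t : ℝ) (h0 : 0 ≤ t) (h1 : t ≤ T) (x : EN N) :
    |V t x - om μ K f j t x| ≤
      Real.exp (K * T) * (1 + 2 * T) * η + hst μ K j * (2 * M + 2 * B) := by
  have hh := hst_pos (μ := μ) (K := K) j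
  have hh1 := hst_le_one (μ := μ) (K := K) j
  have hfl := floor_near hh h0
  have a1 := near_close_grid hμ hf hV hη j hj ⌊t / hst μ K j⌋₊ (hfl.1.trans h1) x
  have a2 := hV.lip_t (⌊t / hst μ K j⌋₊ * hst μ K j) x (t - ⌊t / hst μ K j⌋₊ * hst μ K j)
    (by linarith [hfl.1]) (by linarith [hfl.2])
  rw [add_sub_cancel] at a2
  have hMB : 0 ≤ 2 * M + 2 * B := by
    have := hV.lip_t 0 x 1 zero_le_one le_rfl
    have := (abs_nonneg _).trans this
    linarith
  have a3 : (t - ⌊t / hst μ K j⌋₊ * hst μ K j) * (2 * M + 2 * B) ≤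
      hst μ K j * (2 * M + 2 * B) := by gcongr; linarith [hfl.2]
  unfold om
  refine (abs_sub_le _ (V (⌊t / hst μ K j⌋₊ * hst μ K j) x) _).trans ?_
  linarith

/-- Uniformly over the class of reaction terms, all fine approximations stay close to one smooth
approximate solution. -/
lemma om_near (hμ : LevyM μ) (hCf : 0 ≤ Cf) (hK : 0 ≤ K) (hKx : 0 ≤ Kx) {T ε : ℝ}
    (hT : 0 ≤ T) (hε : 0 < ε) :
    ∃ (B : ℝ) (J : ℕ), 0 ≤ B ∧ ∀ f : ℝ → EN N → ℝ → ℝ, FC f Cf K Kx →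
      ∃ V, Near μ f T ε (Cf * (T + 6)) B V ∧
        ∀ j ≥ J, ∀ t x, 0 ≤ t → t ≤ T → |V t x - om μ K f j t x| ≤ ε := by
  set Q := Real.exp (K * T) * (1 + 2 * T) + 1 with hQ
  have hQ1 : 1 ≤ Q := by rw [hQ]; linarith [show 0 ≤ Real.exp (K * T) * (1 + 2 * T) by positivity]
  have hη : 0 < ε / Q := by positivity
  obtain ⟨B, _, hB, hmain⟩ := near_exists (N := N) (Cf := Cf) hμ hCf hK hKx hT hη
  have l1 : Tendsto (fun j => B * hst μ K j +
      B * (∫ z in {z | 1 / ((j : ℝ) + 1) < ‖z‖}ᶜ, min 1 (‖z‖ ^ 2) ∂μ)) atTop (nhds 0) := by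
    simpa using ((hst_tendsto (μ := μ) (K := K)).const_mul B).add ((tail_tendsto hμ).const_mul B)
  have l2 : Tendsto (fun j => hst μ K j * (2 * (Cf * (T + 6)) + 2 * B)) atTop (nhds 0) := by
    simpa using (hst_tendsto (μ := μ) (K := K)).mul_const (2 * (Cf * (T + 6)) + 2 * B)
  obtain ⟨J, hJ⟩ := eventually_atTop.1
    ((l1.eventually (gt_mem_nhds hη)).and (l2.eventually (gt_mem_nhds hη)))
  refine ⟨B, J, hB, fun f hf => ?_⟩
  obtain ⟨V, hV, -⟩ := hmain f hf
  refine ⟨V, hV.mono (div_le_self hε.le hQ1), fun j hj t x h0 h1 => ?_⟩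
  have := near_close hμ hf hV hη.le j (hJ j hj).1.le t h0 h1 x
  have h2 := (hJ j hj).2
  have h3 : Real.exp (K * T) * (1 + 2 * T) * (ε / Q) + ε / Q = ε := by
    rw [show Real.exp (K * T) * (1 + 2 * T) = Q - 1 by rw [hQ]; ring]
    field_simp; ring
  linarith

/-- The limit of the approximations. -/
noncomputable def sol (μ : Measure (EN N)) (K : ℝ) (f : ℝ → EN N → ℝ → ℝ) (t : ℝ) (x : EN N) : ℝ :=
  limUnder atTop fun j => om μ K f j t x

lemma sol_tendsto (hμ : LevyM μ) (hf : FC f Cf K Kx) {t : ℝ} (ht : 0 ≤ t) (x : EN N) :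
    Tendsto (fun j => om μ K f j t x) atTop (nhds (sol μ K f t x)) := by
  refine CauchySeq.tendsto_limUnder ?_
  rw [Metric.cauchySeq_iff']
  intro ε hε
  obtain ⟨B, J, -, h⟩ := om_near (N := N) hμ hf.Cf_nonneg hf.K_nonneg hf.Kx_nonneg ht
    (show 0 < ε / 3 by positivity)
  obtain ⟨V, -, hV⟩ := h f hf
  refine ⟨J, fun j hj => ?_⟩
  have h1 := hV j hj t x ht le_rfl
  have h2 := hV J le_rfl t x ht le_rfl
  rw [Real.dist_eq]
  rw [abs_sub_comm] at h1
  refine lt_of_le_of_lt (abs_sub_le _ (V t x) _) ?_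
  linarith

lemma sol_near (hμ : LevyM μ) (hCf : 0 ≤ Cf) (hK : 0 ≤ K) (hKx : 0 ≤ Kx) {T ε : ℝ}
    (hT : 0 ≤ T) (hε : 0 < ε) :
    ∃ (B : ℝ) (J : ℕ), 0 ≤ B ∧ ∀ f : ℝ → EN N → ℝ → ℝ, FC f Cf K Kx →
      (∃ V, Near μ f T ε (Cf * (T + 6)) B V ∧
        ∀ t x, 0 ≤ t → t ≤ T → |V t x - sol μ K f t x| ≤ ε) ∧
      ∀ j ≥ J, ∀ t x, 0 ≤ t → t ≤ T → |om μ K f j t x - sol μ K f t x| ≤ ε := by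
  obtain ⟨B, J, hB, h⟩ := om_near (N := N) (Cf := Cf) hμ hCf hK hKx hT
    (show 0 < ε / 2 by positivity)
  refine ⟨B, J, hB, fun f hf => ?_⟩
  obtain ⟨V, hV, hV'⟩ := h f hf
  have hs : ∀ t x, 0 ≤ t → t ≤ T → |V t x - sol μ K f t x| ≤ ε / 2 := fun t x h0 h1 => by
    refine le_of_tendsto ((tendsto_const_nhds.sub (sol_tendsto hμ hf h0 x)).abs)
      (eventually_atTop.2 ⟨J, fun j hj => hV' j hj t x h0 h1⟩)
  refine ⟨⟨V, hV.mono (by linarith), fun t x h0 h1 => (hs t x h0 h1).trans (by linarith)⟩, ?_⟩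
  intro j hj t x h0 h1
  have h1' := hV' j hj t x h0 h1
  have h2 := hs t x h0 h1
  rw [abs_sub_comm] at h1'
  refine (abs_sub_le _ (V t x) _).trans ?_
  linarith

lemma om_bound (hμ : LevyM μ) (hf : FC f Cf K Kx) (j : ℕ) {t : ℝ} (ht : 0 ≤ t) (x : EN N) :
    |om μ K f j t x| ≤ t * Cf := by
  have := trunc_finite hμ j
  refine (scheme_bound hf (hst_pos j).le (hst_cfl j) _ x).trans ?_
  exact mul_le_mul_of_nonneg_right (floor_near (hst_pos j) ht).1 hf.Cf_nonneg

lemma sol_bound (hμ : LevyM μ) (hf : FC f Cf K Kx) {t : ℝ} (ht : 0 ≤ t) (x : EN N) :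
    |sol μ K f t x| ≤ t * Cf :=
  le_of_tendsto (sol_tendsto hμ hf ht x).abs (Eventually.of_forall fun j => om_bound hμ hf j ht x)

lemma sol_zero (hμ : LevyM μ) (hf : FC f Cf K Kx) (x : EN N) : sol μ K f 0 x = 0 := by
  have := sol_bound hμ hf le_rfl x
  simpa using this

lemma sol_cont (hμ : LevyM μ) (hf : FC f Cf K Kx) :
    ContinuousOn (fun q : ℝ × EN N => sol μ K f q.1 q.2) (Ici 0 ×ˢ univ) := by
  rintro ⟨t₀, x₀⟩ ⟨h0, -⟩
  simp only [mem_Ici] at h0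
  have hU : ContinuousOn (fun q : ℝ × EN N => sol μ K f q.1 q.2) (Icc 0 (t₀ + 1) ×ˢ univ) := by
    refine continuousOn_of_uniform_approx_of_continuousOn fun u hu => ?_
    obtain ⟨ε, hε, hεu⟩ := Metric.mem_uniformity_dist.1 hu
    obtain ⟨B, J, -, h⟩ := sol_near (N := N) (T := t₀ + 1) hμ hf.Cf_nonneg hf.K_nonneg hf.Kx_nonneg
      (by linarith) (half_pos hε)
    obtain ⟨⟨V, hV, hs⟩, -⟩ := h f hf
    refine ⟨fun q => V q.1 q.2, hV.cd.continuous.continuousOn, fun q hq => hεu ?_⟩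
    have := hs q.1 q.2 hq.1.1 hq.1.2
    rw [dist_comm, Real.dist_eq]; linarith
  have h1 := hU (t₀, x₀) ⟨⟨h0, by linarith⟩, mem_univ _⟩
  refine h1.mono_of_mem_nhdsWithin ?_
  rw [mem_nhdsWithin]
  refine ⟨Iio (t₀ + 1) ×ˢ univ, isOpen_Iio.prod isOpen_univ, ⟨by simp, mem_univ _⟩, ?_⟩
  rintro q ⟨⟨a, -⟩, ⟨b, -⟩⟩
  exact ⟨⟨b, le_of_lt a⟩, mem_univ _⟩

end

/-! ### The limit is a viscosity solution -/

section
variable {N : ℕ} {μ : Measure (EN N)}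

lemma taylor_on_ball {E : Type*} [NormedAddCommGroup E] [NormedSpace ℝ E] [FiniteDimensional ℝ E]
    {φ : E → ℝ} (h1 : ContDiff ℝ 2 φ) (q : E) (R : ℝ) :
    ∃ C : ℝ, 0 ≤ C ∧ ∀ a z, a ∈ closedBall q R → a + z ∈ closedBall q R →
      |φ (a + z) - φ a - fderiv ℝ φ a z| ≤ C * ‖z‖ ^ 2 := by
  have h3 : ContDiff ℝ 1 (fderiv ℝ φ) := h1.fderiv_right (by norm_num)
  obtain ⟨C, hC⟩ := h3.contDiffOn.exists_lipschitzOnWith (by norm_num) (convex_closedBall q R)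
    (isCompact_closedBall q R)
  refine ⟨C, C.2, fun a z ha haz => ?_⟩
  have hd : Differentiable ℝ φ := h1.differentiable (by norm_num)
  have := (convex_segment (𝕜 := ℝ) a (a + z)).norm_image_sub_le_of_norm_hasFDerivWithin_le'
    (f := φ) (f' := fderiv ℝ φ) (φ := fderiv ℝ φ a) (C := C * ‖z‖) (x := a) (y := a + z)
    (fun x _ => (hd x).hasFDerivAt.hasFDerivWithinAt)
    (fun x hx => by
      have hxb := (convex_closedBall q R).segment_subset ha haz hx
      refine (hC.norm_sub_le hxb ha).trans ?_
      gcongr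
      have := norm_sub_le_of_mem_segment hx
      simpa using this)
    (left_mem_segment _ _ _) (right_mem_segment _ _ _)
  simp only [add_sub_cancel_left, Real.norm_eq_abs] at this
  refine this.trans_eq (by ring)

lemma D2_bound_local {φ : ℝ → EN N → ℝ} (h : ContDiff ℝ 2 fun q : ℝ × EN N => φ q.1 q.2)
    (t₀ : ℝ) (x₀ : EN N) (R : ℝ) :
    ∃ C : ℝ, 0 ≤ C ∧ ∀ t x z, |t - t₀| ≤ R → ‖x - x₀‖ ≤ R → ‖z‖ ≤ R →
      |D2 (φ t) x z| ≤ C * ‖z‖ ^ 2 := by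
  obtain ⟨C, hC0, hC⟩ := taylor_on_ball h (t₀, x₀) (2 * R)
  refine ⟨C, hC0, fun t x z ht hx hz => ?_⟩
  have hR : 0 ≤ R := (norm_nonneg z).trans hz
  have hmem : ∀ z : EN N, ‖z‖ ≤ R → ((t, x) : ℝ × EN N) + (0, z) ∈ closedBall (t₀, x₀) (2 * R) := by
    intro z hz
    rw [mem_closedBall, dist_eq_norm, Prod.norm_def]
    refine max_le ?_ ?_
    · simp only [Prod.fst_sub, Prod.fst_add, add_zero, Real.norm_eq_abs]; linarith
    · simp only [Prod.snd_sub, Prod.snd_add]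
      rw [show x + z - x₀ = (x - x₀) + z by abel]
      exact (norm_add_le _ _).trans (by linarith)
  have hn1 : ∀ z : EN N, ‖((0, z) : ℝ × EN N)‖ = ‖z‖ := fun z => by simp [Prod.norm_def]
  have h0 := hmem 0 (by simpa using hR)
  rw [show ((t, x) : ℝ × EN N) + (0, 0) = (t, x) by simp] at h0
  have h1 := hC (t, x) (0, z) h0 (hmem z hz)
  have h2 := hC (t, x) (0, -z) h0 (hmem (-z) (by rwa [norm_neg]))
  rw [hn1] at h1
  rw [hn1, norm_neg, show ((0, -z) : ℝ × EN N) = -(0, z) by simp, map_neg] at h2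
  rw [show ((t, x) : ℝ × EN N) + (0, z) = (t, x + z) by simp] at h1
  rw [show ((t, x) : ℝ × EN N) + -(0, z) = (t, x - z) by simp [sub_eq_add_neg]] at h2
  simp only at h1 h2
  unfold D2
  rw [abs_le] at h1 h2 ⊢
  constructor <;> linarith [h1.1, h1.2, h2.1, h2.2]

lemma setint_sq (hμ : LevyM μ) (r : ℝ) :
    IntegrableOn (fun z : EN N => ‖z‖ ^ 2) {z | ‖z‖ ≤ r} μ := by
  refine ((hμ.int.const_mul (max 1 (r ^ 2))).integrableOn (s := {z : EN N | ‖z‖ ≤ r})).mono' (by fun_prop) ?_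
  refine (ae_restrict_iff' (measurableSet_le measurable_norm measurable_const)).2
    (Eventually.of_forall fun z hz => ?_)
  have hz' : ‖z‖ ≤ r := hz
  rw [Real.norm_of_nonneg (by positivity)]
  rcases le_total (‖z‖ ^ 2) 1 with h | h
  · rw [min_eq_right h]
    exact le_mul_of_one_le_left (by positivity) (le_max_left _ _)
  · rw [min_eq_left h, mul_one]
    exact (pow_le_pow_left₀ (norm_nonneg z) hz' 2).trans (le_max_right _ _)

lemma finite_far (hμ : LevyM μ) {r : ℝ} (hr : 0 < r) : μ {z : EN N | r < ‖z‖} < ⊤ := by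
  have h1 := hμ.int.measure_norm_ge_lt_top (ε := min 1 (r ^ 2)) (by positivity)
  refine (measure_mono fun z hz => ?_).trans_lt h1
  simp only [mem_ofPred_eq] at hz ⊢
  rw [Real.norm_of_nonneg (by positivity)]
  gcongr

lemma sym_int (hμ : LevyM μ) {A : Set (EN N)} (hA : ∀ z, -z ∈ A ↔ z ∈ A)
    {F : EN N → ℝ} (hF : IntegrableOn F A μ) :
    ∫ z in A, F z ∂μ = ∫ z in A, (F z + F (-z)) / 2 ∂μ := by
  have hmp := hμ.even
  have hpre : (fun z : EN N => -z) ⁻¹' A = A := by ext z; exact hA z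
  have hemb : MeasurableEmbedding (fun z : EN N => -z) := (Homeomorph.neg (EN N)).measurableEmbedding
  have h1 : ∫ z in A, F (-z) ∂μ = ∫ z in A, F z ∂μ := by
    have := hmp.setIntegral_preimage_emb hemb F A
    rwa [hpre] at this
  have h2 : IntegrableOn (fun z => F (-z)) A μ := by
    have := (hmp.integrableOn_comp_preimage hemb (f := F) (s := A)).2 hF
    rwa [hpre] at this
  rw [integral_div, integral_add hF h2, h1]; ring

/-- Smooth functions `V` solving the equation up to arbitrarily small errors converge to `u`,
locally uniformly in time. -/
def Lim (μ : Measure (EN N)) (f : ℝ → EN N → ℝ → ℝ) (u : ℝ → EN N → ℝ) : Prop :=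
  ContinuousOn (fun q : ℝ × EN N => u q.1 q.2) (Ici 0 ×ˢ univ) ∧
  ∀ T ≥ 0, ∃ M, ∀ e > 0, ∃ B V, Near μ f T e M B V ∧ ∀ t x, 0 ≤ t → t ≤ T → |V t x - u t x| ≤ e

lemma sol_Lim {K Cf Kx : ℝ} {f : ℝ → EN N → ℝ → ℝ} (hμ : LevyM μ) (hf : FC f Cf K Kx) :
    Lim μ f (sol μ K f) := by
  refine ⟨sol_cont hμ hf, fun T hT => ⟨Cf * (T + 6), fun e he => ?_⟩⟩
  obtain ⟨B, J, -, h⟩ := sol_near (N := N) hμ hf.Cf_nonneg hf.K_nonneg hf.Kx_nonneg hT he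
  obtain ⟨⟨V, hV, hs⟩, -⟩ := h f hf
  exact ⟨B, V, hV, hs⟩

variable {f : ℝ → EN N → ℝ → ℝ} {u : ℝ → EN N → ℝ}

lemma D2_neg (u : EN N → ℝ) (x z : EN N) : D2 (fun y => -u y) x z = -D2 u x z := by
  unfold D2; ring

lemma Near.neg {T e M B : ℝ} {V : ℝ → EN N → ℝ} (hV : Near μ f T e M B V) :
    Near μ (fun t x v => -f t x (-v)) T e M B (fun t x => -V t x) := by
  refine ⟨hV.cd.neg, fun t x => by rw [abs_neg]; exact hV.bdd t x, ?_, ?_, ?_, ?_⟩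
  · intro t x h h0 h1
    rw [deriv.fun_neg, ← abs_neg]
    refine le_trans (le_of_eq ?_) (hV.tt t x h h0 h1)
    congr 1; ring
  · intro t x z; rw [D2_neg, abs_neg]; exact hV.tx t x z
  · intro t x h0 h1
    rw [deriv.fun_neg, ← abs_neg]
    refine le_trans (le_of_eq ?_) (hV.eq t x h0 h1)
    congr 1
    have : Aop μ (fun x => -V t x) x = -Aop μ (V t) x := by
      unfold Aop; simp only [D2_neg, integral_neg]
    rw [this, neg_neg]; ring
  · intro x; rw [abs_neg]; exact hV.initial x

lemma Lim.neg (h : Lim μ f u) : Lim μ (fun t x v => -f t x (-v)) (fun t x => -u t x) := by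
  refine ⟨h.1.neg, fun T hT => ?_⟩
  obtain ⟨M, hM⟩ := h.2 T hT
  refine ⟨M, fun e he => ?_⟩
  obtain ⟨B, V, hV, hs⟩ := hM e he
  refine ⟨B, _, hV.neg, fun t x h0 h1 => ?_⟩
  rw [← abs_neg]
  refine le_trans (le_of_eq ?_) (hs t x h0 h1)
  congr 1; ring

lemma Lim.contx (h : Lim μ f u) {t : ℝ} (ht : 0 ≤ t) : Continuous (u t) := by
  rw [← continuousOn_univ]
  exact h.1.comp (f := fun x : EN N => ((t, x) : ℝ × EN N)) (by fun_prop)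
    (fun x _ => ⟨ht, mem_univ _⟩)

lemma Lim.bdd (h : Lim μ f u) (T : ℝ) (hT : 0 ≤ T) :
    ∃ M, ∀ t x, 0 ≤ t → t ≤ T → |u t x| ≤ M := by
  obtain ⟨M, hM⟩ := h.2 T hT
  obtain ⟨B, V, hV, hs⟩ := hM 1 one_pos
  refine ⟨M + 1, fun t x h0 h1 => ?_⟩
  have a1 := abs_le.1 (hs t x h0 h1); have a2 := abs_le.1 (hV.bdd t x)
  rw [abs_le]; constructor <;> linarith [a1.1, a1.2, a2.1, a2.2]

lemma Lim.zero (h : Lim μ f u) (x : EN N) : u 0 x = 0 := by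
  have : ∀ e > 0, |u 0 x| ≤ 0 + e := fun e he => by
    obtain ⟨M, hM⟩ := h.2 0 le_rfl
    obtain ⟨B, V, hV, hs⟩ := hM (e / 2) (by positivity)
    have a1 := abs_le.1 (hs 0 x le_rfl le_rfl); have a2 := abs_le.1 (hV.initial x)
    rw [abs_le]; constructor <;> linarith [a1.1, a1.2, a2.1, a2.2]
  simpa using le_of_forall_pos_le_add this

end

section
variable {N : ℕ} {μ : Measure (EN N)} {f : ℝ → EN N → ℝ → ℝ} {u : ℝ → EN N → ℝ}

/-- A test function made strict by adding the penalization `κ (|t-t₀|² + ‖x-x₀‖²)`. -/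
noncomputable def pen (φ : ℝ → EN N → ℝ) (κ t₀ : ℝ) (x₀ : EN N) (t : ℝ) (x : EN N) : ℝ :=
  φ t x + κ * ((t - t₀) ^ 2 + ‖x - x₀‖ ^ 2)

lemma pen_cd {φ : ℝ → EN N → ℝ} (h : ContDiff ℝ 2 fun q : ℝ × EN N => φ q.1 q.2)
    (κ t₀ : ℝ) (x₀ : EN N) : ContDiff ℝ 2 fun q : ℝ × EN N => pen φ κ t₀ x₀ q.1 q.2 := by
  unfold pen
  refine h.add (contDiff_const.mul (ContDiff.add ?_ ?_))
  · fun_prop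
  · exact (contDiff_snd.sub contDiff_const).norm_sq ℝ

lemma cont_dt {φ : ℝ → EN N → ℝ} (h : ContDiff ℝ 2 fun q : ℝ × EN N => φ q.1 q.2) :
    Continuous fun q : ℝ × EN N => deriv (fun t => φ t q.2) q.1 := by
  have hd : ∀ q : ℝ × EN N, deriv (fun t => φ t q.2) q.1 =
      fderiv ℝ (fun q : ℝ × EN N => φ q.1 q.2) q (1, 0) := by
    intro q
    have h1 : HasFDerivAt (fun q : ℝ × EN N => φ q.1 q.2) (fderiv ℝ (fun q : ℝ × EN N => φ q.1 q.2) q)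
      (q.1, q.2) := (h.differentiable (by norm_num) _).hasFDerivAt
    have h2 : HasDerivAt (fun t : ℝ => ((t, q.2) : ℝ × EN N)) (1, 0) q.1 :=
      (hasDerivAt_id q.1).prodMk (hasDerivAt_const q.1 q.2)
    exact (h1.comp_hasDerivAt q.1 h2).deriv
  simp only [hd]
  exact (h.continuous_fderiv (by norm_num)).clm_apply continuous_const

lemma diff_t {φ : ℝ → EN N → ℝ} (h : ContDiff ℝ 2 fun q : ℝ × EN N => φ q.1 q.2) (x : EN N) :
    Differentiable ℝ fun t => φ t x :=
  (h.differentiable (by norm_num)).comp (by fun_prop : Differentiable ℝ fun t : ℝ => ((t, x) : ℝ × EN N))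

lemma pen_dt {φ : ℝ → EN N → ℝ} (h : ContDiff ℝ 2 fun q : ℝ × EN N => φ q.1 q.2)
    (κ t₀ : ℝ) (x₀ : EN N) :
    deriv (fun t => pen φ κ t₀ x₀ t x₀) t₀ = deriv (fun t => φ t x₀) t₀ := by
  unfold pen
  have h1 : HasDerivAt (fun t => φ t x₀) (deriv (fun t => φ t x₀) t₀) t₀ :=
    (diff_t h x₀ t₀).hasDerivAt
  have h2 : HasDerivAt (fun t : ℝ => κ * ((t - t₀) ^ 2 + ‖x₀ - x₀‖ ^ 2)) 0 t₀ := by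
    have := ((((hasDerivAt_id t₀).sub_const t₀).pow 2).add_const (‖x₀ - x₀‖ ^ 2)).const_mul κ
    simpa using this
  exact ((h1.fun_add h2).congr_deriv (add_zero _)).deriv

lemma pen_D2 (φ : ℝ → EN N → ℝ) (κ t₀ : ℝ) (x₀ z : EN N) :
    D2 (pen φ κ t₀ x₀ t₀) x₀ z = D2 (φ t₀) x₀ z + κ * ‖z‖ ^ 2 := by
  unfold D2 pen
  rw [add_sub_cancel_left, show x₀ - z - x₀ = -z by abel, norm_neg]
  simp; ring

set_option maxHeartbeats 1000000 in
/-- Stability of the subsolution property, for the penalized test function. -/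
lemma visc_pen (hμ : LevyM μ) (hfc : Continuous fun q : ℝ × EN N × ℝ => f q.1 q.2.1 q.2.2)
    (hL : Lim μ f u) {t₀ : ℝ} {x₀ : EN N} {φ : ℝ → EN N → ℝ}
    (hφ : ContDiff ℝ 2 fun q : ℝ × EN N => φ q.1 q.2) {τ r κ : ℝ} (hτ : 0 < τ)
    (hτ0 : τ < t₀) (hr : 0 < r) (hκ : 0 < κ)
    (hmax : ∀ t x, t ∈ Ioo (t₀ - τ) (t₀ + τ) → x ∈ ball x₀ r →
      u t x - φ t x ≤ u t₀ x₀ - φ t₀ x₀) :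
    deriv (fun t => φ t x₀) t₀ ≤
      (∫ z in {z | ‖z‖ ≤ r / 4}, D2 (φ t₀) x₀ z ∂μ) + κ * (∫ z in {z | ‖z‖ ≤ r / 4}, ‖z‖ ^ 2 ∂μ) +
      (∫ z in {z | r / 4 < ‖z‖}, D2 (u t₀) x₀ z ∂μ) + f t₀ x₀ (u t₀ x₀) := by
  have ht₀ : 0 < t₀ := hτ.trans hτ0
  set T := t₀ + τ with hT
  obtain ⟨M, hM⟩ := hL.2 T (by positivity)
  set e : ℕ → ℝ := fun k => 1 / ((k : ℝ) + 1) with he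
  have he0 : ∀ k, 0 < e k := fun k => by simp only [he]; positivity
  have helim : Tendsto e atTop (nhds 0) := tendsto_one_div_add_atTop_nhds_zero_nat
  choose B V hV hVs using fun k => hM (e k) (he0 k)
  set ψ := pen φ κ t₀ x₀ with hψ
  have hψcd := pen_cd hφ κ t₀ x₀
  set C : Set (ℝ × EN N) := Icc (t₀ - τ / 2) (t₀ + τ / 2) ×ˢ closedBall x₀ (r / 2) with hC
  have hCc : IsCompact C := isCompact_Icc.prod (isCompact_closedBall _ _)
  have hq0C : ((t₀, x₀) : ℝ × EN N) ∈ C :=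
    ⟨⟨by simp only; linarith, by simp only; linarith⟩, mem_closedBall_self (by positivity)⟩
  have hex : ∀ k, ∃ q ∈ C, ∀ q' ∈ C, V k q'.1 q'.2 - ψ q'.1 q'.2 ≤ V k q.1 q.2 - ψ q.1 q.2 := by
    intro k
    obtain ⟨q, hq, hqm⟩ := hCc.exists_isMaxOn (f := fun q : ℝ × EN N => V k q.1 q.2 - ψ q.1 q.2)
      ⟨_, hq0C⟩ ((hV k).cd.continuous.sub hψcd.continuous).continuousOn
    exact ⟨q, hq, fun q' hq' => hqm hq'⟩
  choose q hqC hqmax using hex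
  have hCt : ∀ {p : ℝ × EN N}, p ∈ C → 0 ≤ p.1 ∧ p.1 ≤ T := fun hp => by
    have := hp.1
    constructor <;> linarith [this.1, this.2]
  have hpen : ∀ k, κ * (((q k).1 - t₀) ^ 2 + ‖(q k).2 - x₀‖ ^ 2) ≤ 2 * e k := by
    intro k
    have a1 := hqmax k _ hq0C
    have a2 := hmax (q k).1 (q k).2 ⟨by linarith [(hqC k).1.1], by linarith [(hqC k).1.2]⟩
      (closedBall_subset_ball (by linarith) (hqC k).2)
    have a3 := abs_le.1 (hVs k t₀ x₀ ht₀.le (by linarith))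
    have a4 := abs_le.1 (hVs k (q k).1 (q k).2 (hCt (hqC k)).1 (hCt (hqC k)).2)
    simp only [hψ, pen, sub_self, norm_zero] at a1
    norm_num at a1
    linarith [a3.1, a4.2]
  have hqlim : Tendsto q atTop (nhds (t₀, x₀)) := by
    have hb : Tendsto (fun k => Real.sqrt (2 * e k / κ)) atTop (nhds 0) := by
      have : Tendsto (fun k => 2 * e k / κ) atTop (nhds 0) := by
        simpa using (helim.const_mul 2).div_const κ
      simpa using this.sqrt
    have hs : ∀ k, ((q k).1 - t₀) ^ 2 + ‖(q k).2 - x₀‖ ^ 2 ≤ 2 * e k / κ := fun k => by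
      rw [le_div_iff₀ hκ]; linarith [hpen k]
    rw [tendsto_iff_norm_sub_tendsto_zero]
    refine squeeze_zero (fun _ => norm_nonneg _) (fun k => ?_) hb
    rw [Prod.norm_def]
    refine max_le ?_ ?_
    · apply Real.le_sqrt_of_sq_le
      simp only [Prod.fst_sub, Real.norm_eq_abs, sq_abs]
      linarith [hs k, sq_nonneg ‖(q k).2 - x₀‖]
    · apply Real.le_sqrt_of_sq_le
      simp only [Prod.snd_sub]
      linarith [hs k, sq_nonneg ((q k).1 - t₀)]
  have hq1 : Tendsto (fun k => (q k).1) atTop (nhds t₀) := (continuous_fst.tendsto _).comp hqlim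
  have hq2 : Tendsto (fun k => (q k).2) atTop (nhds x₀) := (continuous_snd.tendsto _).comp hqlim
  have hintg : ∀ᶠ k in atTop, (q k).1 ∈ Ioo (t₀ - τ / 2) (t₀ + τ / 2) ∧ (q k).2 ∈ ball x₀ (r / 4) :=
    (hq1.eventually (Ioo_mem_nhds (by linarith) (by linarith))).and
      (hq2.eventually (ball_mem_nhds _ (by positivity)))
  set S1 : Set (EN N) := {z | ‖z‖ ≤ r / 4} with hS1
  set S2 : Set (EN N) := {z | r / 4 < ‖z‖} with hS2
  have hS1m : MeasurableSet S1 := measurableSet_le measurable_norm measurable_const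
  have hS2m : MeasurableSet S2 := measurableSet_lt measurable_const measurable_norm
  have hS12 : S2 = S1ᶜ := by ext z; simp [hS1, hS2]
  set R := max τ r with hR
  obtain ⟨Cb, hCb0, hCb⟩ := D2_bound_local hψcd t₀ x₀ R
  have hbk : ∀ k z, z ∈ S1 → |D2 (ψ (q k).1) (q k).2 z| ≤ Cb * ‖z‖ ^ 2 := by
    intro k z hz
    refine hCb _ _ _ ?_ ?_ ?_
    · refine le_trans ?_ (le_max_left _ _)
      rw [abs_le]; constructor <;> linarith [(hqC k).1.1, (hqC k).1.2]
    · refine le_trans ?_ (le_max_right _ _)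
      have := (hqC k).2; rw [mem_closedBall, dist_eq_norm] at this; linarith
    · refine le_trans ?_ (le_max_right _ _)
      have : ‖z‖ ≤ r / 4 := hz
      linarith
  have hψD : ∀ t x, Continuous (D2 (ψ t) x) := fun t x => by
    have := hψcd.continuous
    have h1 : Continuous (ψ t) :=
      this.comp (by fun_prop : Continuous fun x : EN N => ((t, x) : ℝ × EN N))
    unfold D2; fun_prop
  have key : ∀ᶠ k in atTop, deriv (fun t => ψ t (q k).2) (q k).1 ≤
      (∫ z in S1, D2 (ψ (q k).1) (q k).2 z ∂μ) + (∫ z in S2, D2 (V k (q k).1) (q k).2 z ∂μ) +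
      f (q k).1 (q k).2 (V k (q k).1 (q k).2) + e k := by
    filter_upwards [hintg] with k hk
    have hdt : deriv (fun t => V k t (q k).2) (q k).1 = deriv (fun t => ψ t (q k).2) (q k).1 := by
      have hlm : IsLocalMax (fun t => V k t (q k).2 - ψ t (q k).2) (q k).1 := by
        filter_upwards [Ioo_mem_nhds hk.1.1 hk.1.2] with t ht
        exact hqmax k (t, (q k).2) ⟨⟨ht.1.le, ht.2.le⟩, (hqC k).2⟩
      have := hlm.deriv_eq_zero
      rw [deriv_fun_sub (diff_t (hV k).cd _ _) (diff_t hψcd _ _)] at this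
      linarith
    have heq := (abs_le.1 ((hV k).eq (q k).1 (q k).2 (hCt (hqC k)).1 (hCt (hqC k)).2)).2
    have hDi := (hV k).D2_int hμ (q k).1 (q k).2
    have hsplit : Aop μ (V k (q k).1) (q k).2 = (∫ z in S1, D2 (V k (q k).1) (q k).2 z ∂μ) +
        (∫ z in S2, D2 (V k (q k).1) (q k).2 z ∂μ) := by
      unfold Aop; rw [hS12, integral_add_compl hS1m hDi]
    have hle : (∫ z in S1, D2 (V k (q k).1) (q k).2 z ∂μ) ≤
        ∫ z in S1, D2 (ψ (q k).1) (q k).2 z ∂μ := by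
      refine setIntegral_mono_on hDi.integrableOn ?_ hS1m ?_
      · refine ((setint_sq hμ (r / 4)).const_mul Cb).mono' (hψD _ _).aestronglyMeasurable ?_
        exact (ae_restrict_iff' hS1m).2 (Eventually.of_forall fun z hz => hbk k z hz)
      · intro z hz
        have hz' : ‖z‖ ≤ r / 4 := hz
        have hkb := hk.2
        rw [mem_ball, dist_eq_norm] at hkb
        have m1 := hqmax k ((q k).1, (q k).2 + z) ⟨(hqC k).1, by
          simp only [mem_closedBall, dist_eq_norm]
          rw [show (q k).2 + z - x₀ = ((q k).2 - x₀) + z by abel]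
          exact (norm_add_le _ _).trans (by linarith)⟩
        have m2 := hqmax k ((q k).1, (q k).2 - z) ⟨(hqC k).1, by
          simp only [mem_closedBall, dist_eq_norm]
          rw [show (q k).2 - z - x₀ = ((q k).2 - x₀) - z by abel]
          exact (norm_sub_le _ _).trans (by linarith)⟩
        simp only at m1 m2
        unfold D2; linarith
    linarith
  -- passage to the limit in each term
  have hucont : ∀ z : EN N, Tendsto (fun k => V k (q k).1 ((q k).2 + z)) atTop
      (nhds (u t₀ (x₀ + z))) := by
    intro z
    have h1 : Tendsto (fun k => u (q k).1 ((q k).2 + z)) atTop (nhds (u t₀ (x₀ + z))) := by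
      have hc := hL.1 (t₀, x₀ + z) ⟨ht₀.le, mem_univ _⟩
      refine hc.tendsto.comp (tendsto_nhdsWithin_iff.2 ⟨?_, ?_⟩)
        (f := fun k => (((q k).1, (q k).2 + z) : ℝ × EN N))
      · exact hq1.prodMk_nhds (hq2.add_const z)
      · exact Eventually.of_forall fun k => ⟨(hCt (hqC k)).1, mem_univ _⟩
    have h2 : Tendsto (fun k => V k (q k).1 ((q k).2 + z) - u (q k).1 ((q k).2 + z)) atTop
        (nhds 0) := by
      refine squeeze_zero_norm (fun k => ?_) helim
      exact hVs k _ _ (hCt (hqC k)).1 (hCt (hqC k)).2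
    simpa using h2.add h1
  have l1 : Tendsto (fun k => deriv (fun t => ψ t (q k).2) (q k).1) atTop
      (nhds (deriv (fun t => φ t x₀) t₀)) := by
    rw [← pen_dt hφ κ t₀ x₀]
    exact ((cont_dt hψcd).tendsto (t₀, x₀)).comp hqlim
  have l2 : Tendsto (fun k => ∫ z in S1, D2 (ψ (q k).1) (q k).2 z ∂μ) atTop
      (nhds (∫ z in S1, D2 (ψ t₀) x₀ z ∂μ)) := by
    refine tendsto_integral_of_dominated_convergence (fun z => Cb * ‖z‖ ^ 2)
      (fun k => (hψD _ _).aestronglyMeasurable) ((setint_sq hμ (r / 4)).const_mul Cb)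
      (fun k => (ae_restrict_iff' hS1m).2 (Eventually.of_forall fun z hz => hbk k z hz))
      (Eventually.of_forall fun z => ?_)
    have hc : Continuous fun q : ℝ × EN N => D2 (ψ q.1) q.2 z := by
      have := hψcd.continuous
      unfold D2
      have e1 : Continuous fun q : ℝ × EN N => ψ q.1 (q.2 + z) :=
        this.comp (by fun_prop : Continuous fun q : ℝ × EN N => (q.1, q.2 + z))
      have e2 : Continuous fun q : ℝ × EN N => ψ q.1 (q.2 - z) :=
        this.comp (by fun_prop : Continuous fun q : ℝ × EN N => (q.1, q.2 - z))
      exact ((e1.add e2).div_const 2).sub this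
    exact (hc.tendsto (t₀, x₀)).comp hqlim
  have l3 : Tendsto (fun k => ∫ z in S2, D2 (V k (q k).1) (q k).2 z ∂μ) atTop
      (nhds (∫ z in S2, D2 (u t₀) x₀ z ∂μ)) := by
    have hfin : IsFiniteMeasure (μ.restrict S2) :=
      ⟨by rw [Measure.restrict_apply_univ]; exact finite_far hμ (by positivity)⟩
    refine tendsto_integral_of_dominated_convergence (fun z => 2 * M)
      (fun k => ((hV k).D2_int hμ _ _).aestronglyMeasurable.restrict) (integrable_const _)
      (fun k => Eventually.of_forall fun z => ?_) (Eventually.of_forall fun z => ?_)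
    · have a1 := abs_le.1 ((hV k).bdd (q k).1 ((q k).2 + z))
      have a2 := abs_le.1 ((hV k).bdd (q k).1 ((q k).2 - z))
      have a3 := abs_le.1 ((hV k).bdd (q k).1 (q k).2)
      unfold D2
      rw [Real.norm_eq_abs, abs_le]
      constructor <;> linarith [a1.1, a1.2, a2.1, a2.2, a3.1, a3.2]
    · have b1 := hucont z
      have b2 := hucont (-z)
      have b3 := hucont 0
      simp only [← sub_eq_add_neg, add_zero] at b2 b3
      unfold D2
      exact ((b1.add b2).div_const 2).sub b3
  have l4 : Tendsto (fun k => f (q k).1 (q k).2 (V k (q k).1 (q k).2)) atTop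
      (nhds (f t₀ x₀ (u t₀ x₀))) := by
    have b3 := hucont 0
    simp only [add_zero] at b3
    exact (hfc.tendsto (t₀, x₀, u t₀ x₀)).comp (hq1.prodMk_nhds (hq2.prodMk_nhds b3))
  have hfinal := le_of_tendsto_of_tendsto l1 (((l2.add l3).add l4).add helim) key
  have hψint : (∫ z in S1, D2 (ψ t₀) x₀ z ∂μ) =
      (∫ z in S1, D2 (φ t₀) x₀ z ∂μ) + κ * (∫ z in S1, ‖z‖ ^ 2 ∂μ) := by
    obtain ⟨C', hC'0, hC'⟩ := D2_bound_local hφ t₀ x₀ r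
    have hφD : Continuous (D2 (φ t₀) x₀) := by
      have h1 : Continuous (φ t₀) :=
        hφ.continuous.comp (by fun_prop : Continuous fun x : EN N => ((t₀, x) : ℝ × EN N))
      unfold D2; fun_prop
    have hi : IntegrableOn (D2 (φ t₀) x₀) S1 μ := by
      refine ((setint_sq hμ (r / 4)).const_mul C').mono' hφD.aestronglyMeasurable ?_
      refine (ae_restrict_iff' hS1m).2 (Eventually.of_forall fun z hz => ?_)
      have hz' : ‖z‖ ≤ r / 4 := hz
      exact hC' t₀ x₀ z (by simpa using hr.le) (by simpa using hr.le) (by linarith)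
    rw [← integral_const_mul, ← integral_add hi ((setint_sq hμ (r / 4)).const_mul κ)]
    simp only [hψ, pen_D2]
  rw [hψint] at hfinal
  linarith

/-- The subsolution inequality for a limit of smooth approximate solutions. -/
lemma visc_sub (hμ : LevyM μ) (hfc : Continuous fun q : ℝ × EN N × ℝ => f q.1 q.2.1 q.2.2)
    (hL : Lim μ f u) {t₀ : ℝ} {x₀ : EN N} {φ : ℝ → EN N → ℝ}
    (hφ : ContDiff ℝ 2 fun q : ℝ × EN N => φ q.1 q.2) {τ r : ℝ} (hτ : 0 < τ)
    (hτ0 : τ < t₀) (hr : 0 < r)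
    (hmax : ∀ t x, t ∈ Ioo (t₀ - τ) (t₀ + τ) → x ∈ ball x₀ r →
      u t x - φ t x ≤ u t₀ x₀ - φ t₀ x₀) :
    deriv (fun t => φ t x₀) t₀ ≤
      (∫ z in {z | ‖z‖ ≤ r}, D2 (φ t₀) x₀ z ∂μ) +
      (∫ z in {z | r < ‖z‖}, D2 (u t₀) x₀ z ∂μ) + f t₀ x₀ (u t₀ x₀) := by
  have ht₀ : 0 < t₀ := hτ.trans hτ0
  have hlim : deriv (fun t => φ t x₀) t₀ ≤ (∫ z in {z | ‖z‖ ≤ r / 4}, D2 (φ t₀) x₀ z ∂μ) +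
      (∫ z in {z | r / 4 < ‖z‖}, D2 (u t₀) x₀ z ∂μ) + f t₀ x₀ (u t₀ x₀) := by
    have hI : 0 ≤ ∫ z in {z : EN N | ‖z‖ ≤ r / 4}, ‖z‖ ^ 2 ∂μ := integral_nonneg fun z => by positivity
    set I := ∫ z in {z : EN N | ‖z‖ ≤ r / 4}, ‖z‖ ^ 2 ∂μ
    refine le_of_forall_pos_le_add fun ε hε => ?_
    have := visc_pen hμ hfc hL hφ hτ hτ0 hr (κ := ε / (I + 1)) (by positivity) hmax
    have h2 : ε / (I + 1) * I ≤ ε := by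
      rw [div_mul_eq_mul_div, div_le_iff₀ (by positivity)]; nlinarith
    linarith
  have hucx := hL.contx ht₀.le
  have hφx : Continuous (φ t₀) :=
    hφ.continuous.comp (by fun_prop : Continuous fun x : EN N => ((t₀, x) : ℝ × EN N))
  have huD : Continuous (D2 (u t₀) x₀) := by unfold D2; fun_prop
  have hφD : Continuous (D2 (φ t₀) x₀) := by unfold D2; fun_prop
  obtain ⟨Cu, hCu⟩ := hL.bdd t₀ ht₀.le
  have hui : ∀ {ρ : ℝ}, 0 < ρ → IntegrableOn (D2 (u t₀) x₀) {z | ρ < ‖z‖} μ := fun hρ => by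
    have hfin : IsFiniteMeasure (μ.restrict {z : EN N | _ < ‖z‖}) :=
      ⟨by rw [Measure.restrict_apply_univ]; exact finite_far hμ hρ⟩
    refine Integrable.of_bound huD.aestronglyMeasurable (2 * Cu) (Eventually.of_forall fun z => ?_)
    have a1 := abs_le.1 (hCu t₀ (x₀ + z) ht₀.le le_rfl)
    have a2 := abs_le.1 (hCu t₀ (x₀ - z) ht₀.le le_rfl)
    have a3 := abs_le.1 (hCu t₀ x₀ ht₀.le le_rfl)
    unfold D2
    rw [Real.norm_eq_abs, abs_le]
    constructor <;> linarith [a1.1, a1.2, a2.1, a2.2, a3.1, a3.2]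
  obtain ⟨C', hC'0, hC'⟩ := D2_bound_local hφ t₀ x₀ r
  have hSm : ∀ ρ : ℝ, MeasurableSet {z : EN N | ‖z‖ ≤ ρ} := fun ρ =>
    measurableSet_le measurable_norm measurable_const
  have hSm' : ∀ ρ : ℝ, MeasurableSet {z : EN N | ρ < ‖z‖} := fun ρ =>
    measurableSet_lt measurable_const measurable_norm
  have hφi : IntegrableOn (D2 (φ t₀) x₀) {z | ‖z‖ ≤ r} μ := by
    refine ((setint_sq hμ r).const_mul C').mono' hφD.aestronglyMeasurable ?_
    refine (ae_restrict_iff' (hSm r)).2 (Eventually.of_forall fun z hz => ?_)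
    exact hC' t₀ x₀ z (by simpa using hr.le) (by simpa using hr.le) hz
  have hDle : ∀ z : EN N, ‖z‖ ≤ r → D2 (u t₀) x₀ z ≤ D2 (φ t₀) x₀ z := by
    have hcl : ∀ z ∈ closure (ball (0 : EN N) r), D2 (u t₀) x₀ z ≤ D2 (φ t₀) x₀ z := by
      intro z hz
      refine le_on_closure (f := D2 (u t₀) x₀) (g := D2 (φ t₀) x₀) ?_ huD.continuousOn
        hφD.continuousOn hz
      intro z hz
      rw [mem_ball_zero_iff] at hz
      have m1 := hmax t₀ (x₀ + z) ⟨by linarith, by linarith⟩ (by simpa [dist_eq_norm] using hz)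
      have m2 := hmax t₀ (x₀ - z) ⟨by linarith, by linarith⟩ (by simpa [dist_eq_norm] using hz)
      unfold D2; linarith
    intro z hz
    refine hcl z ?_
    rw [closure_ball _ hr.ne']
    simpa using hz
  set A : Set (EN N) := {z | r / 4 < ‖z‖ ∧ ‖z‖ ≤ r} with hA
  have hAm : MeasurableSet A := (hSm' _).inter (hSm _)
  have e1 : ∫ z in {z | r / 4 < ‖z‖}, D2 (u t₀) x₀ z ∂μ =
      (∫ z in A, D2 (u t₀) x₀ z ∂μ) + ∫ z in {z | r < ‖z‖}, D2 (u t₀) x₀ z ∂μ := by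
    rw [← setIntegral_union _ (hSm' r)]
    · congr 2; ext z
      simp only [hA, mem_union, mem_ofPred_eq]
      constructor
      · intro h; rcases le_or_gt ‖z‖ r with h' | h'
        · exact Or.inl ⟨h, h'⟩
        · exact Or.inr h'
      · rintro (h | h)
        · exact h.1
        · linarith
    · exact (hui (show 0 < r / 4 by positivity)).mono_set fun z hz => hz.1
    · exact hui hr
    · rw [Set.disjoint_left]; intro z hz hz'
      have h1 : ‖z‖ ≤ r := hz.2
      have h2 : r < ‖z‖ := hz'
      linarith
  have e2 : ∫ z in {z | ‖z‖ ≤ r}, D2 (φ t₀) x₀ z ∂μ =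
      (∫ z in {z | ‖z‖ ≤ r / 4}, D2 (φ t₀) x₀ z ∂μ) + ∫ z in A, D2 (φ t₀) x₀ z ∂μ := by
    rw [← setIntegral_union _ hAm]
    · congr 2; ext z
      simp only [hA, mem_union, mem_ofPred_eq]
      constructor
      · intro h; rcases le_or_gt ‖z‖ (r / 4) with h' | h'
        · exact Or.inl h'
        · exact Or.inr ⟨h', h⟩
      · rintro (h | h)
        · linarith
        · exact h.2
    · exact hφi.mono_set fun z hz => by
        have : ‖z‖ ≤ r / 4 := hz
        simp only [mem_ofPred_eq]; linarith
    · exact hφi.mono_set fun z hz => hz.2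
    · rw [Set.disjoint_left]; intro z hz hz'
      have h1 : ‖z‖ ≤ r / 4 := hz
      have h2 : r / 4 < ‖z‖ := hz'.1
      linarith
  have e3 : ∫ z in A, D2 (u t₀) x₀ z ∂μ ≤ ∫ z in A, D2 (φ t₀) x₀ z ∂μ :=
    setIntegral_mono_on ((hui (show 0 < r / 4 by positivity)).mono_set fun z hz => hz.1)
      (hφi.mono_set fun z hz => hz.2) hAm fun z hz => hDle z hz.2
  rw [e2]; rw [e1] at hlim
  linarith

end

/-! ### Solutions of the cell problem -/

section
variable {N : ℕ} {s : ℝ} {g : EN N → ℝ}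

lemma levyI1_eq (hN : 1 ≤ N) (hs : s ∈ Ioo (0 : ℝ) 1) (hg : H1 N g) {φ : EN N → ℝ}
    (hφ : ContDiff ℝ 2 φ) {r : ℝ} (hr : 0 < r) (x : EN N) :
    levyI1 N s g φ r x = ∫ z in {z | ‖z‖ ≤ r}, D2 φ x z ∂levyMeas N s g := by
  have hμ := levyMeas_LevyM hN hs hg
  have hSm : MeasurableSet {z : EN N | ‖z‖ ≤ r} := measurableSet_le measurable_norm measurable_const
  obtain ⟨C, -, hC⟩ := taylor_on_ball hφ x r
  have hc := hφ.continuous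
  have hi : IntegrableOn (fun z => φ (x + z) - φ x - fderiv ℝ φ x z) {z | ‖z‖ ≤ r}
      (levyMeas N s g) := by
    refine ((setint_sq hμ r).const_mul C).mono'
      (by fun_prop : Continuous fun z => φ (x + z) - φ x - fderiv ℝ φ x z).aestronglyMeasurable ?_
    refine (ae_restrict_iff' hSm).2 (Eventually.of_forall fun z hz => ?_)
    exact hC x z (mem_closedBall_self hr.le) (by simpa [dist_eq_norm] using hz)
  unfold levyI1
  rw [← integral_levyMeas hN hs hg hSm, sym_int hμ (fun z => by simp) hi]
  refine integral_congr_ae (Eventually.of_forall fun z => ?_)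
  simp only [D2, map_neg, ← sub_eq_add_neg]
  ring

lemma levyI2_eq (hN : 1 ≤ N) (hs : s ∈ Ioo (0 : ℝ) 1) (hg : H1 N g) {u : EN N → ℝ}
    (hu : Continuous u) {M : ℝ} (hM : ∀ x, |u x| ≤ M) {r : ℝ} (hr : 0 < r) (x : EN N) :
    levyI2 N s g u r x = ∫ z in {z | r < ‖z‖}, D2 u x z ∂levyMeas N s g := by
  have hμ := levyMeas_LevyM hN hs hg
  have hSm : MeasurableSet {z : EN N | r < ‖z‖} := measurableSet_lt measurable_const measurable_norm
  have hi : IntegrableOn (fun z => u (x + z) - u x) {z | r < ‖z‖} (levyMeas N s g) := by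
    have hfin : IsFiniteMeasure ((levyMeas N s g).restrict {z : EN N | r < ‖z‖}) :=
      ⟨by rw [Measure.restrict_apply_univ]; exact finite_far hμ hr⟩
    refine Integrable.of_bound (by fun_prop : Continuous fun z => u (x + z) - u x).aestronglyMeasurable
      (2 * M) (Eventually.of_forall fun z => ?_)
    have a1 := abs_le.1 (hM (x + z)); have a2 := abs_le.1 (hM x)
    rw [Real.norm_eq_abs, abs_le]
    constructor <;> linarith [a1.1, a1.2, a2.1, a2.2]
  unfold levyI2
  rw [← integral_levyMeas hN hs hg hSm, sym_int hμ (fun z => by simp) hi]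
  refine integral_congr_ae (Eventually.of_forall fun z => ?_)
  simp only [D2, ← sub_eq_add_neg]
  ring

/-- The zeroth order nonlinearity `L - W'(v + p·y) + σ(τ,y)` of the cell problem. -/
noncomputable def cellf (W : ℝ → ℝ) (σ : ℝ → EN N → ℝ) (p : EN N) (L : ℝ)
    (τ : ℝ) (y : EN N) (v : ℝ) : ℝ :=
  L - deriv W (v + ⟪p, y⟫) + σ τ y

variable {W : ℝ → ℝ} {σ : ℝ → EN N → ℝ}

lemma cd_x {φ : ℝ → EN N → ℝ} (h : ContDiff ℝ 2 fun q : ℝ × EN N => φ q.1 q.2) (t : ℝ) :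
    ContDiff ℝ 2 fun x => φ t x :=
  h.comp (by fun_prop : ContDiff ℝ 2 fun x : EN N => ((t, x) : ℝ × EN N))

lemma Lim_IsSol (hN : 1 ≤ N) (hs : s ∈ Ioo (0 : ℝ) 1) (hg : H1 N g) {p : EN N} {L : ℝ}
    {u : ℝ → EN N → ℝ}
    (hfc : Continuous fun q : ℝ × EN N × ℝ => cellf W σ p L q.1 q.2.1 q.2.2)
    (hL : Lim (levyMeas N s g) (cellf W σ p L) u) :
    IsSol N s g (cellF N W σ p L) (fun _ => 0) u := by
  have hμ := levyMeas_LevyM hN hs hg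
  have hLB : LocBddPos N u := fun T hT => by
    obtain ⟨M, hM⟩ := hL.bdd T hT.le
    exact ⟨M, fun t ht x => hM t x ht.1.le ht.2⟩
  refine ⟨hL.1, ⟨hL.1.upperSemicontinuousOn, hLB, fun x => (hL.zero x).le, ?_⟩,
    ⟨hL.1.lowerSemicontinuousOn, hLB, fun x => (hL.zero x).ge, ?_⟩⟩
  · intro t₀ x₀ ht₀ φ hφ τ r hτ hτ0 hr hmax
    obtain ⟨M, hM⟩ := hL.bdd t₀ ht₀.le
    have h := visc_sub hμ hfc hL hφ hτ hτ0 hr hmax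
    rw [levyI1_eq hN hs hg (cd_x hφ t₀) hr,
      levyI2_eq hN hs hg (hL.contx ht₀.le) (fun x => hM t₀ x ht₀.le le_rfl) hr]
    unfold cellf at h
    unfold cellF
    linarith
  · intro t₀ x₀ ht₀ φ hφ τ r hτ hτ0 hr hmin
    obtain ⟨M, hM⟩ := hL.bdd t₀ ht₀.le
    have hfc' : Continuous fun q : ℝ × EN N × ℝ => -cellf W σ p L q.1 q.2.1 (-q.2.2) :=
      (hfc.comp (by fun_prop : Continuous fun q : ℝ × EN N × ℝ => (q.1, q.2.1, -q.2.2))).neg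
    have h := visc_sub (φ := fun t x => -φ t x) hμ hfc' hL.neg hφ.neg hτ hτ0 hr
      (fun t x ht hx => by linarith [hmin t x ht hx])
    simp only [D2_neg, integral_neg, deriv.fun_neg, neg_neg] at h
    rw [levyI1_eq hN hs hg (cd_x hφ t₀) hr,
      levyI2_eq hN hs hg (hL.contx ht₀.le) (fun x => hM t₀ x ht₀.le le_rfl) hr]
    unfold cellf at h
    unfold cellF
    linarith

end

/-! ### Uniqueness -/

section
variable {N : ℕ} {μ : Measure (EN N)} {f : ℝ → EN N → ℝ → ℝ}

/-- Smooth cut-offs vanishing near a given ball, equal to `1` at infinity, on which the Lévy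
operator is uniformly small. -/
lemma cutoff_exists (hμ : LevyM μ) {δ : ℝ} (hδ : 0 < δ) (ρ : ℝ) :
    ∃ χ : EN N → ℝ, ContDiff ℝ 2 χ ∧ (∀ x, 0 ≤ χ x) ∧ (∀ x, ‖x‖ ≤ ρ → χ x = 0) ∧
      (∃ R, ∀ x, R ≤ ‖x‖ → χ x = 1) ∧ (∀ x, Integrable (D2 χ x) μ) ∧ ∀ x, Aop μ χ x ≤ δ := by
  let b : ContDiffBump (0 : EN N) := ⟨1, 2, one_pos, by norm_num⟩
  have hb : ContDiff ℝ 2 (b : EN N → ℝ) := b.contDiff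
  obtain ⟨C, hC0, hC⟩ := taylor_of_compactSupport hb b.hasCompactSupport
  have hbD : ∀ x z : EN N, |D2 b x z| ≤ C * ‖z‖ ^ 2 := by
    intro x z
    have h1 := hC x z
    have h2 := hC x (-z)
    rw [norm_neg, map_neg, ← sub_eq_add_neg] at h2
    unfold D2
    rw [abs_le] at h1 h2 ⊢
    constructor <;> linarith [h1.1, h1.2, h2.1, h2.2]
  have hbD2 : ∀ x z : EN N, |D2 b x z| ≤ 1 := by
    intro x z
    unfold D2
    rw [abs_le]
    constructor <;> linarith [b.nonneg (x := x), b.le_one (x := x), b.nonneg (x := x + z),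
      b.le_one (x := x + z), b.nonneg (x := x - z), b.le_one (x := x - z)]
  set χ : ℕ → EN N → ℝ := fun k x => 1 - b (((k : ℝ) + 1)⁻¹ • x) with hχ
  have hχD : ∀ k x z, D2 (χ k) x z = -D2 b (((k : ℝ) + 1)⁻¹ • x) (((k : ℝ) + 1)⁻¹ • z) := by
    intro k x z
    simp only [D2, hχ, smul_add, smul_sub]; ring
  set G : ℕ → EN N → ℝ := fun k z => min 1 (C * (((k : ℝ) + 1)⁻¹ ^ 2 * ‖z‖ ^ 2)) with hG
  have hDG : ∀ k x z, |D2 (χ k) x z| ≤ G k z := by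
    intro k x z
    rw [hχD, abs_neg]
    refine le_min (hbD2 _ _) ((hbD _ _).trans_eq ?_)
    rw [norm_smul, mul_pow, Real.norm_of_nonneg (by positivity)]
  have hG0 : ∀ k z, 0 ≤ G k z := fun k z => by simp only [hG]; positivity
  have hGb : ∀ k z, G k z ≤ max 1 C * min 1 (‖z‖ ^ 2) := by
    intro k z
    have hk : ((k : ℝ) + 1)⁻¹ ^ 2 ≤ 1 :=
      pow_le_one₀ (by positivity) (inv_le_one_of_one_le₀ (by linarith [k.cast_nonneg (α := ℝ)]))
    rcases le_total (‖z‖ ^ 2) 1 with h | h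
    · rw [min_eq_right h]
      refine (min_le_right _ _).trans ?_
      have : ((k : ℝ) + 1)⁻¹ ^ 2 * ‖z‖ ^ 2 ≤ ‖z‖ ^ 2 := mul_le_of_le_one_left (by positivity) hk
      exact mul_le_mul (le_max_right _ _) this (by positivity) (by positivity)
    · rw [min_eq_left h, mul_one]
      exact (min_le_left _ _).trans (le_max_left _ _)
  have hGc : ∀ k, Continuous (G k) := fun k => by simp only [hG]; fun_prop
  have hGi : ∀ k, Integrable (G k) μ := fun k => by
    refine (hμ.int.const_mul (max 1 C)).mono' (hGc k).aestronglyMeasurable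
      (Eventually.of_forall fun z => ?_)
    rw [Real.norm_of_nonneg (hG0 k z)]; exact hGb k z
  have hGlim : Tendsto (fun k => ∫ z, G k z ∂μ) atTop (nhds (∫ z : EN N, (0 : ℝ) ∂μ)) := by
    refine tendsto_integral_of_dominated_convergence (fun z => max 1 C * min 1 (‖z‖ ^ 2))
      (fun k => (hGc k).aestronglyMeasurable) (hμ.int.const_mul (max 1 C))
      (fun k => Eventually.of_forall fun z => ?_) (Eventually.of_forall fun z => ?_)
    · rw [Real.norm_of_nonneg (hG0 k z)]; exact hGb k z
    · have h1 : Tendsto (fun k : ℕ => ((k : ℝ) + 1)⁻¹) atTop (nhds 0) := by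
        simpa using tendsto_one_div_add_atTop_nhds_zero_nat (𝕜 := ℝ)
      have h2 : Tendsto (fun k : ℕ => C * (((k : ℝ) + 1)⁻¹ ^ 2 * ‖z‖ ^ 2)) atTop (nhds 0) := by
        simpa using ((h1.pow 2).mul_const (‖z‖ ^ 2)).const_mul C
      exact squeeze_zero (fun k => hG0 k z) (fun k => min_le_right _ _) h2
  rw [integral_zero] at hGlim
  obtain ⟨k, hk1, hk2⟩ := ((hGlim.eventually (Iio_mem_nhds hδ)).and
    (tendsto_natCast_atTop_atTop.eventually (eventually_ge_atTop ρ))).exists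
  have hcd : ContDiff ℝ 2 (χ k) :=
    contDiff_const.sub (hb.comp (contDiff_const_smul _))
  have hDi : ∀ x, Integrable (D2 (χ k) x) μ := fun x => by
    have hc := hcd.continuous
    refine (hGi k).mono' (by unfold D2; fun_prop : Continuous (D2 (χ k) x)).aestronglyMeasurable
      (Eventually.of_forall fun z => hDG k x z)
  refine ⟨χ k, hcd, fun x => by linarith [b.le_one (x := ((k : ℝ) + 1)⁻¹ • x)], ?_,
    ⟨2 * (k + 1), ?_⟩, hDi, fun x => ?_⟩
  · intro x hx
    have : b (((k : ℝ) + 1)⁻¹ • x) = 1 := b.one_of_mem_closedBall (by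
      rw [mem_closedBall_zero_iff, norm_smul, Real.norm_of_nonneg (by positivity),
        inv_mul_le_iff₀ (by positivity)]
      change _ ≤ ((k : ℝ) + 1) * 1
      linarith)
    simp only [hχ, this, sub_self]
  · intro x hx
    have : b (((k : ℝ) + 1)⁻¹ • x) = 0 := b.zero_of_le_dist (by
      rw [dist_zero_right, norm_smul, Real.norm_of_nonneg (by positivity),
        le_inv_mul_iff₀ (by positivity)]
      change ((k : ℝ) + 1) * 2 ≤ _
      linarith)
    simp only [hχ, this, sub_zero]
  · refine (integral_mono (hDi x) (hGi k) fun z => (le_abs_self _).trans (hDG k x z)).trans ?_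
    exact (le_of_lt hk1)

/-- The viscosity subsolution inequality, written with second order increments. -/
def ViscSub (μ : Measure (EN N)) (f : ℝ → EN N → ℝ → ℝ) (w : ℝ → EN N → ℝ) : Prop :=
  ∀ (t₀ : ℝ) (x₀ : EN N), 0 < t₀ →
    ∀ (φ : ℝ → EN N → ℝ), ContDiff ℝ 2 (fun q : ℝ × EN N => φ q.1 q.2) →
    ∀ τ r : ℝ, 0 < τ → τ < t₀ → 0 < r →
    (∀ t x, t ∈ Ioo (t₀ - τ) (t₀ + τ) → x ∈ ball x₀ r →
      w t x - φ t x ≤ w t₀ x₀ - φ t₀ x₀) →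
    deriv (fun t => φ t x₀) t₀ ≤
      (∫ z in {z | ‖z‖ ≤ r}, D2 (φ t₀) x₀ z ∂μ) +
      (∫ z in {z | r < ‖z‖}, D2 (w t₀) x₀ z ∂μ) + f t₀ x₀ (w t₀ x₀)

set_option maxHeartbeats 1000000 in
/-- A continuous viscosity subsolution lies below any smooth approximate solution, up to a multiple
of the error `η`. The maximum of `e^{-κt}(w - V)` is localized in space by a cut-off and kept
away from the final time by the fast growing term `α e^{n(t-t₁)}`. -/
lemma sub_le_near (hμ : LevyM μ) {K η M B t₁ : ℝ} (hK : 0 ≤ K)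
    (hlip : ∀ t x v v', |f t x v - f t x v'| ≤ K * |v - v'|) {w : ℝ → EN N → ℝ}
    (hwc : ContinuousOn (fun q : ℝ × EN N => w q.1 q.2) (Ici 0 ×ˢ univ))
    {Mw : ℝ} (hwb : ∀ t x, 0 ≤ t → t ≤ t₁ + 1 → |w t x| ≤ Mw) (hw0 : ∀ x, w 0 x ≤ 0)
    (hw : ViscSub μ f w) (ht₁ : 0 ≤ t₁) (hη : 0 < η) {V : ℝ → EN N → ℝ}
    (hV : Near μ f (t₁ + 1) η M B V) (x₁ : EN N) :
    w t₁ x₁ ≤ V t₁ x₁ + Real.exp ((K + 1) * t₁) * (2 * η) := by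
  set T := t₁ + 1 with hT
  set κ := K + 1 with hκ
  have hT0 : 0 ≤ T := by linarith
  set M' := Mw + M with hM'
  have hM'0 : 0 ≤ M' := by
    have h1 := (abs_nonneg _).trans (hwb 0 0 le_rfl hT0)
    have h2 := (abs_nonneg _).trans (hV.bdd 0 0)
    linarith
  have hdiff : ∀ t x, 0 ≤ t → t ≤ T → Real.exp (-(κ * t)) * (w t x - V t x) ≤ M' := by
    intro t x h0 h1
    have a1 := abs_le.1 (hwb t x h0 h1); have a2 := abs_le.1 (hV.bdd t x)
    have h3 : w t x - V t x ≤ M' := by linarith [a1.2, a2.1]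
    have h4 : Real.exp (-(κ * t)) ≤ 1 := Real.exp_le_one_iff.2 (by
      have : 0 ≤ κ * t := by positivity
      linarith)
    have h5 := Real.exp_pos (-(κ * t))
    nlinarith
  suffices hα : ∀ α > 0, Real.exp (-(κ * t₁)) * (w t₁ x₁ - V t₁ x₁) ≤ 2 * η + α by
    have h := le_of_forall_pos_le_add hα
    rw [Real.exp_neg, inv_mul_le_iff₀ (Real.exp_pos _)] at h
    linarith
  intro α hα
  obtain ⟨n, hn⟩ := exists_nat_ge (M' / α)
  have hn' : M' ≤ α * Real.exp n := by
    rw [div_le_iff₀ hα] at hn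
    nlinarith [Real.add_one_le_exp (n : ℝ)]
  obtain ⟨χ, hχcd, hχ0, hχz, ⟨R, hχ1⟩, hχi, hχA⟩ := cutoff_exists hμ
    (δ := η / (2 * (3 * M' + 1))) (by positivity) ‖x₁‖
  set Θ : ℝ → EN N → ℝ := fun t x => 2 * η + α * Real.exp (n * (t - t₁)) + 3 * M' * χ x with hΘ
  have hΘη : ∀ t x, 2 * η < Θ t x := fun t x => by
    have h1 : 0 < α * Real.exp (n * (t - t₁)) := by positivity
    have h2 : 0 ≤ 3 * M' * χ x := mul_nonneg (by positivity) (hχ0 x)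
    simp only [hΘ]; linarith
  set G : ℝ × EN N → ℝ := fun q => Real.exp (-(κ * q.1)) * (w q.1 q.2 - V q.1 q.2) - Θ q.1 q.2 with hGd
  have hΘcd : ContDiff ℝ 2 fun q : ℝ × EN N => Θ q.1 q.2 := by
    simp only [hΘ]
    have : ContDiff ℝ 2 fun q : ℝ × EN N => χ q.2 := hχcd.comp contDiff_snd
    fun_prop
  have hGc : ContinuousOn G (Ici 0 ×ˢ univ) := by
    refine ((by fun_prop : Continuous fun q : ℝ × EN N => Real.exp (-(κ * q.1))).continuousOn.mul
      (hwc.sub hV.cd.continuous.continuousOn)).sub hΘcd.continuous.continuousOn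
  by_contra hcon
  push Not at hcon
  set C : Set (ℝ × EN N) := Icc 0 T ×ˢ closedBall 0 (max R ‖x₁‖) with hC
  have hCc : IsCompact C := isCompact_Icc.prod (isCompact_closedBall _ _)
  have hp1 : ((t₁, x₁) : ℝ × EN N) ∈ C :=
    ⟨⟨ht₁, by simp only [hT]; linarith⟩, by rw [mem_closedBall_zero_iff]; exact le_max_right _ _⟩
  obtain ⟨⟨t₀, x₀⟩, hq, hqm⟩ := hCc.exists_isMaxOn (f := G) ⟨_, hp1⟩
    (hGc.mono fun q hq => ⟨hq.1.1, mem_univ _⟩)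
  have hqm' : ∀ q ∈ C, G q ≤ G (t₀, x₀) := fun q hq => hqm hq
  set m := G (t₀, x₀) with hm
  have hm0 : 0 < m := by
    refine lt_of_lt_of_le ?_ (hqm' _ hp1)
    simp only [hGd, hΘ, hχz x₁ le_rfl, sub_self, mul_zero, Real.exp_zero]
    linarith
  have hglob : ∀ t x, 0 ≤ t → t ≤ T → G (t, x) ≤ m := by
    intro t x h0 h1
    by_cases hx : ‖x‖ ≤ max R ‖x₁‖
    · exact hqm' _ ⟨⟨h0, h1⟩, by rw [mem_closedBall_zero_iff]; exact hx⟩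
    · push Not at hx
      have hχx := hχ1 x ((le_max_left _ _).trans hx.le)
      have h2 := hdiff t x h0 h1
      have h3 : 0 < α * Real.exp (n * (t - t₁)) := by positivity
      simp only [hGd, hΘ, hχx]
      linarith
  have ht0 : 0 < t₀ := by
    rcases hq.1.1.eq_or_lt with h | h
    · exfalso
      have h' : t₀ = 0 := h.symm
      have h1 := hw0 x₀; have h2 := abs_le.1 (hV.initial x₀)
      have h3 := hΘη 0 x₀
      simp only [hm, hGd, h', mul_zero, neg_zero, Real.exp_zero, one_mul] at hm0
      linarith [h2.1]
    · exact h
  have ht1 : t₀ < T := by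
    rcases hq.1.2.eq_or_lt with h | h
    · exfalso
      have h' : t₀ = T := h
      have h2 := hdiff t₀ x₀ ht0.le h'.le
      have h3 : 0 ≤ 3 * M' * χ x₀ := mul_nonneg (by positivity) (hχ0 x₀)
      have h4 : (n : ℝ) * (t₀ - t₁) = n := by rw [h', hT]; ring
      simp only [hm, hGd, hΘ, h4] at hm0
      linarith
    · exact h
  set φ : ℝ → EN N → ℝ := fun t x => V t x + Real.exp (κ * t) * (Θ t x + m) with hφ
  have hφcd : ContDiff ℝ 2 fun q : ℝ × EN N => φ q.1 q.2 := by
    simp only [hφ]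
    have := hV.cd
    fun_prop
  have hee : ∀ t, Real.exp (κ * t) * Real.exp (-(κ * t)) = 1 := fun t => by
    rw [← Real.exp_add]; simp
  have hGφ : ∀ t x, w t x - φ t x = Real.exp (κ * t) * (G (t, x) - m) := by
    intro t x
    simp only [hφ, hGd]
    linear_combination (-(w t x - V t x)) * hee t
  have hle : ∀ t x, 0 ≤ t → t ≤ T → w t x ≤ φ t x := by
    intro t x h0 h1
    have h2 := hGφ t x
    have h3 := hglob t x h0 h1
    nlinarith [Real.exp_pos (κ * t)]
  have heq : w t₀ x₀ = φ t₀ x₀ := by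
    have h2 := hGφ t₀ x₀
    rw [← hm, sub_self, mul_zero] at h2
    linarith
  have hkey := hw t₀ x₀ ht0 φ hφcd (min t₀ (T - t₀) / 2) 1
    (by have : 0 < min t₀ (T - t₀) := lt_min ht0 (by linarith)
        linarith)
    (by have := min_le_left t₀ (T - t₀)
        linarith) one_pos
    (by
      intro t x ht _
      have h1 := min_le_left t₀ (T - t₀)
      have h2 := min_le_right t₀ (T - t₀)
      have := hle t x (by linarith [ht.1]) (by linarith [ht.2])
      linarith)
  -- time derivative of the test function
  have hdt : deriv (fun t => φ t x₀) t₀ = deriv (fun t => V t x₀) t₀ +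
      (κ * Real.exp (κ * t₀) * (Θ t₀ x₀ + m) +
        Real.exp (κ * t₀) * (α * (n * Real.exp (n * (t₀ - t₁))))) := by
    have h1 : HasDerivAt (fun t => V t x₀) (deriv (fun t => V t x₀) t₀) t₀ :=
      (diff_t hV.cd x₀ t₀).hasDerivAt
    have h2 : HasDerivAt (fun t : ℝ => Real.exp (κ * t)) (Real.exp (κ * t₀) * (κ * 1)) t₀ :=
      ((hasDerivAt_id t₀).const_mul κ).exp
    have h3 : HasDerivAt (fun t : ℝ => Real.exp (n * (t - t₁)))
        (Real.exp (n * (t₀ - t₁)) * (n * 1)) t₀ :=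
      (((hasDerivAt_id t₀).sub_const t₁).const_mul (n : ℝ)).exp
    have h4 : HasDerivAt (fun t : ℝ => Θ t x₀ + m) (α * (Real.exp (n * (t₀ - t₁)) * (n * 1))) t₀ := by
      simp only [hΘ]
      exact (((h3.const_mul α).const_add (2 * η)).add_const (3 * M' * χ x₀)).add_const m
    refine ((h1.fun_add (h2.fun_mul h4)).congr_deriv ?_).deriv
    ring
  have hφD : ∀ z, D2 (φ t₀) x₀ z = D2 (V t₀) x₀ z + Real.exp (κ * t₀) * (3 * M') * D2 χ x₀ z := by
    intro z; simp only [D2, hφ, hΘ]; ring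
  have hVi := hV.D2_int hμ t₀ x₀
  have hφi : Integrable (D2 (φ t₀) x₀) μ := by
    rw [show D2 (φ t₀) x₀ = fun z => D2 (V t₀) x₀ z + Real.exp (κ * t₀) * (3 * M') * D2 χ x₀ z from
      funext hφD]
    exact hVi.add ((hχi x₀).const_mul _)
  have hφA : (∫ z, D2 (φ t₀) x₀ z ∂μ) = Aop μ (V t₀) x₀ +
      Real.exp (κ * t₀) * (3 * M') * Aop μ χ x₀ := by
    simp only [hφD]
    rw [integral_add hVi ((hχi x₀).const_mul _), integral_const_mul]; rfl
  have hSm : MeasurableSet {z : EN N | ‖z‖ ≤ 1} := measurableSet_le measurable_norm measurable_const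
  have hcompl : {z : EN N | 1 < ‖z‖} = {z : EN N | ‖z‖ ≤ 1}ᶜ := by ext z; simp
  have hwx : Continuous (w t₀) := by
    rw [← continuousOn_univ]
    exact hwc.comp (f := fun x : EN N => ((t₀, x) : ℝ × EN N)) (by fun_prop)
      (fun x _ => ⟨ht0.le, mem_univ _⟩)
  have hwi : IntegrableOn (D2 (w t₀) x₀) {z | 1 < ‖z‖} μ := by
    have hfin : IsFiniteMeasure (μ.restrict {z : EN N | 1 < ‖z‖}) :=
      ⟨by rw [Measure.restrict_apply_univ]; exact finite_far hμ one_pos⟩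
    refine Integrable.of_bound (by unfold D2; fun_prop : Continuous (D2 (w t₀) x₀)).aestronglyMeasurable
      (2 * Mw) (Eventually.of_forall fun z => ?_)
    have a1 := abs_le.1 (hwb t₀ (x₀ + z) ht0.le ht1.le)
    have a2 := abs_le.1 (hwb t₀ (x₀ - z) ht0.le ht1.le)
    have a3 := abs_le.1 (hwb t₀ x₀ ht0.le ht1.le)
    unfold D2
    rw [Real.norm_eq_abs, abs_le]
    constructor <;> linarith [a1.1, a1.2, a2.1, a2.2, a3.1, a3.2]
  have hfar : (∫ z in {z | 1 < ‖z‖}, D2 (w t₀) x₀ z ∂μ) ≤ ∫ z in {z | 1 < ‖z‖}, D2 (φ t₀) x₀ z ∂μ := by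
    refine integral_mono hwi hφi.integrableOn fun z => ?_
    have b1 := hle t₀ (x₀ + z) ht0.le ht1.le
    have b2 := hle t₀ (x₀ - z) ht0.le ht1.le
    unfold D2; linarith
  have hsplit : (∫ z in {z | ‖z‖ ≤ 1}, D2 (φ t₀) x₀ z ∂μ) +
      (∫ z in {z | 1 < ‖z‖}, D2 (φ t₀) x₀ z ∂μ) = ∫ z, D2 (φ t₀) x₀ z ∂μ := by
    rw [hcompl, integral_add_compl hSm hφi]
  have hfl := (abs_le.1 (hlip t₀ x₀ (φ t₀ x₀) (V t₀ x₀))).2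
  have hφV : φ t₀ x₀ - V t₀ x₀ = Real.exp (κ * t₀) * (Θ t₀ x₀ + m) := by simp only [hφ]; ring
  have hE1 : 1 ≤ Real.exp (κ * t₀) := Real.one_le_exp (by positivity)
  have hpos : 0 ≤ Real.exp (κ * t₀) * (Θ t₀ x₀ + m) :=
    mul_nonneg (by positivity) (by linarith [hΘη t₀ x₀])
  rw [hφV, abs_of_nonneg hpos] at hfl
  have hVe := (abs_le.1 (hV.eq t₀ x₀ ht0.le ht1.le)).1
  rw [heq] at hkey
  have hn0 : 0 ≤ Real.exp (κ * t₀) * (α * (n * Real.exp (n * (t₀ - t₁)))) := by positivity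
  have hAχ : 3 * M' * Aop μ χ x₀ ≤ η / 2 := by
    calc 3 * M' * Aop μ χ x₀ ≤ 3 * M' * (η / (2 * (3 * M' + 1))) := by
          gcongr; exact hχA x₀
      _ ≤ (3 * M' + 1) * (η / (2 * (3 * M' + 1))) := by gcongr; linarith
      _ = η / 2 := by field_simp
  have hAχ' : Real.exp (κ * t₀) * (3 * M') * Aop μ χ x₀ ≤ Real.exp (κ * t₀) * (η / 2) := by
    rw [mul_assoc]; gcongr
  have hΘm : Real.exp (κ * t₀) * (2 * η) ≤ Real.exp (κ * t₀) * (Θ t₀ x₀ + m) := by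
    gcongr; linarith [hΘη t₀ x₀]
  have hexp : κ * Real.exp (κ * t₀) * (Θ t₀ x₀ + m) = K * (Real.exp (κ * t₀) * (Θ t₀ x₀ + m)) +
      Real.exp (κ * t₀) * (Θ t₀ x₀ + m) := by rw [hκ]; ring
  nlinarith

lemma ViscSub_le_Lim (hμ : LevyM μ) {K : ℝ} (hK : 0 ≤ K)
    (hlip : ∀ t x v v', |f t x v - f t x v'| ≤ K * |v - v'|) {w u : ℝ → EN N → ℝ}
    (hwc : ContinuousOn (fun q : ℝ × EN N => w q.1 q.2) (Ici 0 ×ˢ univ))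
    (hwb : ∀ T ≥ 0, ∃ M, ∀ t x, 0 ≤ t → t ≤ T → |w t x| ≤ M) (hw0 : ∀ x, w 0 x ≤ 0)
    (hw : ViscSub μ f w) (hu : Lim μ f u) {t : ℝ} (ht : 0 ≤ t) (x : EN N) : w t x ≤ u t x := by
  obtain ⟨M, hM⟩ := hu.2 (t + 1) (by linarith)
  obtain ⟨Mw, hMw⟩ := hwb (t + 1) (by linarith)
  set E := Real.exp ((K + 1) * t)
  have hE : 0 < E := Real.exp_pos _
  refine le_of_forall_pos_le_add fun ε hε => ?_
  obtain ⟨B, V, hV, hs⟩ := hM (ε / (2 * E + 1)) (by positivity)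
  have h1 := sub_le_near hμ hK hlip hwc hMw hw0 hw ht (by positivity) hV x
  have h2 := (abs_le.1 (hs t x ht (by linarith))).2
  have h3 : E * (2 * (ε / (2 * E + 1))) + ε / (2 * E + 1) = ε := by field_simp
  linarith

end

section
variable {N : ℕ} {s : ℝ} {g : EN N → ℝ} {W : ℝ → ℝ} {σ : ℝ → EN N → ℝ}

lemma IsSol_eq_Lim (hN : 1 ≤ N) (hs : s ∈ Ioo (0 : ℝ) 1) (hg : H1 N g) {p : EN N} {L K : ℝ}
    {w u : ℝ → EN N → ℝ} (hK : 0 ≤ K)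
    (hlip : ∀ t x v v', |cellf W σ p L t x v - cellf W σ p L t x v'| ≤ K * |v - v'|)
    (hL : Lim (levyMeas N s g) (cellf W σ p L) u)
    (hw : IsSol N s g (cellF N W σ p L) (fun _ => 0) w) {t : ℝ} (ht : 0 ≤ t) (x : EN N) :
    w t x = u t x := by
  have hμ := levyMeas_LevyM hN hs hg
  have hw0 : ∀ x, w 0 x = 0 := fun x => le_antisymm (hw.2.1.2.2.1 x) (hw.2.2.2.2.1 x)
  have hwb : ∀ T ≥ 0, ∃ M, ∀ t x, 0 ≤ t → t ≤ T → |w t x| ≤ M := by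
    intro T hT
    obtain ⟨M, hM⟩ := hw.2.1.2.1 (T + 1) (by linarith)
    refine ⟨max M 0, fun t x h0 h1 => ?_⟩
    rcases h0.eq_or_lt with h | h
    · rw [← h, hw0, abs_zero]; exact le_max_right _ _
    · exact (hM t ⟨h, by linarith⟩ x).trans (le_max_left _ _)
  have hwx : ∀ t, 0 ≤ t → Continuous (w t) := fun t ht => by
    rw [← continuousOn_univ]
    exact hw.1.comp (f := fun x : EN N => ((t, x) : ℝ × EN N)) (by fun_prop)
      (fun x _ => ⟨ht, mem_univ _⟩)
  refine le_antisymm ?_ ?_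
  · refine ViscSub_le_Lim hμ hK hlip hw.1 hwb (fun x => (hw0 x).le) ?_ hL ht x
    intro t₀ x₀ ht₀ φ hφ τ r hτ hτ0 hr hmax
    obtain ⟨M, hM⟩ := hwb t₀ ht₀.le
    have h := hw.2.1.2.2.2 t₀ x₀ ht₀ φ hφ τ r hτ hτ0 hr hmax
    rw [levyI1_eq hN hs hg (cd_x hφ t₀) hr,
      levyI2_eq hN hs hg (hwx t₀ ht₀.le) (fun x => hM t₀ x ht₀.le le_rfl) hr] at h
    unfold cellF at h
    unfold cellf
    linarith
  · have hlip' : ∀ t x v v', |(-cellf W σ p L t x (-v)) - (-cellf W σ p L t x (-v'))| ≤ K * |v - v'| := by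
      intro t x v v'
      have := hlip t x (-v') (-v)
      rw [show -v' - -v = v - v' by ring] at this
      rwa [show (-cellf W σ p L t x (-v)) - (-cellf W σ p L t x (-v')) =
        cellf W σ p L t x (-v') - cellf W σ p L t x (-v) by ring]
    have := ViscSub_le_Lim (w := fun t x => -w t x) hμ hK hlip' hw.1.neg (fun T hT => by
      obtain ⟨M, hM⟩ := hwb T hT
      exact ⟨M, fun t x h0 h1 => by rw [abs_neg]; exact hM t x h0 h1⟩)
      (fun x => by rw [hw0, neg_zero]) ?_ hL.neg ht x
    · linarith
    intro t₀ x₀ ht₀ φ hφ τ r hτ hτ0 hr hmax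
    obtain ⟨M, hM⟩ := hwb t₀ ht₀.le
    have h := hw.2.2.2.2.2 t₀ x₀ ht₀ (fun t x => -φ t x) hφ.neg τ r hτ hτ0 hr
      (fun t x ht hx => by linarith [hmax t x ht hx])
    rw [levyI1_eq hN hs hg (cd_x hφ t₀).neg hr,
      levyI2_eq hN hs hg (hwx t₀ ht₀.le) (fun x => hM t₀ x ht₀.le le_rfl) hr] at h
    simp only [D2_neg, integral_neg, deriv.fun_neg] at h ⊢
    unfold cellF at h
    unfold cellf
    rw [neg_neg]
    linarith

end

/-! ### Oscillation of the discrete solutions -/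

section
variable {N : ℕ} {μ : Measure (EN N)} {f : ℝ → EN N → ℝ → ℝ} {p : EN N}

/-- An integer vector, seen in `ℝ^N`. -/
noncomputable def intVec (k : Fin N → ℤ) : EN N :=
  (WithLp.equiv 2 (Fin N → ℝ)).symm (fun j => (k j : ℝ))

/-- The periodicity properties of the nonlinearity of the cell problem: `1`-periodic in time and
in `v`, while an integer translation `k` of space amounts to shifting `v` by `p·k`. -/
structure CellPer (f : ℝ → EN N → ℝ → ℝ) (p : EN N) : Prop where
  perv : ∀ t x v, f t x (v + 1) = f t x v
  pert : ∀ t x v, f (t + 1) x v = f t x v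
  perx : ∀ k t x v, f t (x + intVec k) v = f t x (v + ⟪p, intVec k⟫)

lemma CellPer.add_int (hf : CellPer f p) (t : ℝ) (x : EN N) (v : ℝ) (n : ℤ) :
    f t x (v + n) = f t x v := by
  have h : Function.Periodic (f t x) 1 := hf.perv t x
  simpa using h.int_mul n v

lemma CellPer.add_nat (hf : CellPer f p) (t : ℝ) (x : EN N) (v : ℝ) (n : ℕ) :
    f (t + n) x v = f t x v := by
  have h : Function.Periodic (fun t => f t x v) 1 := fun t => hf.pert t x v
  simpa using h.nat_mul n t

lemma intVec_near (Y y : EN N) : ∃ k : Fin N → ℤ, ‖Y + intVec k - y‖ ≤ N := by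
  refine ⟨fun j => -⌊Y j - y j⌋, ?_⟩
  have h1 : ∀ j, ‖(Y + intVec (fun j => -⌊Y j - y j⌋) - y) j‖ ≤ 1 := by
    intro j
    have : (Y + intVec (fun j => -⌊Y j - y j⌋) - y) j = Int.fract (Y j - y j) := by
      simp only [intVec, Int.fract, PiLp.sub_apply, PiLp.add_apply, WithLp.equiv_symm_apply,
        Int.cast_neg]
      ring
    rw [this, Real.norm_of_nonneg (Int.fract_nonneg _)]
    exact (Int.fract_lt_one _).le
  rw [EuclideanSpace.norm_eq]
  apply Real.sqrt_le_iff.2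
  refine ⟨by positivity, ?_⟩
  calc ∑ i, ‖(Y + intVec (fun j => -⌊Y j - y j⌋) - y) i‖ ^ 2 ≤ ∑ _i : Fin N, (1 : ℝ) :=
        Finset.sum_le_sum fun i _ => pow_le_one₀ (norm_nonneg _) (h1 i)
    _ = N := by simp
    _ ≤ (N : ℝ) ^ 2 := by
        rcases Nat.eq_zero_or_pos N with h | h
        · simp [h]
        · have : (1 : ℝ) ≤ N := by exact_mod_cast h
          nlinarith

lemma BC.add_const {u : EN N → ℝ} (hu : BC u) (c : ℝ) : BC fun x => u x + c := by
  obtain ⟨B, hB⟩ := hu.bdd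
  exact ⟨hu.cont.add continuous_const, B + |c|, fun x => (abs_add_le _ _).trans (by linarith [hB x])⟩

lemma BC.translate {u : EN N → ℝ} (hu : BC u) (k : EN N) : BC fun x => u (x + k) := by
  obtain ⟨B, hB⟩ := hu.bdd
  have := hu.cont
  exact ⟨by fun_prop, B, fun x => hB _⟩

variable {Cf K Kx : ℝ}

/-- Order preservation for two sequences following the scheme. -/
lemma scheme_order {ν : Measure (EN N)} [IsFiniteMeasure ν] (hf : FC f Cf K Kx) {h : ℝ}
    (hh : 0 ≤ h) (hcfl : h * (ν.real univ + K) ≤ 1) {u v : ℕ → EN N → ℝ}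
    (hu : ∀ n, BC (u n)) (hv : ∀ n, BC (v n))
    (hu1 : ∀ n x, u (n + 1) x = u n x + h * (Aop ν (u n) x + f (n * h) x (u n x)))
    (hv1 : ∀ n x, v (n + 1) x = v n x + h * (Aop ν (v n) x + f (n * h) x (v n x)))
    (h0 : ∀ x, u 0 x ≤ v 0 x) (n : ℕ) (x : EN N) : u n x ≤ v n x := by
  have := gronwall hh hf.K_nonneg hcfl le_rfl le_rfl n u v (fun n x => f (n * h) x (u n x))
    (fun n x => f (n * h) x (v n x)) hu hv (fun n _ x => (hu1 n x).le) (fun n _ x => (hv1 n x).ge)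
    (fun n _ x => by linarith [(abs_le.1 (hf.lipv (n * h) x (u n x) (v n x))).2])
    (fun x => by simpa using h0 x) n le_rfl x
  simpa using this

lemma scheme_succ (ν : Measure (EN N)) (h : ℝ) (n : ℕ) (x : EN N) :
    scheme ν h f (n + 1) x = scheme ν h f n x + h * (Aop ν (scheme ν h f n) x +
      f (n * h) x (scheme ν h f n x)) := rfl

/-- Integer translations change the discrete solution by at most `1`: up to an additive constant
in `[0,1)`, the translated solution follows the same scheme. -/
lemma scheme_translate {ν : Measure (EN N)} [IsFiniteMeasure ν] (hf : FC f Cf K Kx)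
    (hp : CellPer f p) {h : ℝ} (hh : 0 ≤ h) (hcfl : h * (ν.real univ + K) ≤ 1) (k : Fin N → ℤ)
    (n : ℕ) (x : EN N) : scheme ν h f n x ≤ scheme ν h f n (x + intVec k) + 1 := by
  set a : ℝ := ⟪p, intVec k⟫
  have hu := scheme_BC (μ := ν) hf hh
  have h1 := scheme_order hf hh hcfl (u := scheme ν h f)
    (v := fun n x => scheme ν h f n (x + intVec k) + Int.fract a) hu
    (fun n => ((hu n).translate _).add_const _) (scheme_succ ν h) (fun n x => by
      rw [Aop_add_const (fun x => scheme ν h f n (x + intVec k)), Aop_translate, scheme_succ,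
        hp.perx, show scheme ν h f n (x + intVec k) + a =
          scheme ν h f n (x + intVec k) + Int.fract a + (⌊a⌋ : ℤ) by
            rw [add_assoc, Int.fract_add_floor], hp.add_int]
      ring) (fun x => by simp [scheme, Int.fract_nonneg]) n x
  linarith [Int.fract_lt_one a]

/-- One step of the scheme does not increase the oscillation over distances at most `R` beyond a
threshold `O`. Small jumps from the two points are coupled by taking the same displacement; large
jumps contract the oscillation by the minorization property. -/
lemma osc_step (hμ : LevyM μ) (j : ℕ) {R κ O h : ℝ}
    (hκ : ∀ Y y : EN N, ‖Y - y‖ ≤ R → ∀ (F G : EN N → ℝ) (c : ℝ),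
      Continuous F → Continuous G → (∀ x, 0 ≤ F x) → (∀ x, 0 ≤ G x) → (∀ x, F x + G x = c) →
      κ * c ≤ (∫ z in {z : EN N | 1 < ‖z‖}, F (Y + z) ∂μ) +
        (∫ z in {z : EN N | 1 < ‖z‖}, G (y + z) ∂μ))
    (hO : μ.real {z : EN N | 1 < ‖z‖} + 2 * Cf ≤ κ * (O + 1)) (hh : 0 ≤ h)
    (hcfl : h * (trunc μ j).real univ ≤ 1) {u : EN N → ℝ} (hu : BC u)
    (hosc : ∀ a b, u a - u b ≤ O + 1) (hloc : ∀ Y y, ‖Y - y‖ ≤ R → u Y - u y ≤ O)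
    {a b : ℝ} (ha : |a| ≤ Cf) (hb : |b| ≤ Cf) {Y y : EN N} (hYy : ‖Y - y‖ ≤ R) :
    u Y + h * (Aop (trunc μ j) u Y + a) - (u y + h * (Aop (trunc μ j) u y + b)) ≤ O := by
  have hfin := trunc_finite hμ j
  set S : Set (EN N) := {z | 1 < ‖z‖} with hS
  have hSm : MeasurableSet S := measurableSet_lt measurable_const measurable_norm
  have hres : (trunc μ j).restrict S = μ.restrict S := by
    unfold trunc
    rw [Measure.restrict_restrict hSm]
    congr 1
    refine inter_eq_left.2 fun z hz => ?_
    have hz' : 1 < ‖z‖ := hz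
    have : 1 / ((j : ℝ) + 1) ≤ 1 := by
      rw [div_le_one (by positivity)]; linarith [(Nat.cast_nonneg j : (0:ℝ) ≤ j)]
    simp only [mem_ofPred_eq]; linarith
  have hfinS : IsFiniteMeasure (μ.restrict S) :=
    ⟨by rw [Measure.restrict_apply_univ]; exact finite_far hμ one_pos⟩
  set A : EN N → EN N → ℝ := fun x z => (u (x + z) + u (x - z)) / 2 with hA
  have hAi : ∀ x, Integrable (A x) (trunc μ j) := fun x => hu.integrable_avg x
  obtain ⟨B, hB⟩ := hu.bdd
  have huc := hu.cont
  have hui : ∀ x, IntegrableOn (fun z => u (x + z)) S μ := fun x =>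
    Integrable.of_bound (by fun_prop : Continuous fun z => u (x + z)).aestronglyMeasurable B
      (Eventually.of_forall fun z => hB _)
  have hfar : ∀ x, (∫ z in S, A x z ∂(trunc μ j)) = ∫ z in S, u (x + z) ∂μ := by
    intro x
    rw [hres, sym_int hμ (fun z => by simp [hS]) (hui x)]
    simp only [hA, sub_eq_add_neg]
  -- large jumps
  have hlarge : (∫ z in S, u (Y + z) ∂μ) - (∫ z in S, u (y + z) ∂μ) ≤ (μ.real S - κ) * (O + 1) := by
    set M := ⨆ x, u x with hM
    have hbdd : BddAbove (range u) := ⟨B, by rintro _ ⟨x, rfl⟩; exact (abs_le.1 (hB x)).2⟩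
    have hM1 : ∀ x, u x ≤ M := le_ciSup hbdd
    have hM2 : ∀ x, M ≤ u x + (O + 1) := fun x => ciSup_le fun a => by linarith [hosc a x]
    have := hκ Y y hYy (fun x => M - u x) (fun x => u x - (M - (O + 1))) (O + 1) (by fun_prop)
      (by fun_prop) (fun x => by linarith [hM1 x]) (fun x => by linarith [hM2 x])
      (fun x => by ring)
    rw [integral_sub (integrable_const _) (hui Y), integral_sub (hui y) (integrable_const _),
      integral_const, integral_const] at this
    simp only [measureReal_restrict_apply_univ, smul_eq_mul] at this
    linarith
  -- small jumps
  have hsmall : (∫ z in Sᶜ, A Y z ∂(trunc μ j)) - (∫ z in Sᶜ, A y z ∂(trunc μ j)) ≤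
      (trunc μ j).real Sᶜ * O := by
    rw [← integral_sub (hAi Y).integrableOn (hAi y).integrableOn]
    have : (∫ _ in Sᶜ, O ∂(trunc μ j)) = (trunc μ j).real Sᶜ * O := by
      rw [integral_const, measureReal_restrict_apply_univ, smul_eq_mul]
    rw [← this]
    refine integral_mono ((hAi Y).integrableOn.sub (hAi y).integrableOn) (integrable_const _)
      fun z => ?_
    have h1 := hloc (Y + z) (y + z) (by rwa [add_sub_add_right_eq_sub])
    have h2 := hloc (Y - z) (y - z) (by rwa [sub_sub_sub_cancel_right])
    simp only [hA]; linarith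
  have htot : (trunc μ j).real univ = μ.real S + (trunc μ j).real Sᶜ := by
    rw [← measureReal_add_measureReal_compl hSm]
    congr 1
    rw [← measureReal_restrict_apply_univ, hres, measureReal_restrict_apply_univ]
  rw [Aop_eq hu, Aop_eq hu, ← integral_add_compl hSm (hAi Y), ← integral_add_compl hSm (hAi y),
    hfar, hfar]
  have ha' := abs_le.1 ha; have hb' := abs_le.1 hb
  have hd := hloc Y y hYy
  set m := (trunc μ j).real univ
  have hfinal : h * (((∫ z in S, u (Y + z) ∂μ) + (∫ z in Sᶜ, A Y z ∂(trunc μ j)) - m * u Y + a) -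
      ((∫ z in S, u (y + z) ∂μ) + (∫ z in Sᶜ, A y z ∂(trunc μ j)) - m * u y + b)) ≤
      h * (m * (O - (u Y - u y))) := by
    refine mul_le_mul_of_nonneg_left ?_ hh
    rw [htot]
    nlinarith [ha'.2, hb'.1]
  nlinarith [mul_nonneg (sub_nonneg.2 hcfl) (sub_nonneg.2 hd)]

/-- A bound on the oscillation of the discrete solutions, uniform in time and in the level. -/
lemma scheme_osc (hμ : LevyM μ) (hf : FC f Cf K Kx) (hp : CellPer f p) {κ O : ℝ}
    (hκ : ∀ Y y : EN N, ‖Y - y‖ ≤ N → ∀ (F G : EN N → ℝ) (c : ℝ),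
      Continuous F → Continuous G → (∀ x, 0 ≤ F x) → (∀ x, 0 ≤ G x) → (∀ x, F x + G x = c) →
      κ * c ≤ (∫ z in {z : EN N | 1 < ‖z‖}, F (Y + z) ∂μ) +
        (∫ z in {z : EN N | 1 < ‖z‖}, G (y + z) ∂μ))
    (hO : μ.real {z : EN N | 1 < ‖z‖} + 2 * Cf ≤ κ * (O + 1)) (hO0 : 0 ≤ O) (j n : ℕ)
    (a b : EN N) :
    scheme (trunc μ j) (hst μ K j) f n a - scheme (trunc μ j) (hst μ K j) f n b ≤ O + 1 := by
  have hfin := trunc_finite hμ j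
  have hh := (hst_pos (μ := μ) (K := K) j).le
  have hcfl := hst_cfl (μ := μ) (K := K) j
  have hglob : ∀ n, (∀ Y y : EN N, ‖Y - y‖ ≤ N → scheme (trunc μ j) (hst μ K j) f n Y -
      scheme (trunc μ j) (hst μ K j) f n y ≤ O) → ∀ a b, scheme (trunc μ j) (hst μ K j) f n a -
      scheme (trunc μ j) (hst μ K j) f n b ≤ O + 1 := by
    intro n hloc a b
    obtain ⟨k, hk⟩ := intVec_near a b
    linarith [hloc _ _ hk, scheme_translate hf hp hh hcfl k n a]
  refine hglob n ?_ a b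
  induction n with
  | zero => intro Y y _; simpa [scheme] using hO0
  | succ n ih =>
    intro Y y hYy
    rw [scheme_succ, scheme_succ]
    refine osc_step hμ j hκ hO hh ?_ (scheme_BC hf hh n) (hglob n ih) ih (hf.bdd _ _ _)
      (hf.bdd _ _ _) hYy
    nlinarith [mul_nonneg hh hf.K_nonneg]

/-- Almost additivity in time of the discrete solutions. -/
lemma scheme_add (hμ : LevyM μ) (hf : FC f Cf K Kx) (hp : CellPer f p) {O : ℝ} (j l n : ℕ)
    (hosc : ∀ a b : EN N, scheme (trunc μ j) (hst μ K j) f (l * nst μ K j) a -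
      scheme (trunc μ j) (hst μ K j) f (l * nst μ K j) b ≤ O + 1) (x : EN N) :
    |scheme (trunc μ j) (hst μ K j) f (n + l * nst μ K j) x -
      scheme (trunc μ j) (hst μ K j) f n x -
      scheme (trunc μ j) (hst μ K j) f (l * nst μ K j) 0| ≤ O + 2 := by
  have hfin := trunc_finite hμ j
  have hh := (hst_pos (μ := μ) (K := K) j).le
  have hcfl := hst_cfl (μ := μ) (K := K) j
  have hnh : (nst μ K j : ℝ) * hst μ K j = 1 := by
    have := nst_pos (μ := μ) (K := K) j
    unfold hst; field_simp
  set u := scheme (trunc μ j) (hst μ K j) f with hu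
  have huB : ∀ n, BC (u n) := scheme_BC hf hh
  set v : ℕ → EN N → ℝ := fun n => u (n + l * nst μ K j) with hv
  have hv1 : ∀ n x, v (n + 1) x = v n x + hst μ K j * (Aop (trunc μ j) (v n) x +
      f (n * hst μ K j) x (v n x)) := by
    intro n x
    have h1 := scheme_succ (f := f) (trunc μ j) (hst μ K j) (n + l * nst μ K j) x
    have h2 : ((n + l * nst μ K j : ℕ) : ℝ) * hst μ K j = n * hst μ K j + l := by
      push_cast
      linear_combination (l : ℝ) * hnh
    rw [h2, hp.add_nat] at h1
    simp only [hv]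
    rw [show n + 1 + l * nst μ K j = n + l * nst μ K j + 1 by ring]
    exact h1
  have hshift : ∀ (A : ℤ) n x, u (n + 1) x + A = u n x + A + hst μ K j *
      (Aop (trunc μ j) (fun x => u n x + A) x + f (n * hst μ K j) x (u n x + A)) := by
    intro A n x
    rw [Aop_add_const, hp.add_int, hu, scheme_succ]; ring
  set b := u (l * nst μ K j) 0 with hb
  have hv0 : ∀ x, v 0 x = u (l * nst μ K j) x := fun x => by simp [hv]
  have hu0 : ∀ x, u 0 x = 0 := fun x => rfl
  have up := scheme_order hf hh hcfl (u := v) (v := fun n x => u n x + (⌈b + O + 1⌉ : ℤ))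
    (fun n => huB _) (fun n => (huB n).add_const _) hv1 (hshift _) (fun x => by
      rw [hv0, hu0]
      linarith [hosc x 0, Int.le_ceil (b + O + 1)]) n x
  have lo := scheme_order hf hh hcfl (v := v) (u := fun n x => u n x + (⌊b - O - 1⌋ : ℤ))
    (fun n => (huB n).add_const _) (fun n => huB _) (hshift _) hv1 (fun x => by
      rw [hv0, hu0]
      linarith [hosc 0 x, Int.floor_le (b - O - 1)]) n x
  have h1 := Int.ceil_lt_add_one (b + O + 1)
  have h2 := Int.lt_floor_add_one (b - O - 1)
  simp only [hv] at up lo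
  rw [abs_le]
  constructor <;> linarith

end

/-! ### The effective Hamiltonian -/

section
variable {N : ℕ} {μ : Measure (EN N)} {f : ℝ → EN N → ℝ → ℝ} {p : EN N} {Cf K Kx : ℝ}

/-- Almost additivity in time of the solution. The constant depends on the nonlinearity only
through its bound. -/
lemma sol_add (hμ : LevyM μ) (hCf : 0 ≤ Cf) : ∃ C : ℝ, ∀ (f : ℝ → EN N → ℝ → ℝ) (p : EN N)
    (K Kx : ℝ), FC f Cf K Kx → CellPer f p → ∀ (t : ℝ) (l : ℕ) (x : EN N), 0 ≤ t →
    |sol μ K f (t + l) x - sol μ K f t x - sol μ K f l 0| ≤ C := by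
  obtain ⟨κ, hκ0, hκ⟩ := hμ.minor N
  set O := (μ.real {z : EN N | 1 < ‖z‖} + 2 * Cf) / κ with hO
  have hO0 : 0 ≤ O := by positivity
  refine ⟨O + 2, fun f p K Kx hf hp t l x ht => ?_⟩
  have h1 : ∀ j, |om μ K f j (t + l) x - om μ K f j t x - om μ K f j l 0| ≤ O + 2 := by
    intro j
    have hn : 1 / hst μ K j = nst μ K j := by unfold hst; rw [one_div_one_div]
    have e1 : ⌊(t + l) / hst μ K j⌋₊ = ⌊t / hst μ K j⌋₊ + l * nst μ K j := by
      rw [← Nat.floor_add_natCast (div_nonneg ht (hst_pos j).le)]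
      congr 1
      push_cast
      rw [← hn]; ring
    have e2 : ⌊(l : ℝ) / hst μ K j⌋₊ = l * nst μ K j := by
      rw [← Nat.floor_natCast (R := ℝ) (l * nst μ K j)]
      congr 1
      push_cast
      rw [← hn]; ring
    unfold om
    rw [e1, e2]
    refine scheme_add hμ hf hp j l _ (scheme_osc hμ hf hp hκ ?_ hO0 j _) x
    have : κ * O = μ.real {z : EN N | 1 < ‖z‖} + 2 * Cf := by rw [hO]; field_simp
    linarith
  have hl : (0 : ℝ) ≤ l := by positivity
  exact le_of_tendsto (((sol_tendsto hμ hf (add_nonneg ht hl) x).sub (sol_tendsto hμ hf ht x)).sub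
    (sol_tendsto hμ hf hl 0)).abs (Eventually.of_forall h1)

/-- An almost additive sequence of linear growth is linear up to a bounded error. -/
lemma almost_additive {a : ℕ → ℝ} {C D : ℝ} (h : ∀ m n, |a (m + n) - a m - a n| ≤ C)
    (hD : ∀ n, |a n| ≤ n * D) :
    ∃ lam, ∀ n : ℕ, |a n - n * lam| ≤ C := by
  have hC : 0 ≤ C := (abs_nonneg _).trans (h 0 0)
  have s1 : Subadditive fun n => a n + C := fun m n => by
    have := (abs_le.1 (h m n)).2
    simp only; linarith
  have s2 : Subadditive fun n => -a n + C := fun m n => by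
    have := (abs_le.1 (h m n)).1
    simp only; linarith
  have hdiv : ∀ n : ℕ, |a n / n| ≤ D := fun n => by
    rcases Nat.eq_zero_or_pos n with h0 | h0
    · have h1 := (abs_nonneg _).trans (hD 1)
      simp only [Nat.cast_one, one_mul] at h1
      simpa [h0] using h1
    · have : (0 : ℝ) < n := by exact_mod_cast h0
      rw [abs_div, abs_of_pos this, div_le_iff₀ this, mul_comm]; exact hD n
  have b1 : BddBelow (range fun n : ℕ => (a n + C) / n) := by
    refine ⟨-D, ?_⟩
    rintro _ ⟨n, rfl⟩
    simp only [add_div]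
    have : 0 ≤ C / (n : ℝ) := by positivity
    linarith [(abs_le.1 (hdiv n)).1]
  have b2 : BddBelow (range fun n : ℕ => (-a n + C) / n) := by
    refine ⟨-D, ?_⟩
    rintro _ ⟨n, rfl⟩
    simp only [add_div, neg_div]
    have : 0 ≤ C / (n : ℝ) := by positivity
    linarith [(abs_le.1 (hdiv n)).2]
  have hsum : s1.lim + s2.lim = 0 := by
    have t1 := (s1.tendsto_lim b1).add (s2.tendsto_lim b2)
    have t2 : Tendsto (fun n : ℕ => (2 * C) / (n : ℝ)) atTop (nhds 0) :=
      tendsto_const_div_atTop_nhds_zero_nat _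
    refine tendsto_nhds_unique t1 (t2.congr fun n => ?_)
    ring
  refine ⟨s1.lim, fun n => ?_⟩
  rcases Nat.eq_zero_or_pos n with h0 | h0
  · have h1 : a 0 = 0 := by simpa using hD 0
    simpa [h0, h1] using hC
  · have hn : (0 : ℝ) < n := by exact_mod_cast h0
    have c1 := s1.lim_le_div b1 h0.ne'
    have c2 := s2.lim_le_div b2 h0.ne'
    rw [le_div_iff₀ hn] at c1 c2
    have : s2.lim = -s1.lim := by linarith
    rw [this] at c2
    rw [abs_le]
    constructor <;> linarith

/-- The asymptotic slope of the solution along integer times at the origin. -/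
noncomputable def slope0 (μ : Measure (EN N)) (K : ℝ) (f : ℝ → EN N → ℝ → ℝ) : ℝ :=
  limUnder atTop fun l : ℕ => sol μ K f l 0 / l

lemma slope0_tendsto {C lam : ℝ} (h : ∀ n : ℕ, |sol μ K f n 0 - n * lam| ≤ C) :
    Tendsto (fun l : ℕ => sol μ K f l 0 / l) atTop (nhds lam) := by
  rw [tendsto_iff_norm_sub_tendsto_zero]
  refine squeeze_zero' (Eventually.of_forall fun _ => norm_nonneg _) ?_
    (tendsto_const_div_atTop_nhds_zero_nat C)
  filter_upwards [eventually_gt_atTop 0] with n hn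
  have hn' : (0 : ℝ) < n := by exact_mod_cast hn
  rw [Real.norm_eq_abs, show sol μ K f n 0 / n - lam = (sol μ K f n 0 - n * lam) / n by field_simp,
    abs_div, abs_of_pos hn']
  exact div_le_div_of_nonneg_right (h n) hn'.le

lemma slope0_spec (hμ : LevyM μ) (hf : FC f Cf K Kx) {C : ℝ}
    (hadd : ∀ (t : ℝ) (l : ℕ) (x : EN N), 0 ≤ t →
      |sol μ K f (t + l) x - sol μ K f t x - sol μ K f l 0| ≤ C) (n : ℕ) :
    |sol μ K f n 0 - n * slope0 μ K f| ≤ C := by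
  obtain ⟨lam, hlam⟩ := almost_additive (a := fun n : ℕ => sol μ K f n 0) (C := C) (D := Cf)
    (fun m n => by
      have := hadd m n 0 (by positivity)
      simpa using this)
    (fun n => sol_bound hμ hf (by positivity) 0)
  have : slope0 μ K f = lam := (slope0_tendsto hlam).limUnder_eq
  rw [this]; exact hlam n

lemma sol_slope (hμ : LevyM μ) (hf : FC f Cf K Kx) (hp : CellPer f p) :
    SlopeLim N (sol μ K f) (slope0 μ K f) := by
  obtain ⟨C, hC⟩ := sol_add hμ hf.Cf_nonneg
  have hadd := hC f p K Kx hf hp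
  have hspec := slope0_spec hμ hf hadd
  set lam := slope0 μ K f
  set D := 2 * C + Cf + |lam| with hD
  have hb : ∀ t, 0 ≤ t → ∀ x, |sol μ K f t x - t * lam| ≤ D := by
    intro t ht x
    have h1 := abs_le.1 (hadd (Int.fract t) ⌊t⌋₊ x (Int.fract_nonneg t))
    have hfl : ((⌊t⌋₊ : ℕ) : ℝ) = ⌊t⌋ := natCast_floor_eq_intCast_floor ht
    have hsum : Int.fract t + (⌊t⌋₊ : ℝ) = t := by rw [hfl]; exact Int.fract_add_floor t
    rw [hsum] at h1
    have h2 := abs_le.1 (hspec ⌊t⌋₊)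
    have h3 := abs_le.1 (sol_bound hμ hf (Int.fract_nonneg t) x)
    have h4 : Int.fract t * Cf ≤ Cf :=
      mul_le_of_le_one_left hf.Cf_nonneg (Int.fract_lt_one t).le
    have h5 : |t * lam - ⌊t⌋₊ * lam| ≤ |lam| := by
      rw [← sub_mul, abs_mul, show t - (⌊t⌋₊ : ℝ) = Int.fract t by linarith,
        abs_of_nonneg (Int.fract_nonneg t)]
      exact mul_le_of_le_one_left (abs_nonneg _) (Int.fract_lt_one t).le
    have h6 := abs_le.1 h5
    rw [abs_le]
    constructor <;> linarith [h1.1, h1.2, h2.1, h2.2, h3.1, h3.2, h6.1, h6.2]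
  intro ε hε R _
  refine ⟨max 1 (D / ε), fun τ hτ y _ => ?_⟩
  have hτ1 : (0 : ℝ) < τ := by linarith [le_max_left 1 (D / ε)]
  have hτ2 : D / ε ≤ τ := (le_max_right _ _).trans hτ
  rw [div_le_iff₀ hε] at hτ2
  rw [show sol μ K f τ y / τ - lam = (sol μ K f τ y - τ * lam) / τ by field_simp, abs_div,
    abs_of_pos hτ1, div_le_iff₀ hτ1]
  linarith [hb τ hτ1.le y]

lemma slope_unique {w : ℝ → EN N → ℝ} {a b : ℝ} (ha : SlopeLim N w a) (hb : SlopeLim N w b) :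
    a = b := by
  have : ∀ ε > 0, |a - b| ≤ 0 + ε := fun ε hε => by
    obtain ⟨T, hT⟩ := ha (ε / 2) (by positivity) 1 one_pos
    obtain ⟨T', hT'⟩ := hb (ε / 2) (by positivity) 1 one_pos
    have h1 := abs_le.1 (hT (max T T') (le_max_left _ _) 0 (by simp))
    have h2 := abs_le.1 (hT' (max T T') (le_max_right _ _) 0 (by simp))
    rw [abs_le]; constructor <;> linarith [h1.1, h1.2, h2.1, h2.2]
  have h := le_of_forall_pos_le_add this
  exact sub_eq_zero.1 (abs_eq_zero.1 (le_antisymm h (abs_nonneg _)))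

lemma sol_mono (hμ : LevyM μ) {f' : ℝ → EN N → ℝ → ℝ} (hf : FC f Cf K Kx) {Cf' Kx' : ℝ}
    (hf' : FC f' Cf' K Kx') (hle : ∀ t x v, f t x v ≤ f' t x v) {t : ℝ} (ht : 0 ≤ t) (x : EN N) :
    sol μ K f t x ≤ sol μ K f' t x := by
  refine le_of_tendsto_of_tendsto (sol_tendsto hμ hf ht x) (sol_tendsto hμ hf' ht x)
    (Eventually.of_forall fun j => ?_)
  have hfin := trunc_finite hμ j
  have hh := (hst_pos (μ := μ) (K := K) j).le
  have hcfl := hst_cfl (μ := μ) (K := K) j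
  set u := scheme (trunc μ j) (hst μ K j) f
  set v := scheme (trunc μ j) (hst μ K j) f'
  have := gronwall hh hf.K_nonneg hcfl le_rfl le_rfl ⌊t / hst μ K j⌋₊ u v
    (fun n x => f (n * hst μ K j) x (u n x)) (fun n x => f' (n * hst μ K j) x (v n x))
    (scheme_BC hf hh) (scheme_BC hf' hh) (fun n _ x => le_rfl) (fun n _ x => le_rfl)
    (fun n _ x => by
      have h1 := (abs_le.1 (hf'.lipv (n * hst μ K j) x (u n x) (v n x))).2
      linarith [hle (n * hst μ K j) x (u n x)])
    (fun x => by simp [u, v, scheme]) _ le_rfl x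
  simpa [om] using this

end

section
variable {N : ℕ} {W : ℝ → ℝ} {σ : ℝ → EN N → ℝ}

/-- Bounds and Lipschitz estimates for the nonlinearity of the cell problem. -/
lemma cellf_FC (hW : H2 W) (hσ : H3 N σ) : ∃ C₀ K Kσ : ℝ, 0 ≤ C₀ ∧ 0 ≤ K ∧ 0 ≤ Kσ ∧
    ∀ (p : EN N) (L : ℝ), FC (cellf W σ p L) (C₀ + |L|) K (K * ‖p‖ + Kσ) := by
  obtain ⟨hW1, ⟨K, hK⟩, hWp⟩ := hW
  obtain ⟨⟨Kσ, hKσ⟩, hσt, hσx⟩ := hσ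
  have hper : Function.Periodic (deriv W) 1 := fun v => by
    have : (fun v => W (v + 1)) = W := funext hWp
    rw [← deriv_comp_add_const, this]
  have hKlip : ∀ a b, |deriv W a - deriv W b| ≤ K * |a - b| := fun a b => by
    simpa [Real.dist_eq] using hK.dist_le_mul a b
  have hσlip : ∀ t t' x x', |σ t x - σ t' x'| ≤ Kσ * (|t - t'| + ‖x - x'‖) := fun t t' x x' => by
    have h := hKσ.dist_le_mul (t, x) (t', x')
    rw [Real.dist_eq, Prod.dist_eq, Real.dist_eq, dist_eq_norm] at h
    refine h.trans (mul_le_mul_of_nonneg_left ?_ Kσ.2)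
    exact max_le (by linarith [norm_nonneg (x - x')]) (by linarith [abs_nonneg (t - t')])
  have hWb : ∀ v, |deriv W v| ≤ |deriv W 0| + K := fun v => by
    have h1 : deriv W v = deriv W (Int.fract v) := by
      have := hper.sub_int_mul_eq (x := v) ⌊v⌋
      rw [mul_one] at this
      exact this.symm
    have h2 := hKlip (Int.fract v) 0
    rw [sub_zero, abs_of_nonneg (Int.fract_nonneg v)] at h2
    have h3 : (K : ℝ) * Int.fract v ≤ K := mul_le_of_le_one_right K.2 (Int.fract_lt_one v).le
    rw [h1]
    have := abs_sub_abs_le_abs_sub (deriv W (Int.fract v)) (deriv W 0)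
    linarith
  have hσb : ∀ t x, |σ t x| ≤ |σ 0 0| + Kσ * (1 + N) := fun t x => by
    obtain ⟨k, hk⟩ := intVec_near x 0
    have hperσ : Function.Periodic (fun t => σ t (x + intVec k)) 1 := fun t => hσt t _
    have h0 : σ t x = σ (Int.fract t) (x + intVec k) := by
      have := hperσ.sub_int_mul_eq (x := t) ⌊t⌋
      rw [mul_one] at this
      exact (hσx k t x).symm.trans this.symm
    have h1 := hσlip (Int.fract t) 0 (x + intVec k) 0
    have h2 : (Kσ : ℝ) * (|Int.fract t - 0| + ‖x + intVec k - 0‖) ≤ Kσ * (1 + N) := by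
      refine mul_le_mul_of_nonneg_left (add_le_add ?_ hk) Kσ.2
      rw [sub_zero, abs_of_nonneg (Int.fract_nonneg t)]
      exact (Int.fract_lt_one t).le
    rw [h0]
    have := abs_sub_abs_le_abs_sub (σ (Int.fract t) (x + intVec k)) (σ 0 0)
    linarith
  refine ⟨|deriv W 0| + K + (|σ 0 0| + Kσ * (1 + N)), K, Kσ, by positivity, K.2, Kσ.2,
    fun p L => ⟨fun t x v => ?_, fun t x v v' => ?_, fun t t' x x' v => ?_⟩⟩
  · have h1 := abs_le.1 (hWb (v + ⟪p, x⟫)); have h2 := abs_le.1 (hσb t x)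
    have h3 := abs_le.1 (le_refl |L|)
    unfold cellf
    rw [abs_le]
    constructor <;> linarith [h1.1, h1.2, h2.1, h2.2, h3.1, h3.2]
  · have h1 := hKlip (v' + ⟪p, x⟫) (v + ⟪p, x⟫)
    rw [add_sub_add_right_eq_sub, abs_sub_comm v'] at h1
    unfold cellf
    refine le_trans (le_of_eq ?_) h1
    congr 1; ring
  · have h1 := hKlip (v + ⟪p, x'⟫) (v + ⟪p, x⟫)
    rw [add_sub_add_left_eq_sub, ← inner_sub_right] at h1
    have h2 := abs_real_inner_le_norm p (x' - x)
    rw [norm_sub_rev] at h2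
    have h3 := hσlip t t' x x'
    have h4 : (K : ℝ) * |⟪p, x' - x⟫| ≤ K * ‖p‖ * (|t - t'| + ‖x - x'‖) := by
      rw [mul_assoc]
      refine mul_le_mul_of_nonneg_left (h2.trans ?_) K.2
      exact mul_le_mul_of_nonneg_left (by linarith [abs_nonneg (t - t')]) (norm_nonneg _)
    unfold cellf
    rw [show L - deriv W (v + ⟪p, x⟫) + σ t x - (L - deriv W (v + ⟪p, x'⟫) + σ t' x') =
      (deriv W (v + ⟪p, x'⟫) - deriv W (v + ⟪p, x⟫)) + (σ t x - σ t' x') by ring]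
    refine (abs_add_le _ _).trans ?_
    rw [add_mul]
    linarith

lemma cellf_per (hW : H2 W) (hσ : H3 N σ) (p : EN N) (L : ℝ) : CellPer (cellf W σ p L) p := by
  have hper : ∀ v, deriv W (v + 1) = deriv W v := fun v => by
    have : (fun v => W (v + 1)) = W := funext hW.2.2
    rw [← deriv_comp_add_const, this]
  refine ⟨fun t x v => ?_, fun t x v => ?_, fun k t x v => ?_⟩
  · unfold cellf; rw [add_right_comm, hper]
  · unfold cellf; rw [hσ.2.1]
  · unfold cellf
    rw [show σ t (x + intVec k) = σ t x from hσ.2.2 k t x, inner_add_right,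
      show v + (⟪p, x⟫ + ⟪p, intVec k⟫) = v + ⟪p, intVec k⟫ + ⟪p, x⟫ by ring]

lemma FC.mono {f : ℝ → EN N → ℝ → ℝ} {Cf Cf' K Kx Kx' : ℝ} (hf : FC f Cf K Kx) (h1 : Cf ≤ Cf')
    (h2 : Kx ≤ Kx') : FC f Cf' K Kx' :=
  ⟨fun t x v => (hf.bdd t x v).trans h1, hf.lipv, fun t t' x x' v =>
    (hf.lipx t t' x x' v).trans (mul_le_mul_of_nonneg_right h2 (by positivity))⟩

/-- The slope depends continuously on `(p,L)`: locally uniformly, it is approximated by the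
discrete solution at a large integer time, divided by that time. -/
lemma slope0_cont {μ : Measure (EN N)} (hμ : LevyM μ) (hW : H2 W) (hσ : H3 N σ)
    {C₀ K Kσ : ℝ} (hC₀ : 0 ≤ C₀) (hK : 0 ≤ K) (hKσ : 0 ≤ Kσ)
    (hFC : ∀ (p : EN N) (L : ℝ), FC (cellf W σ p L) (C₀ + |L|) K (K * ‖p‖ + Kσ)) :
    Continuous fun q : EN N × ℝ => slope0 μ K (cellf W σ q.1 q.2) := by
  refine continuous_of_locally_uniform_approx_of_continuousAt fun q₀ U hU => ?_
  obtain ⟨ε, hε, hεU⟩ := Metric.mem_uniformity_dist.1 hU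
  set Cf := C₀ + (|q₀.2| + 1) with hCf
  set Kx := K * (‖q₀.1‖ + 1) + Kσ with hKx
  have hCf0 : 0 ≤ Cf := by positivity
  have hKx0 : 0 ≤ Kx := by positivity
  obtain ⟨C, hC⟩ := sol_add (N := N) hμ hCf0
  obtain ⟨l, hl⟩ := exists_nat_gt ((C + 1) / ε)
  have hF1 : ∀ q ∈ ball q₀ 1, FC (cellf W σ q.1 q.2) Cf K Kx := by
    intro q hq
    rw [mem_ball, Prod.dist_eq, max_lt_iff, dist_eq_norm, Real.dist_eq] at hq
    refine (hFC q.1 q.2).mono ?_ ?_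
    · have := abs_sub_abs_le_abs_sub q.2 q₀.2
      linarith [hq.2]
    · have := norm_sub_norm_le q.1 q₀.1
      have h2 : ‖q.1‖ ≤ ‖q₀.1‖ + 1 := by linarith [hq.1]
      have := mul_le_mul_of_nonneg_left h2 hK
      linarith
  have hC0 : 0 ≤ C := (abs_nonneg _).trans
    (hC _ q₀.1 K Kx (hF1 q₀ (mem_ball_self one_pos)) (cellf_per hW hσ _ _) 0 0 0 le_rfl)
  have hl0 : (0 : ℝ) < l := lt_of_le_of_lt (by positivity) hl
  obtain ⟨B, J, -, hJ⟩ := sol_near (N := N) hμ hCf0 hK hKx0 hl0.le one_pos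
  refine ⟨ball q₀ 1, ball_mem_nhds _ one_pos,
    fun q => om μ K (cellf W σ q.1 q.2) J l 0 / l, ?_, fun q hq => hεU ?_⟩
  · have hfin := trunc_finite hμ J
    have hWc : Continuous (deriv W) := hW.1.continuous_deriv (by norm_num)
    have hσc : Continuous fun q : ℝ × EN N => σ q.1 q.2 := hσ.1.choose_spec.continuous
    have h := (scheme_param (μ := trunc μ J) (P := EN N × ℝ) (hst μ K J) (hst_pos J).le
      (fun q => cellf W σ q.1 q.2) (fun q => C₀ + |q.2|) (by fun_prop)
      (fun q => (hFC q.1 q.2).bdd) (fun t => by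
        unfold cellf
        have : Continuous fun q : (EN N × ℝ) × EN N × ℝ => σ t q.2.1 :=
          hσc.comp (by fun_prop : Continuous fun q : (EN N × ℝ) × EN N × ℝ => (t, q.2.1))
        have h2 : Continuous fun q : (EN N × ℝ) × EN N × ℝ => q.2.2 + ⟪q.1.1, q.2.1⟫ := by fun_prop
        exact ((by fun_prop : Continuous fun q : (EN N × ℝ) × EN N × ℝ => q.1.2).sub
          (hWc.comp h2)).add this) ⌊(l : ℝ) / hst μ K J⌋₊).1
    have h2 : Continuous fun q : EN N × ℝ => om μ K (cellf W σ q.1 q.2) J l 0 :=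
      h.comp (by fun_prop : Continuous fun q : EN N × ℝ => (q, (0 : EN N)))
    exact (h2.div_const _).continuousAt
  · have hf := hF1 q hq
    have h1 := slope0_spec hμ hf (hC _ q.1 K Kx hf (cellf_per hW hσ q.1 q.2)) l
    have h2 := (hJ _ hf).2 J le_rfl l 0 hl0.le le_rfl
    rw [div_lt_iff₀ hε] at hl
    rw [Real.dist_eq, abs_sub_comm, show ∀ a b : ℝ, a / l - b = (a - l * b) / l from
      fun a b => by field_simp, abs_div, abs_of_pos hl0, div_lt_iff₀ hl0]
    rw [abs_le] at h1 h2
    refine lt_of_le_of_lt (b := C + 1) (abs_le.2 ?_) (by linarith)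
    constructor <;> linarith [h1.1, h1.2, h2.1, h2.2]

lemma slope0_mono {μ : Measure (EN N)} (hμ : LevyM μ) (hW : H2 W) (hσ : H3 N σ) {C₀ K Kσ : ℝ}
    (hFC : ∀ (p : EN N) (L : ℝ), FC (cellf W σ p L) (C₀ + |L|) K (K * ‖p‖ + Kσ)) (p : EN N) :
    Monotone fun L => slope0 μ K (cellf W σ p L) := by
  intro L L' hLL
  have ht : ∀ L, Tendsto (fun l : ℕ => sol μ K (cellf W σ p L) l 0 / l) atTop
      (nhds (slope0 μ K (cellf W σ p L))) := fun L => by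
    obtain ⟨C, hC⟩ := sol_add hμ (hFC p L).Cf_nonneg
    exact slope0_tendsto (slope0_spec hμ (hFC p L) (hC _ p K _ (hFC p L) (cellf_per hW hσ p L)))
  refine le_of_tendsto_of_tendsto (ht L) (ht L') (Eventually.of_forall fun l => ?_)
  refine div_le_div_of_nonneg_right ?_ (by positivity)
  exact sol_mono hμ (hFC p L) (hFC p L') (fun t x v => by unfold cellf; linarith) (by positivity) 0

end

/-- **Ergodicity (Theorem 1.1).** Under (H1)–(H4), for every `L ∈ ℝ` and `p ∈ ℝ^N` there is a
unique viscosity solution `w ∈ C_b(ℝ⁺×ℝ^N)` of the cell problem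
`∂_τ w = I_s[w(τ,·)] + L − W'(w + p·y) + σ(τ,y)`, `w(0,·) = 0`, and a unique `λ = H̄(p,L)` such
that `w(τ,y)/τ → λ` locally uniformly in `y`; the function `H̄` is continuous and nondecreasing
in `L`. -/
theorem ergodicity
    (N : ℕ) (hN : 1 ≤ N) (s : ℝ) (hs : s ∈ Set.Ioo (0:ℝ) 1)
    (g : EN N → ℝ) (hg : H1 N g)
    (W : ℝ → ℝ) (hW : H2 W)
    (σ : ℝ → EN N → ℝ) (hσ : H3 N σ)
    (u₀ : EN N → ℝ) (hu₀ : H4 N u₀) :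
    ∃ Hbar : EN N → ℝ → ℝ,
      Continuous (fun q : EN N × ℝ => Hbar q.1 q.2) ∧
      (∀ p : EN N, Monotone (Hbar p)) ∧
      ∀ (p : EN N) (L : ℝ),
        (∃ w : ℝ → EN N → ℝ,
          IsSol N s g (cellF N W σ p L) (fun _ => 0) w ∧
          (∀ w' : ℝ → EN N → ℝ, IsSol N s g (cellF N W σ p L) (fun _ => 0) w' →
            ∀ t, 0 ≤ t → ∀ y, w' t y = w t y) ∧
          SlopeLim N w (Hbar p L)) ∧
        (∀ (w : ℝ → EN N → ℝ) (lam : ℝ),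
          IsSol N s g (cellF N W σ p L) (fun _ => 0) w →
          SlopeLim N w lam → lam = Hbar p L) := by
  have hμ := levyMeas_LevyM hN hs hg
  obtain ⟨C₀, K, Kσ, hC₀, hK, hKσ, hFC⟩ := cellf_FC hW hσ
  have hLim := fun (p : EN N) (L : ℝ) => sol_Lim hμ (hFC p L)
  have hslope := fun (p : EN N) (L : ℝ) => sol_slope hμ (hFC p L) (cellf_per hW hσ p L)
  have huniq : ∀ (p : EN N) (L : ℝ) (w' : ℝ → EN N → ℝ),
      IsSol N s g (cellF N W σ p L) (fun _ => 0) w' → ∀ t, 0 ≤ t → ∀ y,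
        w' t y = sol (levyMeas N s g) K (cellf W σ p L) t y :=
    fun p L w' hw' t ht y => IsSol_eq_Lim hN hs hg hK (hFC p L).lipv (hLim p L) hw' ht y
  refine ⟨fun p L => slope0 (levyMeas N s g) K (cellf W σ p L),
    slope0_cont hμ hW hσ hC₀ hK hKσ hFC, slope0_mono hμ hW hσ hFC, fun p L => ⟨?_, ?_⟩⟩
  · exact ⟨_, Lim_IsSol hN hs hg (hFC p L).cont (hLim p L), huniq p L, hslope p L⟩
  · intro w lam hw hlam
    refine slope_unique ?_ (hslope p L)
    intro ε hε R hR
    obtain ⟨T, hT⟩ := hlam ε hε R hR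
    refine ⟨max T 0, fun τ hτ y hy => ?_⟩
    rw [← huniq p L w hw τ ((le_max_right _ _).trans hτ)]
    exact hT τ ((le_max_left _ _).trans hτ) y hy
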